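/- Let F → E → B be a rational fibration in which F is elliptic with positive Euler characteristic and B is rationally a wedge of odd-dimensional spheres. If the fibration is TNCZ, then E ≃_ℚ B × F, i.e., the fibration is rationally trivial: the fibration admits a model of the form H*(B;ℚ),0 → H*(B;ℚ)⊗ΛV, 1⊗d → ΛV,d where ΛV,d is the minimal model of F. -/

import Mathlib

/-!
Write `H` for the cohomology of the base and `ΛV` for the minimal model of the fibre.

**The fibre.** The odd cohomology of `ΛV` vanishes, and more precisely
(`Sullivan.exact_odd`) a cocycle of odd degree `n + 1` bounds an element which does not involve
generators of degree `n`. Order the generators `v_0, v_1, …` by degree.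
* Adjoining to `ΛV` variables whose differentials are `v_0, …, v_{i-1}` gives an algebra whose
  cohomology is still nilpotent (`Sys.Killer`, `Killer.even_step`, `Killer.odd_step`); it maps onto
  the quotient `ΛV / (v_0, …, v_{i-1})`. Hence a power of an even `v_i` is exact in this
  quotient (`Sys.exists_power`).
* The differential does not lower the weight "degree plus number of odd generators" of monomials.
  Its weight-preserving part `Sys.ds` lowers the number of odd generators by one. By
  descending induction over the quotients above, `Sys.acyclic` shows that the associated graded
  complex has no cohomology in large weights, nor on monomials with `k` odd generators when `k`
  exceeds the number of odd generators of `ΛV` minus the number of even ones. The second bound is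
  that of the Koszul complex of a sequence with finite-dimensional quotient.
* By acyclicity in large weights, the Euler characteristic of the associated graded complex is
  that of `H*(ΛV)` (`Sys.euler`). Its generating function by weight is a product of
  factors `1 - X ^ a`, in the numerator for odd generators and in the denominator for even ones
  (`Sys.ps_order`), and it is a polynomial whose value at `1` is the Euler characteristic. As this
  is not zero, there are at most as many odd generators as even ones (`Sys.tO_le`).
  `Sys.acyclic` now applies to all `k ≥ 1`, so to all cocycles of odd degree (`Sys.exact_odd`).

**The base.** A wedge of odd spheres is formal, so there is a quasi-isomorphism from the model of
the base onto `H`. The pushout of the total algebra along it is an algebra `H ⊗ ΛV`, and the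
kernel of the projection onto the pushout is acyclic (`FibrationModel.ker_triv_acyclic`), so that
`H ⊗ ΛV` is a model of the fibration (`FibrationModel.exists_twisted`). Its differential may still be
twisted. Positive-degree elements of `H` are odd and their products are zero (`wedgeAlg_of_formal`).

**The section.** The projection `H ⊗ ΛV → ΛV` has a multiplicative section `φ` which is a chain map
(`Twisted.exists_chain`). It is built by induction on the degree of the generators
(`Twisted.exists_step`). For an odd generator `x` the obstruction `D φ(x) - φ(d x)` is an even
cocycle of `H⁺ ⊗ ΛV`; since `H⁺` is odd and `H⁺ · H⁺ = 0`, it is exact there as soon as odd cocycles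
of `ΛV` are exact (`Twisted.exact_Ip`). An even generator differs by an element `u` of the
subalgebra generated in lower degrees from a cocycle of `ΛV`; this cocycle lifts to a cocycle because
the fibration is TNCZ, and `u` lifts to `φ(u)`. Replacing the generators `V` by `φ(V)`
untwists the differential (`Twisted.toModel`).
-/

/-!
A self-contained framework for rational homotopy theory at the level of Sullivan models,
following the conventions of G. Lupton, "Variations on a conjecture of Halperin".

All spaces are simply connected CW complexes of finite type over ℚ; following the paper,
a space is represented by its Sullivan minimal model (a minimal Sullivan algebra), and a
rational fibration `F → E → B` is represented by (the minimal model of the fibration,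
i.e.) a KS-extension  `M_B → M_B ⊗ ΛV → ΛV`  whose quotient `ΛV, d` is a minimal model
of the fibre `F`; the total space `E` is represented by the middle (KS) algebra, which is
quasi-isomorphic to the minimal model of `E`.
-/

namespace RHT

/-- A non-negatively graded, graded-commutative differential graded algebra over `ℚ`
(a cochain algebra) : the basic algebraic object of rational homotopy theory. -/
structure CDGA : Type 1 where
  A : Type
  [ringA : Ring A]
  [algA : Algebra ℚ A]
  grading : ℕ → Submodule ℚ A
  [gradedA : GradedAlgebra grading]
  gcomm : ∀ {i j : ℕ} {x y : A}, x ∈ grading i → y ∈ grading j →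
    x * y = ((-1 : ℚ) ^ (i * j)) • (y * x)
  d : A →ₗ[ℚ] A
  d_mem : ∀ {i : ℕ} {x : A}, x ∈ grading i → d x ∈ grading (i + 1)
  d_sq : ∀ x : A, d (d x) = 0
  leibniz : ∀ {i : ℕ} (x y : A), x ∈ grading i →
    d (x * y) = d x * y + ((-1 : ℚ) ^ i) • (x * d y)

attribute [instance] CDGA.ringA CDGA.algA CDGA.gradedA

namespace CDGA

/-- `x` is a coboundary. -/
def IsExact (C : CDGA) (x : C.A) : Prop := ∃ y : C.A, C.d y = x

def cocycles (C : CDGA) (i : ℕ) : Submodule ℚ C.A := C.grading i ⊓ LinearMap.ker C.d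

def coboundaries (C : CDGA) (i : ℕ) : Submodule ℚ C.A := C.grading i ⊓ LinearMap.range C.d

/-- The degree `i` cohomology of a cochain algebra. -/
abbrev cohomology (C : CDGA) (i : ℕ) : Type :=
  ↥(C.cocycles i) ⧸ (Submodule.comap (C.cocycles i).subtype (C.coboundaries i))

/-- The differential vanishes identically. -/
def ZeroDiff (C : CDGA) : Prop := ∀ x : C.A, C.d x = 0

/-- The rational cup-length of (the cohomology of) a cochain algebra: the greatest `n`
such that some `n`-fold product of cocycles of positive degree is not a coboundary. -/
noncomputable def cup0 (C : CDGA) : ℕ :=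
  sSup {n | ∃ l : List C.A, l.length = n ∧
    (∀ x ∈ l, (∃ i, 0 < i ∧ x ∈ C.grading i) ∧ C.d x = 0) ∧ ¬ C.IsExact l.prod}

/-- All `(n+1)`-fold products of elements of the augmentation ideal vanish. -/
def NilpotentOfLength (C : CDGA) (n : ℕ) : Prop :=
  ∀ l : List C.A, l.length = n + 1 → (∀ x ∈ l, ∃ i, 0 < i ∧ x ∈ C.grading i) →
    l.prod = 0

end CDGA

/-- A morphism of cochain algebras: a `ℚ`-algebra map preserving degrees and
commuting with the differentials. -/
structure Hom (C D : CDGA) where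
  toAlgHom : C.A →ₐ[ℚ] D.A
  map_grading : ∀ {i : ℕ} {x : C.A}, x ∈ C.grading i → toAlgHom x ∈ D.grading i
  comm_d : ∀ x : C.A, toAlgHom (C.d x) = D.d (toAlgHom x)

/-- A morphism of cochain algebras is a quasi-isomorphism if it induces an isomorphism
on cohomology (stated elementwise: surjectivity and injectivity on cohomology classes). -/
def QuasiIso {C D : CDGA} (f : Hom C D) : Prop :=
  (∀ y : D.A, D.d y = 0 → ∃ x : C.A, C.d x = 0 ∧ D.IsExact (f.toAlgHom x - y)) ∧
  (∀ x : C.A, C.d x = 0 → D.IsExact (f.toAlgHom x) → C.IsExact x)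

/-- A (cofibrant) cochain algebra is formal if it admits a quasi-isomorphism to a cochain
algebra with zero differential (its cohomology algebra).  A space is formal iff its
minimal model (or any Sullivan model of it) is formal in this sense. -/
def Formal (C : CDGA) : Prop :=
  ∃ (H : CDGA) (f : Hom C H), H.ZeroDiff ∧ QuasiIso f

/-- A Sullivan algebra: a cochain algebra which is free graded-commutative on a
(simply connected, finite type) graded vector space `V` of generators.  Freeness is
encoded by the universal property of the free graded-commutative algebra. -/
structure Sullivan extends CDGA where
  V : ℕ → Submodule ℚ A
  V_le : ∀ i, V i ≤ grading i
  V_zero : V 0 = ⊥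
  V_one : V 1 = ⊥
  V_fin : ∀ i, FiniteDimensional ℚ (V i)
  generates : Algebra.adjoin ℚ (⋃ i, (V i : Set A)) = ⊤
  free : ∀ (C : Type) [instC : Ring C] [instC2 : Algebra ℚ C] (𝒞 : ℕ → Submodule ℚ C),
    (1 : C) ∈ 𝒞 0 →
    (∀ i j (x y : C), x ∈ 𝒞 i → y ∈ 𝒞 j → x * y ∈ 𝒞 (i + j)) →
    (∀ i j (x y : C), x ∈ 𝒞 i → y ∈ 𝒞 j → x * y = ((-1 : ℚ) ^ (i * j)) • (y * x)) →
    ∀ f : (i : ℕ) → V i →ₗ[ℚ] C, (∀ i (v : V i), f i v ∈ 𝒞 i) →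
    ∃! φ : A →ₐ[ℚ] C, ∀ i (v : V i), φ (v : A) = f i v

namespace Sullivan

variable (S : Sullivan)

/-- The span of the generators. -/
def genSpan : Submodule ℚ S.A := ⨆ i, S.V i

/-- `Λ^{≥ n} V` : the ideal spanned by products of at least `n` generators. -/
def lengthGE (n : ℕ) : Submodule ℚ S.A := S.genSpan ^ n * (⊤ : Submodule ℚ S.A)

/-- Minimality: the differential is decomposable. -/
def Minimal : Prop := ∀ x ∈ S.genSpan, S.d x ∈ S.lengthGE 2

/-- The (space modelled by the) Sullivan algebra is elliptic: finitely many generators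
(finite-dimensional rational homotopy) and finite-dimensional cohomology. -/
def Elliptic : Prop :=
  (∃ N, ∀ i, N ≤ i → S.V i = ⊥) ∧
  (∀ i, FiniteDimensional ℚ (S.toCDGA.cohomology i)) ∧
  (∃ N, ∀ i, N ≤ i → Subsingleton (S.toCDGA.cohomology i))

/-- Positive Euler characteristic : `Σ (-1)^i dim H^i > 0`. -/
def PosEuler : Prop :=
  ∃ N : ℕ, (∀ i, N ≤ i → Subsingleton (S.toCDGA.cohomology i)) ∧
    0 < ∑ i ∈ Finset.range N,
      ((-1 : ℤ) ^ i * (Module.finrank ℚ (S.toCDGA.cohomology i) : ℤ))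

/-- `S` is the minimal model of the odd sphere `S^m` : one generator, in odd degree `m`,
and zero differential. -/
def OddSphere (m : ℕ) : Prop :=
  Odd m ∧ Module.finrank ℚ (S.V m) = 1 ∧ (∀ j, j ≠ m → S.V j = ⊥) ∧ S.toCDGA.ZeroDiff

/-- `S` models a space which rationally is a wedge of odd-dimensional spheres:
it is formal, has no cohomology in positive even degrees, and all products of
positive-degree cohomology classes vanish. -/
def WedgeOddSpheres : Prop :=
  Formal S.toCDGA ∧
  (∀ k, 0 < k → ∀ x ∈ S.grading (2 * k), S.d x = 0 → S.toCDGA.IsExact x) ∧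
  (∀ i j (x y : S.A), 0 < i → 0 < j → x ∈ S.grading i → y ∈ S.grading j →
    S.d x = 0 → S.d y = 0 → S.toCDGA.IsExact (x * y))

/-- `S` models a rational Poincaré duality space with fundamental class in degree `N`. -/
def PoincareDuality (N : ℕ) : Prop :=
  (∀ i, FiniteDimensional ℚ (S.toCDGA.cohomology i)) ∧
  (∀ i, N < i → Subsingleton (S.toCDGA.cohomology i)) ∧
  (Module.finrank ℚ (S.toCDGA.cohomology N) = 1) ∧
  (∀ i (x : S.A), i ≤ N → x ∈ S.grading i → S.d x = 0 → ¬ S.toCDGA.IsExact x →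
    ∃ y ∈ S.grading (N - i), S.d y = 0 ∧ ¬ S.toCDGA.IsExact (x * y))

/-- Toomer's invariant `e₀` (of the space with minimal model `S`) : the greatest `n`
such that some non-coboundary cocycle lies in `Λ^{≥n} V`. -/
noncomputable def e0 : ℕ :=
  sSup {n | ∃ x ∈ S.lengthGE n, S.d x = 0 ∧ ¬ S.toCDGA.IsExact x}

/-- The set of even-degree generators. -/
def evenGenSet : Set S.A := ⋃ k, (S.V (2 * k) : Set S.A)

/-- `Λ(V^even)` as a submodule. -/
def evenSub : Submodule ℚ S.A :=
  Subalgebra.toSubmodule (Algebra.adjoin ℚ S.evenGenSet)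

/-- The span of the odd-degree generators. -/
def oddGenSpan : Submodule ℚ S.A := ⨆ k, S.V (2 * k + 1)

/-- A pure Sullivan algebra: `d(V^even) = 0` and `d(V^odd) ⊆ Λ(V^even)`. -/
def Pure : Prop :=
  (∀ k, ∀ v ∈ S.V (2 * k), S.d v = 0) ∧
  (∀ k, ∀ v ∈ S.V (2 * k + 1), S.d v ∈ S.evenSub)

/-- For a pure Sullivan algebra, the lower (second) grading:
`(ΛV)_k = Λ(V^even) ⊗ Λ^k(V^odd)`. -/
def pureLow (k : ℕ) : Submodule ℚ S.A := S.evenSub * S.oddGenSpan ^ k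

/-- The part of positive lower degree `(ΛV)_+`. -/
def pureLowPlus : Submodule ℚ S.A := ⨆ k, S.pureLow (k + 1)

/-- The cohomology of `S` is spherically generated: every cocycle agrees, modulo
coboundaries, with an element of the subalgebra generated by the cocycles lying in
the generating space `V` (the spherical classes). -/
def SphericallyGenerated : Prop :=
  ∀ x : S.A, S.d x = 0 →
    ∃ y ∈ Algebra.adjoin ℚ {w : S.A | w ∈ S.genSpan ∧ S.d w = 0},
      S.toCDGA.IsExact (x - y)

end Sullivan

/-- A bigraded (minimal) Sullivan algebra: the bigraded model of a formal space.
The lower grading `low` is multiplicative, the generators split into pure lower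
degrees, the differential lowers the lower degree by exactly one, and all cocycles
of positive lower degree are coboundaries (`H_+ = 0`). -/
structure BigradedSullivan extends Sullivan where
  low : ℕ → Submodule ℚ A
  low_one : (1 : A) ∈ low 0
  low_mul : ∀ i j (x y : A), x ∈ low i → y ∈ low j → x * y ∈ low (i + j)
  low_internal : DirectSum.IsInternal low
  V_low : ∀ i, V i = ⨆ k, (V i ⊓ low k)
  d_low_zero : ∀ x ∈ low 0, d x = 0
  d_low : ∀ k, ∀ x ∈ low (k + 1), d x ∈ low k
  acyclic_plus : ∀ k, ∀ x ∈ low (k + 1), d x = 0 → ∃ y : A, d y = x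

/-- The lower-degree-`0` part of the generators: `V_k` for `k = 0`, etc. -/
def BigradedSullivan.lowGens (S : BigradedSullivan) (k : ℕ) : Submodule ℚ S.A :=
  ⨆ i, (S.V i ⊓ S.low k)

/-- The universal property of a KS-extension `B → B ⊗ ΛV` : the total algebra is the
free graded-commutative algebra over `B` on the (lifted) generating space `V`. -/
def RelativelyFree (B T : CDGA) (incl : Hom B T) (V : ℕ → Submodule ℚ T.A) : Prop :=
  ∀ (C : Type) [instC : Ring C] [instC2 : Algebra ℚ C] (𝒞 : ℕ → Submodule ℚ C),
    (1 : C) ∈ 𝒞 0 →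
    (∀ i j (x y : C), x ∈ 𝒞 i → y ∈ 𝒞 j → x * y ∈ 𝒞 (i + j)) →
    (∀ i j (x y : C), x ∈ 𝒞 i → y ∈ 𝒞 j → x * y = ((-1 : ℚ) ^ (i * j)) • (y * x)) →
    ∀ (g : B.A →ₐ[ℚ] C), (∀ i (x : B.A), x ∈ B.grading i → g x ∈ 𝒞 i) →
    ∀ (f : (i : ℕ) → V i →ₗ[ℚ] C), (∀ i (v : V i), f i v ∈ 𝒞 i) →
    ∃! φ : T.A →ₐ[ℚ] C, (∀ x : B.A, φ (incl.toAlgHom x) = g x) ∧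
      (∀ i (v : V i), φ (v : T.A) = f i v)

/-- The KS (Koszul–Sullivan) condition: the lifted generators admit a well-ordered
basis `{v_α}` with `D v_α ∈ B ⊗ Λ(V_{<α})`. -/
def KSBasisCondition (B T : CDGA) (incl : Hom B T) (V : ℕ → Submodule ℚ T.A) : Prop :=
  ∃ (ι : Set ℕ) (b : ι → T.A),
    LinearIndependent ℚ b ∧
    Submodule.span ℚ (Set.range b) = (⨆ i, V i) ∧
    (∀ α : ι, ∃ i, b α ∈ V i) ∧
    (∀ α : ι, T.d (b α) ∈
      Algebra.adjoin ℚ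
        (Set.range (incl.toAlgHom : B.A → T.A) ∪ b '' {β : ι | (β : ℕ) < (α : ℕ)}))

/-- `incl : B → T` is a KS-extension of `B`. -/
def IsRelKS (B T : CDGA) (incl : Hom B T) : Prop :=
  ∃ V : ℕ → Submodule ℚ T.A, (∀ i, V i ≤ T.grading i) ∧
    RelativelyFree B T incl V ∧ KSBasisCondition B T incl V

/-- A model of a rational fibration `F → E → B` with base algebra `B` (a Sullivan model
of the base, or e.g. its cohomology `H(B)` when the base is formal) and fibre a Sullivan
algebra `F = (ΛV, d)`: a KS-extension `B → B ⊗ ΛV → ΛV` whose quotient by the ideal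
generated by `B⁺` is `F`.  The total algebra `T` represents the total space `E`. -/
structure FibrationModel (B : CDGA) (F : Sullivan) where
  T : CDGA
  incl : Hom B T
  proj : Hom T F.toCDGA
  V : ℕ → Submodule ℚ T.A
  V_le : ∀ i, V i ≤ T.grading i
  incl_inj : Function.Injective (incl.toAlgHom : B.A → T.A)
  relFree : RelativelyFree B T incl V
  ksBasis : KSBasisCondition B T incl V
  proj_incl : ∀ i, 0 < i → ∀ x ∈ B.grading i, proj.toAlgHom (incl.toAlgHom x) = 0
  proj_V : ∀ i, (V i).map (proj.toAlgHom.toLinearMap) = F.V i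
  fiber_inj : ∀ x ∈ Subalgebra.toSubmodule (Algebra.adjoin ℚ (⋃ i, (V i : Set T.A))),
    proj.toAlgHom x = 0 → x = 0
  ker_proj : ∀ x : T.A, proj.toAlgHom x = 0 ↔
    x ∈ (Submodule.map (incl.toAlgHom.toLinearMap) (⨆ i, B.grading (i + 1))) *
      (⊤ : Submodule ℚ T.A)

namespace FibrationModel

variable {B : CDGA} {F : Sullivan} (P : FibrationModel B F)

/-- The copy `1 ⊗ ΛV ⊆ B ⊗ ΛV` of the fibre inside the total algebra: the subalgebra
generated by the lifted generators. -/
def fiberSub : Submodule ℚ P.T.A :=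
  Subalgebra.toSubmodule (Algebra.adjoin ℚ (⋃ i, (P.V i : Set P.T.A)))

/-- The image `B ⊗ 1 ⊆ B ⊗ ΛV` of the base. -/
def baseSub : Submodule ℚ P.T.A := LinearMap.range (P.incl.toAlgHom.toLinearMap)

/-- The span of the lifted fibre generators. -/
def fiberGenSpan : Submodule ℚ P.T.A := ⨆ i, P.V i

/-- The span of all generators (base generators `W` together with the fibre ones). -/
def totalGenSpan (W : Submodule ℚ B.A) : Submodule ℚ P.T.A :=
  Submodule.map P.incl.toAlgHom.toLinearMap W ⊔ P.fiberGenSpan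

/-- `Λ^{≥n}(W ⊕ V)` in the total algebra. -/
def totalLengthGE (W : Submodule ℚ B.A) (n : ℕ) : Submodule ℚ P.T.A :=
  (P.totalGenSpan W) ^ n * (⊤ : Submodule ℚ P.T.A)

/-- The part of the fibre copy `1 ⊗ ΛV` lying over a submodule `K ⊆ ΛV`. -/
def fiberComap (K : Submodule ℚ F.A) : Submodule ℚ P.T.A :=
  P.fiberSub ⊓ Submodule.comap P.proj.toAlgHom.toLinearMap K

/-- The span of the even-degree lifted generators. -/
def evenGenSpan : Submodule ℚ P.T.A := ⨆ k, P.V (2 * k)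

/-- `Λ(V^even)` inside the total algebra. -/
def evenSub : Submodule ℚ P.T.A :=
  Subalgebra.toSubmodule (Algebra.adjoin ℚ (⋃ k, (P.V (2 * k) : Set P.T.A)))

/-- `Λ⁺(V^even)` inside the total algebra. -/
def evenPlus : Submodule ℚ P.T.A := P.evenGenSpan * P.evenSub

/-- The fibration (model) is totally non-cohomologous to zero: the projection onto the
fibre (modelling the fibre inclusion `j : F → E`) is surjective on cohomology. -/
def TNCZ : Prop :=
  ∀ y : F.A, F.d y = 0 → ∃ x : P.T.A, P.T.d x = 0 ∧
    CDGA.IsExact F.toCDGA (P.proj.toAlgHom x - y)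

end FibrationModel

/-- A (quasi-isomorphism) ladder between two fibration models: quasi-isomorphisms of
base, total and fibre algebras making both squares commute. -/
structure FibLadder {B B' : CDGA} {F F' : Sullivan}
    (P : FibrationModel B F) (P' : FibrationModel B' F') where
  fB : Hom B B'
  fT : Hom P.T P'.T
  fF : Hom F.toCDGA F'.toCDGA
  hB : QuasiIso fB
  hT : QuasiIso fT
  hF : QuasiIso fF
  commB : ∀ x : B.A, fT.toAlgHom (P.incl.toAlgHom x) = P'.incl.toAlgHom (fB.toAlgHom x)
  commF : ∀ x : P.T.A,
    fF.toAlgHom (P.proj.toAlgHom x) = P'.proj.toAlgHom (fT.toAlgHom x)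

/-- Two fibration models are quasi-isomorphic (model the same rational fibration). -/
def ModelPair {B B' : CDGA} {F F' : Sullivan}
    (P : FibrationModel B F) (P' : FibrationModel B' F') : Prop :=
  Nonempty (FibLadder P P') ∨ Nonempty (FibLadder P' P)

/-- An isomorphism of KS-extensions. -/
def FibIso {B B' : CDGA} {F F' : Sullivan}
    (P : FibrationModel B F) (P' : FibrationModel B' F') : Prop :=
  ∃ L : FibLadder P P', Function.Bijective (L.fB.toAlgHom : B.A → B'.A) ∧
    Function.Bijective (L.fT.toAlgHom : P.T.A → P'.T.A) ∧
    Function.Bijective (L.fF.toAlgHom : F.A → F'.A)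

/-- `cat₀ ≤ n` (Félix–Halperin): the projection `p_n : ΛV → ΛV/Λ^{≥n+1}V` makes `ΛV`
into a homotopy retract: for a relative KS-model `ΛV → R → ΛV/Λ^{≥n+1}V` of `p_n`
there is a retraction `ρ : R → ΛV` restricting to the identity on `ΛV`. -/
def catLe (S : Sullivan) (n : ℕ) : Prop :=
  ∃ (Q : CDGA) (q : Hom S.toCDGA Q),
    Function.Surjective (q.toAlgHom : S.A → Q.A) ∧
    (∀ x : S.A, q.toAlgHom x = 0 ↔ x ∈ S.lengthGE (n + 1)) ∧
    ∃ (R : CDGA) (ι : Hom S.toCDGA R) (ψ : Hom R Q) (ρ : Hom R S.toCDGA),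
      IsRelKS S.toCDGA R ι ∧ QuasiIso ψ ∧
      (∀ x : S.A, ψ.toAlgHom (ι.toAlgHom x) = q.toAlgHom x) ∧
      (∀ x : S.A, ρ.toAlgHom (ι.toAlgHom x) = x)

/-- The rational Lusternik–Schnirelmann category of the space with minimal model `S`. -/
noncomputable def cat0 (S : Sullivan) : ℕ := sInf {n | catLe S n}

/-- The rational cone-length (Cornea): the least `n` such that the minimal model is
quasi-isomorphic to a cochain algebra whose augmentation ideal has vanishing
`(n+1)`-fold products. -/
noncomputable def cl0 (S : Sullivan) : ℕ :=
  sInf {n | ∃ (Q : CDGA) (f : Hom S.toCDGA Q), QuasiIso f ∧ CDGA.NilpotentOfLength Q n}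

/-- For a formal space the invariants `cup₀, e₀, cat₀, cl₀` all agree; `nil₀` denotes
their common value (here represented by `cat₀`). -/
noncomputable def nil0 (S : Sullivan) : ℕ := cat0 S

end RHT

/-! ### Parity and degree projections of cochain algebras -/

namespace RHT
open Polynomial

/-- A `ℚ`-algebra is super-commutative with respect to the parity involution `ε`: even elements
(`ε a = a`) are central and odd elements (`ε a = -a`) commute up to the parity sign. -/
structure IsSuper {E : Type} [Ring E] [Algebra ℚ E] (ε : E →ₐ[ℚ] E) : Prop where
  invol : ∀ x, ε (ε x) = x
  even_comm : ∀ a b, ε a = a → a * b = b * a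
  odd_comm : ∀ a b, ε a = -a → a * b = ε b * a

/-- `D` is a differential for the parity involution `ε`: an odd derivation of square zero. -/
structure IsDiff {E : Type} [Ring E] [Algebra ℚ E] (ε : E →ₐ[ℚ] E) (D : E →ₗ[ℚ] E) : Prop where
  sq : ∀ x, D (D x) = 0
  eps : ∀ x, D (ε x) = -ε (D x)
  mul : ∀ x y, D (x * y) = D x * y + ε x * D y

theorem neg_one_pow_smul_cases {M : Type*} [AddCommGroup M] [Module ℚ M] (n : ℕ) (x : M) :
    ((-1 : ℚ) ^ n) • x = if Even n then x else -x := by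
  split_ifs with h
  · simp [h.neg_one_pow]
  · simp [(Nat.not_even_iff_odd.1 h).neg_one_pow]

namespace CDGA
variable (C : CDGA)

/-- The parity involution, `(-1)^i` on degree `i`. -/
noncomputable def eps : C.A →ₐ[ℚ] C.A :=
  (DirectSum.toAlgebra ℚ (fun i => C.grading i) (fun i => ((-1 : ℚ) ^ i) • (C.grading i).subtype)
    (by
      change ((-1 : ℚ) ^ 0) • (1 : C.A) = 1
      simp)
    (by
      intro i j x y
      change ((-1 : ℚ) ^ (i + j)) • ((x : C.A) * (y : C.A)) =
        (((-1 : ℚ) ^ i) • (x : C.A)) * (((-1 : ℚ) ^ j) • (y : C.A))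
      rw [smul_mul_smul_comm, pow_add])).comp
  (DirectSum.decomposeAlgEquiv C.grading).toAlgHom

theorem eps_of_mem {i : ℕ} {x : C.A} (hx : x ∈ C.grading i) : C.eps x = ((-1 : ℚ) ^ i) • x := by
  simp only [eps, AlgHom.comp_apply]
  have : (DirectSum.decomposeAlgEquiv C.grading).toAlgHom x =
      DirectSum.of (fun i => C.grading i) i ⟨x, hx⟩ := by
    simpa using DirectSum.decompose_of_mem C.grading hx
  rw [this]
  simp only [DirectSum.toAlgebra]
  erw [DirectSum.toSemiring_of]
  · rfl
  · change ((-1 : ℚ) ^ 0) • (1 : C.A) = 1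
    simp
  · intro i j x y
    change ((-1 : ℚ) ^ (i + j)) • ((x : C.A) * (y : C.A)) =
      (((-1 : ℚ) ^ i) • (x : C.A)) * (((-1 : ℚ) ^ j) • (y : C.A))
    rw [smul_mul_smul_comm, pow_add]

/-- Induction over homogeneous elements. -/
theorem hom_induction {p : C.A → Prop} (h0 : p 0)
    (hh : ∀ i x, x ∈ C.grading i → p x) (ha : ∀ x y, p x → p y → p (x + y)) (x : C.A) : p x := by
  refine DirectSum.Decomposition.inductionOn C.grading h0 (fun {i} m => hh i _ m.2) ?_ x
  exact fun m m' => ha m m'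

theorem isSuper : IsSuper C.eps where
  invol x := by
    refine C.hom_induction (p := fun x => C.eps (C.eps x) = x) (by simp) ?_ ?_ x
    · intro i x hx
      rw [C.eps_of_mem hx, map_smul, C.eps_of_mem hx, smul_smul, ← mul_pow]; simp
    · intro x y hx hy; simp only [map_add, hx, hy]
  even_comm := by
    have key : ∀ a b, (a + C.eps a) * b = b * (a + C.eps a) := by
      intro a
      refine C.hom_induction (p := fun a => ∀ b, (a + C.eps a) * b = b * (a + C.eps a))
        (by simp) ?_ ?_ a
      · intro i a ha b
        refine C.hom_induction (p := fun b => (a + C.eps a) * b = b * (a + C.eps a))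
          (by simp) ?_ ?_ b
        · intro j b hb
          have h := C.gcomm ha hb
          rw [C.eps_of_mem ha]
          rw [neg_one_pow_smul_cases] at h ⊢
          by_cases hi : Even i
          · simp only [hi, hi.mul_right, if_true] at h ⊢
            rw [add_mul, h, mul_add]
          · simp [hi]
        · intro x y hx hy; rw [mul_add, hx, hy, add_mul]
      · intro x y hx hy b
        rw [map_add, show x + y + (C.eps x + C.eps y) = (x + C.eps x) + (y + C.eps y) by abel,
          add_mul, hx, hy, ← mul_add]
    intro a b h
    have := key a b
    rw [h, ← two_smul ℚ a, smul_mul_assoc, mul_smul_comm] at this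
    exact smul_right_injective _ (two_ne_zero' ℚ) this
  odd_comm := by
    have key : ∀ a b, (a - C.eps a) * b = C.eps b * (a - C.eps a) := by
      intro a
      refine C.hom_induction (p := fun a => ∀ b, (a - C.eps a) * b = C.eps b * (a - C.eps a))
        (by simp) ?_ ?_ a
      · intro i a ha b
        refine C.hom_induction (p := fun b => (a - C.eps a) * b = C.eps b * (a - C.eps a))
          (by simp) ?_ ?_ b
        · intro j b hb
          have h := C.gcomm ha hb
          rw [C.eps_of_mem ha, C.eps_of_mem hb]
          rw [neg_one_pow_smul_cases] at h ⊢
          rw [neg_one_pow_smul_cases]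
          by_cases hi : Even i
          · simp [hi]
          · by_cases hj : Even j
            · simp only [hi, hj, hj.mul_left, if_true, if_false] at h ⊢
              rw [sub_mul, neg_mul, h, mul_sub, mul_neg]
            · have hij : ¬ Even (i * j) := by simp [Nat.even_mul, hi, hj]
              simp only [hi, hj, hij, if_false] at h ⊢
              rw [sub_mul, neg_mul, h, mul_sub, mul_neg]; simp
        · intro x y hx hy; rw [mul_add, hx, hy, map_add, add_mul]
      · intro x y hx hy b
        rw [map_add, show x + y - (C.eps x + C.eps y) = (x - C.eps x) + (y - C.eps y) by abel,
          add_mul, hx, hy, ← mul_add]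
    intro a b h
    have := key a b
    rw [h, sub_neg_eq_add, ← two_smul ℚ a, smul_mul_assoc, mul_smul_comm] at this
    exact smul_right_injective _ (two_ne_zero' ℚ) this

theorem isDiff : IsDiff C.eps C.d where
  sq := C.d_sq
  eps x := by
    refine C.hom_induction (p := fun x => C.d (C.eps x) = -C.eps (C.d x)) (by simp) ?_ ?_ x
    · intro i x hx
      rw [C.eps_of_mem hx, C.eps_of_mem (C.d_mem hx), map_smul, pow_succ]; simp
    · intro x y hx hy; simp only [map_add, hx, hy]; abel
  mul x y := by
    refine C.hom_induction (p := fun x => C.d (x * y) = C.d x * y + C.eps x * C.d y)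
      (by simp) ?_ ?_ x
    · intro i x hx
      rw [C.leibniz x y hx, C.eps_of_mem hx, smul_mul_assoc]
    · intro x z hx hz; simp only [map_add, add_mul, hx, hz]; abel

/-- The projection to degree `n`. -/
noncomputable def pj (n : ℕ) : C.A →ₗ[ℚ] C.A := GradedRing.proj C.grading n |>.toRatLinearMap

theorem pj_mem (n : ℕ) (x : C.A) : C.pj n x ∈ C.grading n :=
  (DirectSum.decompose C.grading x n).2

theorem pj_of_mem {n : ℕ} {x : C.A} (hx : x ∈ C.grading n) : C.pj n x = x :=
  DirectSum.decompose_of_mem_same C.grading hx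

theorem pj_of_mem_ne {n m : ℕ} {x : C.A} (hx : x ∈ C.grading m) (h : m ≠ n) : C.pj n x = 0 :=
  DirectSum.decompose_of_mem_ne C.grading hx h

theorem pj_mem_iff {n : ℕ} {x : C.A} : x ∈ C.grading n ↔ C.pj n x = x :=
  ⟨C.pj_of_mem, fun h => h ▸ C.pj_mem n x⟩

theorem pj_ext {x y : C.A} (h : ∀ n, C.pj n x = C.pj n y) : x = y := by
  apply (DirectSum.decompose C.grading).injective
  ext n
  exact h n

/-- Every element is the finite sum of its homogeneous components. -/
theorem exists_sum_pj (x : C.A) : ∃ N, (∀ n, N ≤ n → C.pj n x = 0) ∧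
    ∑ n ∈ Finset.range N, C.pj n x = x := by
  classical
  refine C.hom_induction (p := fun x => ∃ N, (∀ n, N ≤ n → C.pj n x = 0) ∧
    ∑ n ∈ Finset.range N, C.pj n x = x) ⟨0, by simp⟩ ?_ ?_ x
  · intro i x hx
    refine ⟨i + 1, fun n hn => C.pj_of_mem_ne hx (by omega), ?_⟩
    rw [Finset.sum_eq_single i]
    · exact C.pj_of_mem hx
    · intro b _ hb; exact C.pj_of_mem_ne hx hb.symm
    · simp
  · rintro x y ⟨N, hN, hNs⟩ ⟨M, hM, hMs⟩
    have ext : ∀ z K L, K ≤ L → (∀ n, K ≤ n → C.pj n z = 0) →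
        ∑ n ∈ Finset.range L, C.pj n z = ∑ n ∈ Finset.range K, C.pj n z := by
      intro z K L hKL h
      symm
      apply Finset.sum_subset
      · intro a; simp; omega
      · intro a _ ha; exact h a (by simpa using ha)
    refine ⟨max N M, fun n hn => ?_, ?_⟩
    · rw [map_add, hN n (by omega), hM n (by omega), add_zero]
    · simp only [map_add, Finset.sum_add_distrib]
      rw [ext x N _ (le_max_left _ _) hN, ext y M _ (le_max_right _ _) hM, hNs, hMs]

theorem pj_d (n : ℕ) (x : C.A) : C.pj (n + 1) (C.d x) = C.d (C.pj n x) := by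
  refine C.hom_induction (p := fun x => C.pj (n + 1) (C.d x) = C.d (C.pj n x)) (by simp) ?_ ?_ x
  · intro i x hx
    by_cases h : i = n
    · subst h; rw [C.pj_of_mem hx, C.pj_of_mem (C.d_mem hx)]
    · rw [C.pj_of_mem_ne hx h, C.pj_of_mem_ne (C.d_mem hx) (by omega), map_zero]
  · intro x y hx hy; simp only [map_add, hx, hy]

theorem pj_zero_d (x : C.A) : C.pj 0 (C.d x) = 0 := by
  refine C.hom_induction (p := fun x => C.pj 0 (C.d x) = 0) (by simp) ?_ ?_ x
  · intro i x hx
    exact C.pj_of_mem_ne (C.d_mem hx) (by omega)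
  · intro x y hx hy; simp only [map_add, hx, hy, add_zero]

theorem mul_mem {i j : ℕ} {x y : C.A} (hx : x ∈ C.grading i) (hy : y ∈ C.grading j) :
    x * y ∈ C.grading (i + j) := SetLike.GradedMul.mul_mem hx hy

theorem one_mem : (1 : C.A) ∈ C.grading 0 := SetLike.GradedOne.one_mem

theorem d_one : C.d 1 = 0 := by
  have := C.leibniz (1 : C.A) 1 C.one_mem
  simpa using this

theorem eps_mem {i : ℕ} {x : C.A} (hx : x ∈ C.grading i) : C.eps x ∈ C.grading i := by
  rw [C.eps_of_mem hx]; exact Submodule.smul_mem _ _ hx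

theorem eps_even {i : ℕ} (hi : Even i) {x : C.A} (hx : x ∈ C.grading i) : C.eps x = x := by
  rw [C.eps_of_mem hx, hi.neg_one_pow, one_smul]

theorem eps_odd {i : ℕ} (hi : Odd i) {x : C.A} (hx : x ∈ C.grading i) : C.eps x = -x := by
  rw [C.eps_of_mem hx, hi.neg_one_pow, neg_one_smul]

theorem eps_pj (n : ℕ) (x : C.A) : C.eps (C.pj n x) = C.pj n (C.eps x) := by
  refine C.hom_induction (p := fun x => C.eps (C.pj n x) = C.pj n (C.eps x)) (by simp) ?_ ?_ x
  · intro i x hx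
    by_cases h : i = n
    · subst h; rw [C.pj_of_mem hx, C.pj_of_mem (C.eps_mem hx)]
    · rw [C.pj_of_mem_ne hx h, C.pj_of_mem_ne (C.eps_mem hx) h, map_zero]
  · intro x y hx hy; simp only [map_add, hx, hy]

end CDGA

end RHT

/-! ### Extensions by an even or an odd variable -/

namespace RHT
open Polynomial

section Super
variable {E : Type} [Ring E] [Algebra ℚ E] {ε : E →ₐ[ℚ] E}

theorem IsDiff.one (D : E →ₗ[ℚ] E) (h : IsDiff ε D) : D 1 = 0 := by
  have := h.mul 1 1
  simpa using this

theorem isSuper_id {R : Type} [CommRing R] [Algebra ℚ R] : IsSuper (AlgHom.id ℚ R) where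
  invol _ := rfl
  even_comm a b _ := mul_comm a b
  odd_comm a b _ := mul_comm a b

theorem IsSuper.odd_sq (h : IsSuper ε) {a : E} (ha : ε a = -a) : a * a = 0 := by
  have := h.odd_comm a a ha
  rw [ha, neg_mul] at this
  have h2 : (2 : ℚ) • (a * a) = 0 := by
    rw [two_smul]; nth_rewrite 1 [this]; simp
  exact (smul_eq_zero.1 h2).resolve_left two_ne_zero

/-- Polynomials over a super-commutative algebra, the variable being even. -/
theorem IsSuper.poly (h : IsSuper ε) : IsSuper (Polynomial.mapAlgHom ε) where
  invol p := by
    ext n; simp [h.invol]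
  even_comm p q hp := by
    have hc : ∀ n, ε (p.coeff n) = p.coeff n := fun n => by
      conv_rhs => rw [← hp]
      simp
    ext n
    rw [coeff_mul, coeff_mul, ← Finset.Nat.sum_antidiagonal_swap]
    exact Finset.sum_congr rfl fun x _ => h.even_comm _ _ (hc _)
  odd_comm p q hp := by
    have hc : ∀ n, ε (p.coeff n) = -p.coeff n := fun n => by
      rw [← coeff_neg, ← hp]
      simp
    ext n
    rw [coeff_mul, coeff_mul, ← Finset.Nat.sum_antidiagonal_swap]
    refine Finset.sum_congr rfl fun x _ => ?_
    simpa using h.odd_comm _ (q.coeff x.1) (hc x.2)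

end Super

/-- The super-commutative extension `E ⊕ w E` of `(E, ε)` by an odd variable `w`; the pair
`⟨a, b⟩` stands for `a + w b`. -/
@[ext] structure OddExt {E : Type} [Ring E] [Algebra ℚ E] (ε : E →ₐ[ℚ] E) : Type where
  /-- The coordinate `a`. -/
  fst : E
  /-- The coefficient `b` of `w`. -/
  snd : E

namespace OddExt
variable {E : Type} [Ring E] [Algebra ℚ E] {ε : E →ₐ[ℚ] E}

/-- The coordinates of `a + w b`. -/
def toProd (ε : E →ₐ[ℚ] E) : OddExt ε ≃ E × E where
  toFun x := (x.1, x.2)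
  invFun x := ⟨x.1, x.2⟩

instance : AddCommGroup (OddExt ε) := (toProd ε).addCommGroup
instance : Module ℚ (OddExt ε) := (toProd ε).module ℚ

instance : Mul (OddExt ε) := ⟨fun x y => mk (x.1 * y.1) (ε x.1 * y.2 + x.2 * y.1)⟩
instance : One (OddExt ε) := ⟨mk 1 0⟩

@[simp] theorem add_fst (x y : OddExt ε) : (x + y).1 = x.1 + y.1 := rfl
@[simp] theorem add_snd (x y : OddExt ε) : (x + y).2 = x.2 + y.2 := rfl
@[simp] theorem neg_fst (x : OddExt ε) : (-x).1 = -x.1 := rfl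
@[simp] theorem neg_snd (x : OddExt ε) : (-x).2 = -x.2 := rfl
@[simp] theorem zero_fst : (0 : OddExt ε).1 = 0 := rfl
@[simp] theorem zero_snd : (0 : OddExt ε).2 = 0 := rfl
@[simp] theorem one_fst : (1 : OddExt ε).1 = 1 := rfl
@[simp] theorem one_snd : (1 : OddExt ε).2 = 0 := rfl
@[simp] theorem smul_fst (c : ℚ) (x : OddExt ε) : (c • x).1 = c • x.1 := rfl
@[simp] theorem smul_snd (c : ℚ) (x : OddExt ε) : (c • x).2 = c • x.2 := rfl
@[simp] theorem mul_fst (x y : OddExt ε) : (x * y).1 = x.1 * y.1 := rfl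
@[simp] theorem mul_snd (x y : OddExt ε) : (x * y).2 = ε x.1 * y.2 + x.2 * y.1 := rfl

instance : Ring (OddExt ε) :=
  { (inferInstance : AddCommGroup (OddExt ε)) with
    mul := (· * ·)
    one := 1
    mul_assoc := fun x y z => by
      ext <;> simp [mul_assoc, mul_add, add_mul, add_assoc]
    one_mul := fun x => by ext <;> simp
    mul_one := fun x => by ext <;> simp
    left_distrib := fun x y z => by ext <;> simp [mul_add]; abel
    right_distrib := fun x y z => by ext <;> simp [add_mul]; abel
    zero_mul := fun x => by ext <;> simp
    mul_zero := fun x => by ext <;> simp }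

noncomputable instance : Algebra ℚ (OddExt ε) := Algebra.ofModule
  (fun r x y => by ext <;> simp)
  (fun r x y => by ext <;> simp)

/-- The parity involution; `w` is odd. -/
noncomputable def eps (ε : E →ₐ[ℚ] E) : OddExt ε →ₐ[ℚ] OddExt ε :=
  AlgHom.ofLinearMap
    { toFun := fun x => mk (ε x.1) (-ε x.2)
      map_add' := fun x y => by ext <;> simp; abel
      map_smul' := fun c x => by ext <;> simp }
    (by ext <;> simp) (fun x y => by ext <;> simp; abel)

@[simp] theorem eps_fst (x : OddExt ε) : (eps ε x).1 = ε x.1 := rfl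
@[simp] theorem eps_snd (x : OddExt ε) : (eps ε x).2 = -ε x.2 := rfl

/-- The projection `w ↦ 0`. -/
noncomputable def fstHom (ε : E →ₐ[ℚ] E) : OddExt ε →ₐ[ℚ] E :=
  AlgHom.ofLinearMap
    { toFun := fun x => x.1
      map_add' := fun _ _ => rfl
      map_smul' := fun _ _ => rfl }
    rfl (fun _ _ => rfl)

@[simp] theorem fstHom_apply (x : OddExt ε) : fstHom ε x = x.1 := rfl

theorem isSuper (h : IsSuper ε) : IsSuper (eps ε) where
  invol x := by ext <;> simp [h.invol]
  even_comm x y hx := by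
    have h1 : ε x.1 = x.1 := congrArg OddExt.fst hx
    have h2 : -ε x.2 = x.2 := congrArg OddExt.snd hx
    have h2' : ε x.2 = -x.2 := by rw [← neg_eq_iff_eq_neg, h2]
    ext
    · simp [h.even_comm _ y.1 h1]
    · simp only [mul_snd, h1]
      rw [h.even_comm _ y.2 h1, h.odd_comm _ y.1 h2', add_comm]
  odd_comm x y hx := by
    have h1 : ε x.1 = -x.1 := congrArg OddExt.fst hx
    have h2 : -ε x.2 = -x.2 := congrArg OddExt.snd hx
    have h2' : ε x.2 = x.2 := neg_injective h2
    ext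
    · simp [h.odd_comm _ y.1 h1]
    · simp only [mul_snd, h1, eps_fst, eps_snd, h.invol]
      rw [neg_mul, h.odd_comm _ y.2 h1, h.even_comm _ y.1 h2', add_comm, neg_mul]

/-- The differential extending `D` with `D w = s`. -/
noncomputable def diff (D : E →ₗ[ℚ] E) (s : E) : OddExt ε →ₗ[ℚ] OddExt ε where
  toFun x := mk (D x.1 + s * x.2) (-D x.2)
  map_add' x y := by ext <;> simp [mul_add] <;> abel
  map_smul' c x := by ext <;> simp

@[simp] theorem diff_fst (D : E →ₗ[ℚ] E) (s : E) (x : OddExt ε) :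
    (diff D s x).1 = D x.1 + s * x.2 := rfl
@[simp] theorem diff_snd (D : E →ₗ[ℚ] E) (s : E) (x : OddExt ε) :
    (diff D s x).2 = -D x.2 := rfl

theorem isDiff (h : IsSuper ε) {D : E →ₗ[ℚ] E} (hD : IsDiff ε D) {s : E} (hs : ε s = s)
    (hDs : D s = 0) : IsDiff (eps ε) (diff D s) where
  sq x := by ext <;> simp [hD.sq, hD.mul, hDs, hs]
  eps x := by ext <;> simp [hD.eps, hs]; abel
  mul x y := by
    ext
    · simp only [diff_fst, mul_fst, mul_snd, add_fst, eps_fst, hD.mul, mul_add, add_mul]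
      rw [← mul_assoc s (ε x.1), h.even_comm s (ε x.1) hs]; simp only [mul_assoc]; abel
    · simp only [diff_snd, diff_fst, mul_snd, add_snd, eps_fst, eps_snd, hD.mul, map_add,
        mul_add, add_mul, hD.eps, map_mul, h.invol, hs]
      rw [h.even_comm s _ hs]
      simp only [mul_assoc, neg_mul, mul_neg]
      abel

end OddExt

section PolyDiff
variable {E : Type} [Ring E] [Algebra ℚ E] {ε : E →ₐ[ℚ] E}

/-- A linear map applied to the coefficients of a polynomial. -/
noncomputable def polyMap (D : E →ₗ[ℚ] E) : E[X] →ₗ[ℚ] E[X] :=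
  have hc : ∀ (p : E[X]) n, (∑ i ∈ Finset.range (p.natDegree + 1),
      monomial i (D (p.coeff i))).coeff n = D (p.coeff n) := by
    intro p n
    simp only [finsetSum_coeff, coeff_monomial, Finset.sum_ite_eq', Finset.mem_range]
    split_ifs with h
    · rfl
    · rw [coeff_eq_zero_of_natDegree_lt (by omega), map_zero]
  { toFun := fun p => ∑ i ∈ Finset.range (p.natDegree + 1), monomial i (D (p.coeff i))
    map_add' := fun p q => by ext n; rw [coeff_add, hc, hc, hc, coeff_add, map_add]
    map_smul' := fun c p => by ext n; rw [coeff_smul, hc, hc, coeff_smul, map_smul]; rfl }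

@[simp] theorem coeff_polyMap (D : E →ₗ[ℚ] E) (p : E[X]) (n : ℕ) :
    (polyMap D p).coeff n = D (p.coeff n) := by
  change (∑ i ∈ Finset.range (p.natDegree + 1), monomial i (D (p.coeff i))).coeff n = _
  simp only [finsetSum_coeff, coeff_monomial, Finset.sum_ite_eq', Finset.mem_range]
  split_ifs with h
  · rfl
  · rw [coeff_eq_zero_of_natDegree_lt (by omega), map_zero]

/-- The differential on `E[X]` extending `D` with `D X = s`. -/
noncomputable def polyDiff (D : E →ₗ[ℚ] E) (s : E) : E[X] →ₗ[ℚ] E[X] :=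
  polyMap D + (LinearMap.mulLeft ℚ (C s)).comp ((Polynomial.derivative (R := E)).restrictScalars ℚ)

theorem polyDiff_apply (D : E →ₗ[ℚ] E) (s : E) (p : E[X]) :
    polyDiff D s p = polyMap D p + C s * derivative p := rfl

theorem coeff_polyDiff (D : E →ₗ[ℚ] E) (s : E) (p : E[X]) (n : ℕ) :
    (polyDiff D s p).coeff n = D (p.coeff n) + s * (p.coeff (n + 1) * (n + 1)) := by
  rw [polyDiff_apply, coeff_add, coeff_polyMap, coeff_C_mul, coeff_derivative]

theorem isDiff_poly (h : IsSuper ε) {D : E →ₗ[ℚ] E} (hD : IsDiff ε D) {s : E} (hs : ε s = -s)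
    (hDs : D s = 0) : IsDiff (Polynomial.mapAlgHom ε) (polyDiff D s) where
  sq p := by
    ext n
    have e : ∀ (x : E) (k : ℕ), D (x * ((k : E) + 1)) = D x * (k + 1) := fun x k => by
      have : x * ((k : E) + 1) = ((k + 1 : ℕ) : ℚ) • x := by
        rw [Algebra.smul_def, map_natCast, ← Nat.cast_succ, (Nat.cast_commute _ _).eq]
      rw [this, map_smul, Algebra.smul_def, map_natCast, ← Nat.cast_succ, (Nat.cast_commute _ _).eq]
    simp only [coeff_polyDiff, map_add, hD.sq]
    rw [hD.mul, hDs, hs, e]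
    have : s * s = 0 := h.odd_sq hs
    simp [add_mul, mul_add, ← mul_assoc, this]; abel
  eps p := by
    ext n
    simp only [coeff_polyDiff, Polynomial.coe_mapAlgHom, coeff_map, coeff_neg, RingHom.coe_coe,
      hD.eps, map_add, map_mul, hs]
    simp; abel
  mul p q := by
    have h1 : polyMap D (p * q) = polyMap D p * q + Polynomial.mapAlgHom ε p * polyMap D q := by
      ext n
      simp only [coeff_polyMap, coeff_mul, coeff_add, map_sum, hD.mul, Finset.sum_add_distrib]
      simp
    have h2 : C s * p = Polynomial.mapAlgHom ε p * C s :=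
      h.poly.odd_comm _ _ (by ext n; simp [coeff_C]; split_ifs <;> simp [hs])
    simp only [polyDiff_apply, h1, derivative_mul, mul_add, add_mul, ← mul_assoc, h2]
    abel

end PolyDiff

end RHT

/-! ### Finitely generated Sullivan algebras -/

namespace RHT
open Polynomial

/-- A Sullivan algebra on finitely many generators of degree at least two, presented by a basis
of generators ordered by degree; the differential is triangular for the degree. -/
structure Sys extends CDGA where
  r : ℕ
  v : Fin r → A
  deg : Fin r → ℕ
  deg_ge : ∀ i, 2 ≤ deg i
  mono : Monotone deg
  v_mem : ∀ i, v i ∈ grading (deg i)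
  gen : Algebra.adjoin ℚ (Set.range v) = ⊤
  lift : ∀ (E : Type) [Ring E] [Algebra ℚ E] (ε : E →ₐ[ℚ] E), IsSuper ε → ∀ c : Fin r → E,
    (∀ i, ε (c i) = ((-1 : ℚ) ^ deg i) • c i) → ∃ φ : A →ₐ[ℚ] E, ∀ i, φ (v i) = c i
  d_v : ∀ i, d (v i) ∈ Algebra.adjoin ℚ (v '' {l | deg l < deg i})

namespace Sys
variable (M : Sys)

/-- The parity involution. -/
noncomputable abbrev ep : M.A →ₐ[ℚ] M.A := M.toCDGA.eps

theorem ep_v (i) : M.ep (M.v i) = ((-1 : ℚ) ^ M.deg i) • M.v i := M.eps_of_mem (M.v_mem i)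

variable {M} in
theorem hom_ext {E : Type} [Ring E] [Algebra ℚ E] {f g : M.A →ₐ[ℚ] E}
    (h : ∀ i, f (M.v i) = g (M.v i)) : f = g := by
  apply AlgHom.ext_of_adjoin_eq_top M.gen
  rintro _ ⟨i, rfl⟩
  exact h i

variable {M} in
/-- Two derivations along the same pair of homomorphisms agree if they agree on generators. -/
theorem der_ext {E : Type} [Ring E] [Algebra ℚ E] (φ ψ : M.A →ₐ[ℚ] E) (f g : M.A →ₗ[ℚ] E)
    (hf : ∀ a b, f (a * b) = f a * φ b + ψ a * f b) (hg : ∀ a b, g (a * b) = g a * φ b + ψ a * g b)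
    (h : ∀ i, f (M.v i) = g (M.v i)) (a : M.A) : f a = g a := by
  have h1 : f 1 = 0 := by simpa using hf 1 1
  have h2 : g 1 = 0 := by simpa using hg 1 1
  have ha : a ∈ Algebra.adjoin ℚ (Set.range M.v) := M.gen ▸ Algebra.mem_top
  induction ha using Algebra.adjoin_induction with
  | mem x hx => obtain ⟨i, rfl⟩ := hx; exact h i
  | algebraMap c => rw [Algebra.algebraMap_eq_smul_one, map_smul, map_smul, h1, h2]
  | add x y _ _ hx hy => rw [map_add, map_add, hx, hy]
  | mul x y _ _ hx hy => rw [hf, hg, hx, hy]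

/-- Monomials in the generators. -/
def mon (l : List (Fin M.r)) : M.A := (l.map M.v).prod

theorem span_mon : Submodule.span ℚ (Set.range M.mon) = ⊤ := by
  have : (Submonoid.closure (Set.range M.v) : Set M.A) ⊆ Set.range M.mon := by
    intro x hx
    induction hx using Submonoid.closure_induction with
    | mem x hx => obtain ⟨i, rfl⟩ := hx; exact ⟨[i], by simp [mon]⟩
    | one => exact ⟨[], rfl⟩
    | mul x y _ _ hx hy =>
      obtain ⟨l, rfl⟩ := hx; obtain ⟨m, rfl⟩ := hy
      exact ⟨l ++ m, by simp [mon]⟩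
  rw [eq_top_iff]
  intro x _
  have hx : x ∈ Algebra.adjoin ℚ (Set.range M.v) := M.gen ▸ Algebra.mem_top
  rw [← Subalgebra.mem_toSubmodule, Algebra.adjoin_eq_span] at hx
  exact Submodule.span_mono this hx

variable {M} in
theorem lin_ext {E : Type} [AddCommGroup E] [Module ℚ E] {f g : M.A →ₗ[ℚ] E}
    (h : ∀ l, f (M.mon l) = g (M.mon l)) : f = g := by
  apply LinearMap.ext_on M.span_mon
  rintro _ ⟨l, rfl⟩
  exact h l

variable {M} in
theorem mon_induction {p : M.A → Prop} (h : ∀ l, p (M.mon l)) (h0 : p 0)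
    (ha : ∀ x y, p x → p y → p (x + y)) (hs : ∀ (c : ℚ) x, p x → p (c • x)) (x : M.A) : p x := by
  have hx : x ∈ Submodule.span ℚ (Set.range M.mon) := M.span_mon ▸ Submodule.mem_top
  induction hx using Submodule.span_induction with
  | mem x hx => obtain ⟨l, rfl⟩ := hx; exact h l
  | zero => exact h0
  | add x y _ _ hx hy => exact ha x y hx hy
  | smul c x _ hx => exact hs c x hx

theorem mon_nil : M.mon [] = 1 := rfl
theorem mon_cons (i l) : M.mon (i :: l) = M.v i * M.mon l := by simp [mon]
theorem mon_append (l m) : M.mon (l ++ m) = M.mon l * M.mon m := by simp [mon]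

theorem mon_mem (l : List (Fin M.r)) : M.mon l ∈ M.grading (l.map M.deg).sum := by
  induction l with
  | nil => exact M.one_mem
  | cons i l ih => rw [mon_cons]; simpa using M.mul_mem (M.v_mem i) ih

theorem exists_q (j : ℕ) : ∃ φ : M.A →ₐ[ℚ] M.A, ∀ i, φ (M.v i) = if i.val < j then 0 else M.v i :=
  M.lift M.A M.ep M.isSuper _ fun i => by
    split_ifs
    · simp
    · exact M.ep_v i

/-- The endomorphism killing the generators of index less than `j`. -/
noncomputable def q (j : ℕ) : M.A →ₐ[ℚ] M.A := (M.exists_q j).choose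

theorem q_v (j : ℕ) (i) : M.q j (M.v i) = if i.val < j then 0 else M.v i :=
  (M.exists_q j).choose_spec i

theorem q_zero (a) : M.q 0 a = a := by
  have : M.q 0 = AlgHom.id ℚ _ := hom_ext fun i => by simp [q_v]
  rw [this]; rfl

theorem q_q {j k : ℕ} (h : j ≤ k) (a) : M.q j (M.q k a) = M.q k a := by
  have : (M.q j).comp (M.q k) = M.q k := hom_ext fun i => by
    simp only [AlgHom.comp_apply, q_v]
    split_ifs with h1
    · simp
    · rw [q_v, if_neg (by omega)]
  exact DFunLike.congr_fun this a

theorem q_q' {j k : ℕ} (h : j ≤ k) (a) : M.q k (M.q j a) = M.q k a := by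
  have : (M.q k).comp (M.q j) = M.q k := hom_ext fun i => by
    simp only [AlgHom.comp_apply, q_v]
    split_ifs with h1 h2 h2
    · simp
    · omega
    · rw [q_v, if_pos h2]
    · rw [q_v, if_neg h2]
  exact DFunLike.congr_fun this a

theorem ep_q (j : ℕ) (a) : M.ep (M.q j a) = M.q j (M.ep a) := by
  have : M.ep.comp (M.q j) = (M.q j).comp M.ep := hom_ext fun i => by
    simp only [AlgHom.comp_apply, q_v, ep_v, map_smul]
    split_ifs with h1
    · simp
    · rw [ep_v]
  exact DFunLike.congr_fun this a

theorem q_mon (j : ℕ) (l) : M.q j (M.mon l) = M.mon l ∨ M.q j (M.mon l) = 0 := by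
  induction l with
  | nil => left; exact map_one _
  | cons i l ih =>
    rw [mon_cons, map_mul, q_v]
    split_ifs
    · simp
    · rcases ih with h | h <;> simp [h]

theorem pj_q (j n : ℕ) (a) : M.pj n (M.q j a) = M.q j (M.pj n a) := by
  have : (M.pj n).comp (M.q j).toLinearMap = (M.q j).toLinearMap.comp (M.pj n) := lin_ext fun l => by
    simp only [LinearMap.comp_apply, AlgHom.toLinearMap_apply]
    by_cases h : (l.map M.deg).sum = n
    · have hm := M.mon_mem l
      rw [h] at hm
      rw [M.pj_of_mem hm]
      rcases M.q_mon j l with h' | h'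
      · rw [h', M.pj_of_mem hm]
      · rw [h', map_zero]
    · rw [M.pj_of_mem_ne (M.mon_mem l) h]
      rcases M.q_mon j l with h' | h'
      · rw [h', M.pj_of_mem_ne (M.mon_mem l) h, map_zero]
      · rw [h', map_zero, map_zero]
  exact DFunLike.congr_fun this a

theorem q_mem {j n : ℕ} {a} (h : a ∈ M.grading n) : M.q j a ∈ M.grading n := by
  rw [M.pj_mem_iff, pj_q, M.pj_of_mem h]

theorem exists_aug : ∃ φ : M.A →ₐ[ℚ] ℚ, ∀ i, φ (M.v i) = 0 :=
  M.lift ℚ (AlgHom.id ℚ ℚ) isSuper_id (fun _ => 0) (by simp)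

instance : Nontrivial M.A := M.exists_aug.choose.toRingHom.domain_nontrivial

theorem deg_zero_of_mon {l : List (Fin M.r)} (h : (l.map M.deg).sum = 0) : l = [] := by
  cases l with
  | nil => rfl
  | cons i l => have := M.deg_ge i; simp at h; omega

/-- An algebra homomorphism killing all generators kills all elements without component of
degree zero. -/
theorem kill {E : Type} [Ring E] [Algebra ℚ E] (φ : M.A →ₐ[ℚ] E) (hφ : ∀ i, φ (M.v i) = 0)
    {a : M.A} (ha : M.pj 0 a = 0) : φ a = 0 := by
  have : φ.toLinearMap = φ.toLinearMap.comp (M.pj 0) := lin_ext fun l => by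
    cases l with
    | nil => simp only [LinearMap.comp_apply]; rw [mon_nil, M.pj_of_mem M.one_mem]
    | cons i l =>
      have : M.pj 0 (M.mon (i :: l)) = 0 := M.pj_of_mem_ne (M.mon_mem _) (by
        have := M.deg_ge i; simp; omega)
      simp only [LinearMap.comp_apply, this, map_zero, AlgHom.toLinearMap_apply]
      rw [mon_cons, map_mul, hφ, zero_mul]
  have := DFunLike.congr_fun this a
  simpa [ha] using this

theorem d_v_adjoin (i) : M.d (M.v i) ∈ Algebra.adjoin ℚ (M.v '' {l | l < i}) := by
  refine Algebra.adjoin_mono (Set.image_mono ?_) (M.d_v i)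
  intro l hl
  by_contra h
  exact absurd (M.mono (not_lt.1 h)) (not_le.2 hl)

/-- A homomorphism killing the generators of index less than `j` kills `d v_i` for `i ≤ j`. -/
theorem kill_d {E : Type} [Ring E] [Algebra ℚ E] (φ : M.A →ₐ[ℚ] E) {j : ℕ}
    (hφ : ∀ i : Fin M.r, i.val < j → φ (M.v i) = 0) (i : Fin M.r) (hi : i.val ≤ j) :
    φ (M.d (M.v i)) = 0 := by
  obtain ⟨χ, hχ⟩ := M.exists_aug
  have e : ∀ a ∈ Algebra.adjoin ℚ (M.v '' {l | l < i}), φ a = algebraMap ℚ E (χ a) := by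
    intro a ha
    induction ha using Algebra.adjoin_induction with
    | mem x hx =>
      obtain ⟨l, hl, rfl⟩ := hx
      rw [hφ l (by have : l.val < i.val := hl; omega), hχ, map_zero]
    | algebraMap c => simp
    | add x y _ _ hx hy => rw [map_add, map_add, hx, hy, map_add]
    | mul x y _ _ hx hy => rw [map_mul, map_mul, hx, hy, map_mul]
  rw [e _ (M.d_v_adjoin i), M.kill χ hχ, map_zero]
  exact M.pj_zero_d _

theorem q_d_v (j : ℕ) (i : Fin M.r) (hi : i.val ≤ j) : M.q j (M.d (M.v i)) = 0 :=
  M.kill_d (M.q j) (fun i hi => by rw [q_v, if_pos hi]) i hi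

theorem q_d (j : ℕ) (a) : M.q j (M.d a) = M.q j (M.d (M.q j a)) := by
  refine der_ext (M.q j) ((M.q j).comp M.ep) ((M.q j).toLinearMap.comp M.d)
    ((M.q j).toLinearMap.comp (M.d.comp (M.q j).toLinearMap)) ?_ ?_ ?_ a
  · intro a b; simp [M.isDiff.mul]
  · intro a b; simp [M.isDiff.mul, M.q_q, M.ep_q]
  · intro i
    simp only [LinearMap.comp_apply, AlgHom.toLinearMap_apply]
    rw [q_v]
    split_ifs with h
    · rw [q_d_v _ _ _ h.le]; simp
    · rfl

/-- The constant coefficient of a polynomial, as an algebra homomorphism. -/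
noncomputable def _root_.RHT.coeffZero (E : Type) [Ring E] [Algebra ℚ E] : E[X] →ₐ[ℚ] E :=
  AlgHom.ofLinearMap ((Polynomial.lcoeff E 0).restrictScalars ℚ) (by simp)
    (fun p q => by simp [mul_coeff_zero])

@[simp] theorem _root_.RHT.coeffZero_apply {E : Type} [Ring E] [Algebra ℚ E] (p : E[X]) :
    coeffZero E p = p.coeff 0 := rfl

/-- Even generators are not zero divisors. -/
theorem even_nzd (j : Fin M.r) (hj : Even (M.deg j)) {b : M.A} (h : M.v j * b = 0) : b = 0 := by
  obtain ⟨θ, hθ⟩ := M.lift M.A[X] (Polynomial.mapAlgHom M.ep) M.isSuper.poly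
    (fun i => if i = j then X + C (M.v j) else C (M.v i)) (fun i => by
      split_ifs with hi
      · subst hi; simp [ep_v, hj.neg_one_pow]
      · simp only [coe_mapAlgHom, map_C, RingHom.coe_coe, ep_v]; rw [smul_C])
  have h1 := congrArg θ h
  rw [map_mul, hθ, if_pos rfl, map_zero, (monic_X_add_C _).mul_right_eq_zero_iff] at h1
  have h2 : (coeffZero M.A).comp θ = AlgHom.id ℚ _ := hom_ext fun i => by
    simp only [AlgHom.comp_apply, hθ]
    split_ifs with hi
    · subst hi; simp
    · simp
  have := DFunLike.congr_fun h2 b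
  simpa [h1] using this.symm

/-- Elements not involving the odd generator `v_j` are not annihilated by it. -/
theorem odd_nzd (j : Fin M.r) (hj : Odd (M.deg j)) {b : M.A} (hb : M.q (j + 1) b = b)
    (h : M.v j * b = 0) : b = 0 := by
  obtain ⟨θ, hθ⟩ := M.lift (OddExt M.ep) (OddExt.eps M.ep) (OddExt.isSuper M.isSuper)
    (fun i => ⟨M.v i, if i = j then 1 else 0⟩) (fun i => by
      ext
      · simp [ep_v]
      · split_ifs with hi
        · subst hi; simp [hj.neg_one_pow]
        · simp)
  have h1 := congrArg θ h
  rw [map_mul, hθ, map_zero] at h1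
  have h2 : (OddExt.fstHom M.ep).comp θ = AlgHom.id ℚ _ := hom_ext fun i => by
    simp [AlgHom.comp_apply, hθ]
  have h3 : ((θ : M.A →ₐ[ℚ] OddExt M.ep).comp (M.q (j + 1))) =
      (AlgHom.ofLinearMap
        { toFun := fun a => (⟨a, 0⟩ : OddExt M.ep)
          map_add' := fun a b => by ext <;> simp
          map_smul' := fun c a => by ext <;> simp }
        (by ext <;> simp) (fun a b => by ext <;> simp)).comp (M.q (j + 1)) := hom_ext fun i => by
    simp only [AlgHom.comp_apply, q_v]
    split_ifs with hi
    · rw [map_zero, map_zero]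
    · rw [hθ, if_neg (by rintro rfl; omega)]; rfl
  have h4 : (θ b).fst = b := DFunLike.congr_fun h2 b
  have h5 : (θ b).snd = 0 := by
    have := congrArg OddExt.snd (DFunLike.congr_fun h3 b)
    simp only [AlgHom.comp_apply, hb] at this
    exact this
  have := congrArg OddExt.snd h1
  simpa [h4, h5] using this

/-- The support condition on the quotient by `v_j`: it may involve `v_j` itself only if `v_j`
is even. -/
def co (j : Fin M.r) : ℕ := if Even (M.deg j) then j else j + 1

theorem co_even {j : Fin M.r} (h : Even (M.deg j)) : M.co j = j := if_pos h
theorem co_odd {j : Fin M.r} (h : Odd (M.deg j)) : M.co j = j + 1 :=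
  if_neg (Nat.not_even_iff_odd.2 h)
theorem le_co (j : Fin M.r) : (j : ℕ) ≤ M.co j := by unfold co; split_ifs <;> omega
theorem co_le (j : Fin M.r) : M.co j ≤ j + 1 := by unfold co; split_ifs <;> omega

theorem v_cancel (j : Fin M.r) {b c : M.A} (hb : M.q (M.co j) b = b) (hc : M.q (M.co j) c = c)
    (h : M.v j * b = M.v j * c) : b = c := by
  rw [← sub_eq_zero, ← mul_sub] at h
  rw [← sub_eq_zero]
  rcases Nat.even_or_odd (M.deg j) with hj | hj
  · exact M.even_nzd j hj h
  · rw [M.co_odd hj] at hb hc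
    exact M.odd_nzd j hj (by rw [map_sub, hb, hc]) h

/-- Moving an element across `v_j`. -/
theorem mul_v (j : Fin M.r) (a : M.A) :
    a * M.v j = M.v j * (if Even (M.deg j) then a else M.ep a) := by
  have h := M.ep_v j
  rw [neg_one_pow_smul_cases] at h
  split_ifs at h ⊢ with hj
  · exact (M.isSuper.even_comm _ a h).symm
  · rw [M.isSuper.odd_comm _ _ h, M.isSuper.invol]

theorem v_mul (j : Fin M.r) (a : M.A) :
    M.v j * a = (if Even (M.deg j) then a else M.ep a) * M.v j := by
  rw [mul_v]; split_ifs
  · rfl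
  · rw [M.isSuper.invol]

theorem v_sq (j : Fin M.r) (hj : Odd (M.deg j)) : M.v j * M.v j = 0 := by
  refine M.isSuper.odd_sq (ε := M.ep) ?_
  rw [ep_v, hj.neg_one_pow, neg_one_smul]

theorem exists_Q (j : Fin M.r) (a : M.A) :
    ∃ b, M.q (M.co j) b = b ∧ M.q j a = M.q (j + 1) a + M.v j * b := by
  have ha : a ∈ Algebra.adjoin ℚ (Set.range M.v) := M.gen ▸ Algebra.mem_top
  induction ha using Algebra.adjoin_induction with
  | mem x hx =>
    obtain ⟨i, rfl⟩ := hx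
    by_cases hi : i = j
    · subst hi
      refine ⟨1, map_one _, ?_⟩
      rw [q_v, q_v, if_neg (lt_irrefl _), if_pos (Nat.lt_succ_self _)]; simp
    · refine ⟨0, map_zero _, ?_⟩
      have : (i : ℕ) ≠ j := fun h => hi (Fin.ext h)
      rw [q_v, q_v]
      split_ifs <;> first | omega | simp
  | algebraMap c => exact ⟨0, map_zero _, by simp⟩
  | add x y _ _ hx hy =>
    obtain ⟨b, hb, hb'⟩ := hx
    obtain ⟨c, hc, hc'⟩ := hy
    exact ⟨b + c, by rw [map_add, hb, hc], by rw [map_add, hb', hc', map_add, mul_add]; abel⟩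
  | mul x y _ _ hx hy =>
    obtain ⟨b, hb, hb'⟩ := hx
    obtain ⟨c, hc, hc'⟩ := hy
    rcases Nat.even_or_odd (M.deg j) with hj | hj
    · rw [M.co_even hj] at *
      refine ⟨b * M.q j y + M.q (j + 1) x * c, ?_, ?_⟩
      · rw [map_add, map_mul, map_mul, hb, hc, M.q_q le_rfl, M.q_q (Nat.le_succ _)]
      · have := M.mul_v j (M.q (j + 1) x)
        rw [if_pos hj] at this
        rw [map_mul, hb', map_mul, mul_add, ← mul_assoc _ _ c, ← this, add_mul]
        nth_rewrite 1 [hc']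
        simp only [mul_add, mul_assoc]; abel
    · rw [M.co_odd hj] at *
      refine ⟨b * M.q (j + 1) y + M.ep (M.q (j + 1) x) * c, ?_, ?_⟩
      · rw [map_add, map_mul, map_mul, hb, hc, M.q_q le_rfl, M.ep_q, M.q_q le_rfl]
      · have h1 := M.mul_v j (M.q (j + 1) x)
        have h2 := M.mul_v j b
        rw [if_neg (Nat.not_even_iff_odd.2 hj)] at h1 h2
        have h3 : M.v j * b * (M.v j * c) = 0 := by
          rw [← mul_assoc, mul_assoc _ b, h2, ← mul_assoc, M.v_sq j hj]; simp
        rw [map_mul, hb', hc', map_mul, mul_add, add_mul, add_mul, h3, mul_add, ← mul_assoc _ (M.v j) c, h1]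
        simp only [mul_assoc]; abel

theorem Q_unique (j : Fin M.r) {a b b' c c' : M.A} (hb : M.q (M.co j) b = b)
    (hb' : M.q (M.co j) b' = b')
    (h : M.q j a = M.q (j + 1) c + M.v j * b) (h' : M.q j a = M.q (j + 1) c' + M.v j * b') :
    b = b' ∧ M.q (j + 1) c = M.q (j + 1) c' := by
  have key : ∀ {b c}, M.q j a = M.q (j + 1) c + M.v j * b → M.q (j + 1) a = M.q (j + 1) c := by
    intro b c h
    have := congrArg (M.q (j + 1)) h
    rw [M.q_q' (Nat.le_succ _), map_add, map_mul, q_v, if_pos (Nat.lt_succ_self _), zero_mul,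
      add_zero, M.q_q le_rfl] at this
    exact this
  have h1 := (key h).symm.trans (key h')
  refine ⟨M.v_cancel j hb hb' ?_, h1⟩
  rw [h, h1] at h'
  exact add_left_cancel h'

/-- The quotient of `q_j a - q_{j+1} a` by `v_j`, as a linear map. -/
noncomputable def Q (j : Fin M.r) : M.A →ₗ[ℚ] M.A :=
  have h := fun a => (M.exists_Q j a).choose_spec
  { toFun := fun a => (M.exists_Q j a).choose
    map_add' := fun a b => by
      refine (M.Q_unique j (h (a + b)).1 ?_ (h (a + b)).2 (c' := a + b) ?_).1
      · rw [map_add, (h a).1, (h b).1]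
      · have e : ∀ a, M.q j a - M.q (j + 1) a = M.v j * (M.exists_Q j a).choose :=
          fun a => sub_eq_of_eq_add' (h a).2
        rw [mul_add, ← e a, ← e b]
        simp only [map_add]; abel
    map_smul' := fun c a => by
      refine (M.Q_unique j (h (c • a)).1 ?_ (h (c • a)).2 (c' := c • a) ?_).1
      · rw [RingHom.id_apply, map_smul, (h a).1]
      · have e : M.q j a - M.q (j + 1) a = M.v j * (M.exists_Q j a).choose :=
          sub_eq_of_eq_add' (h a).2
        rw [RingHom.id_apply, mul_smul_comm, ← e, smul_sub, map_smul, map_smul]; abel }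

theorem Q_mem (j : Fin M.r) (a) : M.q (M.co j) (M.Q j a) = M.Q j a :=
  (M.exists_Q j a).choose_spec.1

theorem q_eq (j : Fin M.r) (a) : M.q j a = M.q (j + 1) a + M.v j * M.Q j a :=
  (M.exists_Q j a).choose_spec.2

theorem Q_eq (j : Fin M.r) {a b c : M.A} (hb : M.q (M.co j) b = b)
    (h : M.q j a = M.q (j + 1) c + M.v j * b) : M.Q j a = b ∧ M.q (j + 1) a = M.q (j + 1) c :=
  M.Q_unique j (M.Q_mem j a) hb (M.q_eq j a) h

theorem q_Q (j : Fin M.r) (a) : M.q j (M.Q j a) = M.Q j a := by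
  rw [← Q_mem, M.q_q (M.le_co j)]

end Sys

end RHT

/-! ### Killing even generators -/

namespace RHT
open Polynomial

namespace Sys
variable (M : Sys)

theorem pj_mul_left (n : ℕ) (j : Fin M.r) (b : M.A) :
    M.pj (n + M.deg j) (M.v j * b) = M.v j * M.pj n b := by
  refine M.toCDGA.hom_induction
    (p := fun b => M.pj (n + M.deg j) (M.v j * b) = M.v j * M.pj n b) (by simp) ?_ ?_ b
  · intro i x hx
    have h := M.mul_mem (M.v_mem j) hx
    by_cases hi : i = n
    · subst hi; rw [add_comm, M.pj_of_mem h, M.pj_of_mem hx]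
    · rw [M.pj_of_mem_ne h (by omega), M.pj_of_mem_ne hx hi, mul_zero]
  · intro x y hx hy; rw [mul_add, map_add, hx, hy, map_add, mul_add]

/-- The coefficient of `v_j` in the differential of an element not involving `v_i`, `i ≤ j`,
modulo the generators of index less than `j`. -/
noncomputable def dl (j : Fin M.r) : M.A →ₗ[ℚ] M.A :=
  (M.Q j).comp (M.d.comp (M.q (j + 1)).toLinearMap)

theorem dl_def (j : Fin M.r) (b) : M.dl j b = M.Q j (M.d (M.q (j + 1) b)) := rfl

theorem dl_mem (j : Fin M.r) (b) : M.q (M.co j) (M.dl j b) = M.dl j b := M.Q_mem j _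

theorem dl_mem_odd {j : Fin M.r} (hj : Odd (M.deg j)) (b) :
    M.q (j + 1) (M.dl j b) = M.dl j b := M.co_odd hj ▸ M.dl_mem j b

theorem q_dl (j : Fin M.r) (b) : M.q j (M.dl j b) = M.dl j b := M.q_Q j _

theorem q_d_q (j : Fin M.r) (b) :
    M.q j (M.d (M.q (j + 1) b)) = M.q (j + 1) (M.d b) + M.v j * M.dl j b := by
  rw [q_eq, ← q_d, dl_def]

theorem dl_eq (j : Fin M.r) {b c x : M.A} (hc : M.q (M.co j) c = c)
    (h : M.q j (M.d (M.q (j + 1) b)) = M.q (j + 1) x + M.v j * c) : M.dl j b = c :=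
  (M.Q_eq j hc h).1

theorem dl_q (j : Fin M.r) (b) : M.dl j (M.q (j + 1) b) = M.dl j b := by
  rw [dl_def, M.q_q le_rfl, dl_def]

theorem dl_mul (j : Fin M.r) (a b) : M.dl j (a * b) = M.dl j a * M.q (j + 1) b +
    (if Even (M.deg j) then M.ep (M.q (j + 1) a) else M.q (j + 1) a) * M.dl j b := by
  refine M.dl_eq j (x := M.d (a * b)) ?_ ?_
  · split_ifs <;>
    simp only [map_add, map_mul, M.dl_mem, M.q_q (M.co_le j), ← M.ep_q]
  · have h := M.mul_v j (M.ep (M.q (j + 1) a))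
    rw [M.isSuper.invol] at h
    have hq : (j : ℕ) ≤ j + 1 := by omega
    rw [map_mul, M.isDiff.mul, map_add, map_mul, map_mul, q_d_q, q_d_q, M.q_q hq,
      ← M.ep_q j, M.q_q hq, M.isDiff.mul, map_add, map_mul, map_mul, mul_add (M.v j),
      ← mul_assoc (M.v j) (ite _ _ _), ← h, ← M.ep_q, mul_add, add_mul]
    simp only [mul_assoc]; abel

theorem dl_ep (j : Fin M.r) (b) :
    M.dl j (M.ep b) = if Even (M.deg j) then -M.ep (M.dl j b) else M.ep (M.dl j b) := by
  refine M.dl_eq j (x := M.d (M.ep b)) ?_ ?_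
  · split_ifs <;> simp only [map_neg, ← M.ep_q, M.dl_mem]
  · rw [← M.ep_q, M.isDiff.eps, map_neg, ← M.ep_q, q_d_q, map_add, map_mul, M.ep_q, ep_v,
      M.isDiff.eps, neg_one_pow_smul_cases]
    split_ifs <;> simp <;> abel

theorem v_dl_d (j : Fin M.r) (b) :
    M.v j * M.dl j (M.d b) = -(M.ep (M.v j) * M.q j (M.d (M.dl j b))) := by
  have h1 : M.q j (M.d (M.q j (M.d (M.q (j + 1) b)))) = 0 := by rw [← q_d, M.d_sq, map_zero]
  rw [q_d_q, map_add, map_add, q_d_q, M.d_sq, map_zero, zero_add, M.isDiff.mul, map_add, map_mul,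
    map_mul, q_d_v _ _ _ le_rfl, zero_mul, zero_add, ← M.ep_q, q_v, if_neg (lt_irrefl _)] at h1
  exact eq_neg_of_add_eq_zero_left h1

theorem dl_d_even {j : Fin M.r} (hj : Even (M.deg j)) (b) :
    M.q j (M.d (M.dl j b)) = -M.dl j (M.d b) := by
  have h := M.v_dl_d j b
  rw [ep_v, hj.neg_one_pow, one_smul, ← mul_neg] at h
  have := M.v_cancel j (M.dl_mem j _) (by rw [M.co_even hj, map_neg, M.q_q le_rfl]) h
  rw [this, neg_neg]

theorem dl_d_odd {j : Fin M.r} (hj : Odd (M.deg j)) (b) :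
    M.dl j (M.d b) = M.q (j + 1) (M.d (M.dl j b)) := by
  have h := M.v_dl_d j b
  rw [ep_v, hj.neg_one_pow, neg_one_smul, neg_mul, neg_neg] at h
  nth_rewrite 2 [← M.dl_mem_odd hj] at h
  rw [q_d_q, mul_add, ← mul_assoc (M.v j) (M.v j), M.v_sq j hj, zero_mul, add_zero] at h
  exact M.v_cancel j (M.dl_mem j _) (by rw [M.co_odd hj, M.q_q le_rfl]) h

theorem pj_dl (j : Fin M.r) (m : ℕ) (b) :
    M.pj m (M.dl j b) = M.dl j (M.pj (m + (M.deg j - 1)) b) := by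
  have hd := M.deg_ge j
  refine (M.dl_eq j (x := M.d (M.pj (m + (M.deg j - 1)) b)) ?_ ?_).symm
  · rw [← pj_q, dl_mem]
  · have h := congrArg (M.pj (m + M.deg j)) (M.q_d_q j b)
    rw [map_add, pj_mul_left, pj_q, pj_q] at h
    have e : m + M.deg j = m + (M.deg j - 1) + 1 := by omega
    rw [e, M.pj_d, M.pj_d, pj_q] at h
    exact h

theorem pj_q_low {j : Fin M.r} {n : ℕ} (h0 : 0 < n) (hn : n < M.deg j) (b) :
    M.q (j + 1) (M.pj n b) = 0 := by
  have : (M.q (j + 1)).toLinearMap.comp (M.pj n) = 0 := lin_ext fun l => by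
    simp only [LinearMap.comp_apply, AlgHom.toLinearMap_apply, LinearMap.zero_apply]
    by_cases h : (l.map M.deg).sum = n
    · have hm := M.mon_mem l
      rw [h] at hm
      rw [M.pj_of_mem hm]
      cases l with
      | nil => simp at h; omega
      | cons i l =>
        have : i < j := by
          by_contra hij
          have := M.mono (not_lt.1 hij)
          simp at h; omega
        rw [mon_cons, map_mul, q_v, if_pos (by have : i.val < j.val := this; omega), zero_mul]
    · rw [M.pj_of_mem_ne (M.mon_mem l) h, map_zero]
  exact DFunLike.congr_fun this b

theorem pj_zero_dl (j : Fin M.r) (b) : M.pj 0 (M.dl j b) = 0 := by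
  have hd := M.deg_ge j
  rw [pj_dl, ← dl_q, M.pj_q_low (by omega) (by omega), map_zero]

theorem dl_nilp (j : Fin M.r) (b) : ∃ N, ∀ n, N ≤ n → ((M.dl j) ^ n) b = 0 := by
  obtain ⟨N, hN, -⟩ := M.exists_sum_pj b
  have key : ∀ n m, N ≤ m + n → M.pj m (((M.dl j) ^ n) b) = 0 := by
    intro n
    induction n with
    | zero => intro m hm; exact hN m (by omega)
    | succ n ih =>
      intro m hm
      have := M.deg_ge j
      rw [pow_succ', Module.End.mul_apply, pj_dl, ih _ (by omega), map_zero]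
  exact ⟨N, fun n hn => M.pj_ext fun m => by rw [key n m (by omega), map_zero]⟩

/-- A comparison algebra certifying that the quotient of `M` by the first `j` generators has
nilpotent cohomology: a super-commutative differential algebra with a multiplicative filtration
whose deep part lies in an acyclic ideal. It is obtained from `M` by adjoining variables
that make the first `j` generators exact. -/
structure Killer (j : ℕ) : Type 1 where
  E : Type
  [ringE : Ring E]
  [algE : Algebra ℚ E]
  ε : E →ₐ[ℚ] E
  super : IsSuper ε
  D : E →ₗ[ℚ] E
  isd : IsDiff ε D
  F : ℕ → Submodule ℚ E
  F_zero : F 0 = ⊤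
  F_mul : ∀ p k x y, x ∈ F p → y ∈ F k → x * y ∈ F (p + k)
  F_ε : ∀ p x, x ∈ F p → ε x ∈ F p
  J : Submodule ℚ E
  J_mul : ∀ x z, z ∈ J → x * z ∈ J
  acyc : ∀ z ∈ J, D z = 0 → ∃ u ∈ J, D u = z
  N : ℕ
  F_le : F N ≤ J
  σ : M.A →ₐ[ℚ] E
  σ_d : ∀ a, D (σ a) = σ (M.d a)
  σ_ε : ∀ a, ε (σ a) = σ (M.ep a)
  σ_kill : ∀ i : Fin M.r, i.val < j → σ (M.v i) = 0
  σ_F : ∀ i, σ (M.v i) ∈ F 1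
  π : E →ₐ[ℚ] M.A
  π_σ : ∀ a, π (σ a) = M.q j a
  π_D : ∀ x, π (D x) = M.q j (M.d (π x))

attribute [instance] Killer.ringE Killer.algE

namespace Killer
variable {M} {j : ℕ} (K : M.Killer j)

theorem σ_q (a) : K.σ (M.q j a) = K.σ a := by
  have : K.σ.comp (M.q j) = K.σ := hom_ext fun i => by
    rw [AlgHom.comp_apply, q_v]
    split_ifs with h
    · rw [map_zero, K.σ_kill i h]
    · rfl
  exact DFunLike.congr_fun this a

theorem σ_mem (a) (ha : M.pj 0 a = 0) : K.σ a ∈ K.F 1 := by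
  have : K.σ (a - M.pj 0 a) ∈ K.F 1 := by
    refine mon_induction (p := fun a => K.σ (a - M.pj 0 a) ∈ K.F 1) ?_ ?_ ?_ ?_ a
    · intro l
      cases l with
      | nil => rw [mon_nil, M.pj_of_mem M.one_mem]; simp
      | cons i l =>
        have : M.pj 0 (M.mon (i :: l)) = 0 := M.pj_of_mem_ne (M.mon_mem _) (by
          have := M.deg_ge i; simp; omega)
        rw [this, sub_zero, mon_cons, map_mul]
        exact K.F_mul 1 0 _ _ (K.σ_F i) (K.F_zero ▸ Submodule.mem_top)
    · simp
    · intro x y hx hy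
      rw [map_add, add_sub_add_comm, map_add]; exact add_mem hx hy
    · intro c x hx
      rw [map_smul, ← smul_sub, map_smul]; exact Submodule.smul_mem _ _ hx
  simpa [ha] using this

theorem pow_mem {x : K.E} (hx : x ∈ K.F 1) (n : ℕ) : x ^ n ∈ K.F n := by
  induction n with
  | zero => rw [K.F_zero]; exact Submodule.mem_top
  | succ n ih => rw [pow_succ]; exact K.F_mul _ _ _ _ ih hx

theorem D_v (i : Fin M.r) (hi : i.val = j) : K.D (K.σ (M.v i)) = 0 := by
  rw [K.σ_d]; exact M.kill_d K.σ K.σ_kill i hi.le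

/-- Some power of an even generator is exact modulo the earlier generators. -/
theorem power {i : Fin M.r} (K : M.Killer i) (hi : Even (M.deg i)) :
    ∃ N Ψ, 0 < N ∧ M.q i Ψ = Ψ ∧ M.q i (M.d Ψ) = M.v i ^ N := by
  have hs : K.ε (K.σ (M.v i)) = K.σ (M.v i) := by
    rw [K.σ_ε, ep_v, hi.neg_one_pow, one_smul]
  have hD : ∀ n, K.D (K.σ (M.v i) ^ n) = 0 := by
    intro n
    induction n with
    | zero => rw [pow_zero]; exact IsDiff.one K.D K.isd
    | succ n ih => rw [pow_succ, K.isd.mul, ih, K.D_v i rfl, zero_mul, mul_zero, add_zero]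
  have hJ : K.σ (M.v i) ^ (K.N + 1) ∈ K.J := by
    rw [pow_succ']; exact K.J_mul _ _ (K.F_le (K.pow_mem (K.σ_F i) _))
  -- The power of `v_i` is exact in the comparison algebra; its primitive is mapped to the quotient.
  obtain ⟨u, -, hu⟩ := K.acyc _ hJ (hD _)
  refine ⟨K.N + 1, M.q i (K.π u), Nat.succ_pos _, M.q_q le_rfl _, ?_⟩
  rw [← M.q_d, ← K.π_D, hu, ← map_pow, K.π_σ, map_pow, q_v, if_neg (lt_irrefl _)]

/-- Adjoining an odd variable killing the even generator `v_i`. -/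
theorem even_step {i : Fin M.r} (K : M.Killer i) (hi : Even (M.deg i)) :
    Nonempty (M.Killer (i + 1)) := by
  have hs : K.ε (K.σ (M.v i)) = K.σ (M.v i) := by
    rw [K.σ_ε, ep_v, hi.neg_one_pow, one_smul]
  have hDs := K.D_v i rfl
  set s := K.σ (M.v i) with hs_def
  -- With `d w = s`, the image of `a` modulo `v_0, …, v_i` is corrected by `-w · dl_i a`.
  obtain ⟨σ', hσ'⟩ : ∃ σ' : M.A →ₐ[ℚ] OddExt K.ε, ∀ a,
      σ' a = ⟨K.σ (M.q (i + 1) a), -K.σ (M.dl i a)⟩ := by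
    refine ⟨AlgHom.ofLinearMap
      { toFun := fun a => ⟨K.σ (M.q (i + 1) a), -K.σ (M.dl i a)⟩
        map_add' := fun a b => by ext <;> simp; abel
        map_smul' := fun c a => by ext <;> simp } ?_ ?_, fun a => rfl⟩
    · ext
      · simp
      · have : M.dl i 1 = 0 := by
          rw [dl_def, map_one, M.d_one, map_zero]
        simp [this]
    · intro a b
      ext
      · simp
      · simp [dl_mul, hi, K.σ_ε]
        try abel
  refine ⟨{ E := OddExt K.ε, ε := OddExt.eps K.ε, super := OddExt.isSuper K.super,
            D := OddExt.diff K.D s, isd := OddExt.isDiff K.super K.isd hs hDs,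
            F := fun p =>
              { carrier := {x | x.fst ∈ K.F p ∧ x.snd ∈ K.F p}
                add_mem' := fun hx hy => ⟨add_mem hx.1 hy.1, add_mem hx.2 hy.2⟩
                zero_mem' := ⟨zero_mem _, zero_mem _⟩
                smul_mem' := fun c x hx =>
                  ⟨Submodule.smul_mem _ _ hx.1, Submodule.smul_mem _ _ hx.2⟩ }
            F_zero := ?_, F_mul := ?_, F_ε := ?_
            J :=
              { carrier := {x | x.fst ∈ K.J ∧ x.snd ∈ K.J}
                add_mem' := fun hx hy => ⟨add_mem hx.1 hy.1, add_mem hx.2 hy.2⟩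
                zero_mem' := ⟨zero_mem _, zero_mem _⟩
                smul_mem' := fun c x hx =>
                  ⟨Submodule.smul_mem _ _ hx.1, Submodule.smul_mem _ _ hx.2⟩ }
            J_mul := ?_, acyc := ?_, N := K.N, F_le := fun x hx => ⟨K.F_le hx.1, K.F_le hx.2⟩
            σ := σ', σ_d := ?_, σ_ε := ?_, σ_kill := ?_, σ_F := ?_
            π := (M.q (i + 1)).comp (K.π.comp (OddExt.fstHom K.ε)), π_σ := ?_, π_D := ?_ }⟩
  · rw [eq_top_iff]; intro x _; exact ⟨K.F_zero ▸ Submodule.mem_top, K.F_zero ▸ Submodule.mem_top⟩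
  · intro p k x y hx hy
    exact ⟨K.F_mul _ _ _ _ hx.1 hy.1,
      add_mem (K.F_mul _ _ _ _ (K.F_ε _ _ hx.1) hy.2) (K.F_mul _ _ _ _ hx.2 hy.1)⟩
  · intro p x hx; exact ⟨K.F_ε _ _ hx.1, neg_mem (K.F_ε _ _ hx.2)⟩
  · intro x z hz
    exact ⟨K.J_mul _ _ hz.1, add_mem (K.J_mul _ _ hz.2) (K.J_mul _ _ hz.1)⟩
  · intro z hz h
    have h1 : K.D z.fst + s * z.snd = 0 := congrArg OddExt.fst h
    have h2 : K.D z.snd = 0 := neg_eq_zero.1 (congrArg OddExt.snd h)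
    obtain ⟨y, hy, hyz⟩ := K.acyc _ hz.2 h2
    obtain ⟨x, hx, hxz⟩ := K.acyc (z.fst + s * y) (add_mem hz.1 (K.J_mul _ _ hy)) (by
      rw [map_add, K.isd.mul, hDs, hs, hyz, zero_mul, zero_add, h1])
    refine ⟨⟨x, -y⟩, ⟨hx, neg_mem hy⟩, ?_⟩
    ext
    · simp [hxz]
    · simp [hyz]
  · intro a
    rw [hσ', hσ']
    ext
    · simp only [OddExt.diff_fst, K.σ_d]
      rw [← K.σ_q (M.d _), M.q_d_q, map_add, map_mul, mul_neg, ← hs_def]; abel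
    · simp only [OddExt.diff_snd, map_neg, K.σ_d]
      rw [← K.σ_q (M.d _), M.dl_d_even hi, map_neg]; simp
  · intro a
    rw [hσ', hσ']
    ext
    · simp [K.σ_ε, M.ep_q]
    · simp [K.σ_ε, dl_ep, hi]
  · intro k hk
    rw [hσ', dl_def, q_v, if_pos hk]
    ext <;> simp
  · intro k
    rw [hσ']
    refine ⟨K.σ_mem _ ?_, neg_mem (K.σ_mem _ (M.pj_zero_dl i _))⟩
    have := M.deg_ge k
    rw [pj_q, M.pj_of_mem_ne (M.v_mem k) (by omega), map_zero]
  · intro a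
    simp only [AlgHom.comp_apply, OddExt.fstHom_apply, hσ', K.π_σ, M.q_q' (Nat.le_succ _)]
    exact M.q_q le_rfl _
  · intro x
    simp only [AlgHom.comp_apply, OddExt.fstHom_apply, OddExt.diff_fst, map_add, map_mul, K.π_D,
      K.π_σ, hs_def, q_v, M.q_q' (Nat.le_succ _)]
    rw [← M.q_d]; simp [q_v]

end Killer
end Sys

end RHT

/-! ### Killing odd generators -/

namespace RHT
open Polynomial

/-- The linear map to polynomials with prescribed, locally finite, coefficient maps. -/
theorem exists_ofCoeff {A E : Type} [Ring A] [Algebra ℚ A] [Ring E] [Algebra ℚ E]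
    (e : ℕ → A →ₗ[ℚ] E) (he : ∀ a, ∃ N, ∀ n, N ≤ n → e n a = 0) :
    ∃ f : A →ₗ[ℚ] E[X], ∀ a n, (f a).coeff n = e n a := by
  choose N hN using he
  have hc : ∀ a n, (∑ i ∈ Finset.range (N a), monomial i (e i a)).coeff n = e n a := by
    intro a n
    simp only [finsetSum_coeff, coeff_monomial, Finset.sum_ite_eq', Finset.mem_range]
    split_ifs with h
    · rfl
    · rw [hN a n (by omega)]
  exact ⟨{ toFun := fun a => ∑ i ∈ Finset.range (N a), monomial i (e i a)
           map_add' := fun a b => by ext n; rw [coeff_add, hc, hc, hc, map_add]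
           map_smul' := fun c a => by ext n; rw [coeff_smul, hc, hc, map_smul]; rfl }, hc⟩

namespace Sys
variable (M : Sys)

/-- The divided powers of `-dl j`, after the projection `q (j + 1)`. -/
noncomputable def ex (j : Fin M.r) (n : ℕ) : M.A →ₗ[ℚ] M.A :=
  ((-1 : ℚ) ^ n / n.factorial) • ((M.dl j) ^ n).comp (M.q (j + 1)).toLinearMap

theorem ex_zero (j : Fin M.r) (a) : M.ex j 0 a = M.q (j + 1) a := by simp [ex]

theorem ex_succ (j : Fin M.r) (n : ℕ) (a) :
    M.ex j (n + 1) a * ((n : M.A) + 1) = -M.dl j (M.ex j n a) := by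
  have e : ∀ x : M.A, x * ((n : M.A) + 1) = ((n : ℚ) + 1) • x := fun x => by
    rw [Algebra.smul_def, map_add, map_natCast, map_one, ← Nat.cast_succ,
      (Nat.cast_commute _ _).eq]
  rw [e]
  simp only [ex, LinearMap.smul_apply, LinearMap.comp_apply, AlgHom.toLinearMap_apply, pow_succ',
    Module.End.mul_apply, map_smul, smul_smul, ← neg_smul]
  congr 1
  have : (n : ℚ) + 1 ≠ 0 := by positivity
  rw [Nat.factorial_succ]; push_cast; field_simp

theorem q_ex {j : Fin M.r} (hj : Odd (M.deg j)) (n : ℕ) (a) :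
    M.q (j + 1) (M.ex j n a) = M.ex j n a := by
  simp only [ex, LinearMap.smul_apply, LinearMap.comp_apply, AlgHom.toLinearMap_apply, map_smul]
  congr 1
  cases n with
  | zero => exact M.q_q le_rfl a
  | succ n => rw [pow_succ', Module.End.mul_apply, dl_mem_odd M hj]

theorem ex_d {j : Fin M.r} (hj : Odd (M.deg j)) (n : ℕ) (a) :
    M.ex j n (M.d a) = M.q (j + 1) (M.d (M.ex j n a)) := by
  simp only [ex, LinearMap.smul_apply, LinearMap.comp_apply, AlgHom.toLinearMap_apply, map_smul]
  congr 1
  induction n with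
  | zero => exact M.q_d _ _
  | succ n ih => rw [pow_succ', Module.End.mul_apply, ih, dl_q, dl_d_odd M hj]; rfl

theorem ex_ep {j : Fin M.r} (hj : Odd (M.deg j)) (n : ℕ) (a) :
    M.ex j n (M.ep a) = M.ep (M.ex j n a) := by
  simp only [ex, LinearMap.smul_apply, LinearMap.comp_apply, AlgHom.toLinearMap_apply, map_smul]
  congr 1
  induction n with
  | zero => exact (M.ep_q _ _).symm
  | succ n ih =>
    rw [pow_succ', Module.End.mul_apply, ih, dl_ep, if_neg (Nat.not_even_iff_odd.2 hj)]; rfl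

/-- For `v_j` odd, `a ↦ exp(-X dl_j) (q_{j+1} a)` is an algebra homomorphism, because `dl_j` is then
an even derivation. -/
theorem exists_exp {j : Fin M.r} (hj : Odd (M.deg j)) :
    ∃ f : M.A →ₐ[ℚ] M.A[X], ∀ a n, (f a).coeff n = M.ex j n a := by
  obtain ⟨f, hf⟩ := exists_ofCoeff (M.ex j) fun a => by
    obtain ⟨N, hN⟩ := M.dl_nilp j (M.q (j + 1) a)
    exact ⟨N, fun n hn => by simp [ex, hN n hn]⟩
  have hdl : ∀ a, derivative (f a) = -polyMap (M.dl j) (f a) := fun a => by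
    ext n; rw [coeff_derivative, coeff_neg, coeff_polyMap, hf, hf, ex_succ]
  have uniq : ∀ p p' : M.A[X], derivative p = -polyMap (M.dl j) p →
      derivative p' = -polyMap (M.dl j) p' → p.coeff 0 = p'.coeff 0 → p = p' := by
    intro p p' h h' h0
    ext n
    induction n with
    | zero => exact h0
    | succ n ih =>
      have h1 := congrArg (fun p => p.coeff n) h
      have h2 := congrArg (fun p => p.coeff n) h'
      simp only [coeff_derivative, coeff_neg, coeff_polyMap] at h1 h2
      rw [ih, ← h2] at h1
      have e : ∀ x : M.A, x * ((n : M.A) + 1) = ((n : ℚ) + 1) • x := fun x => by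
        rw [Algebra.smul_def, map_add, map_natCast, map_one, ← Nat.cast_succ,
          (Nat.cast_commute _ _).eq]
      rw [e, e] at h1
      exact smul_right_injective _ (by positivity : (n : ℚ) + 1 ≠ 0) h1
  have hone : M.dl j 1 = 0 := by rw [dl_def, map_one, M.d_one, map_zero]
  refine ⟨AlgHom.ofLinearMap f ?_ ?_, hf⟩
  · refine uniq _ _ (hdl 1) ?_ (by rw [hf, ex_zero, map_one, coeff_one_zero])
    ext n
    simp only [derivative_one, coeff_zero, coeff_neg, coeff_polyMap, coeff_one]
    split_ifs <;> simp [hone]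
  · intro a b
    refine uniq _ _ (hdl _) ?_ (by rw [mul_coeff_zero, hf, hf, hf, ex_zero, ex_zero, ex_zero,
      map_mul])
    rw [derivative_mul, hdl, hdl]
    ext n
    simp only [coeff_add, coeff_neg, neg_mul, mul_neg, coeff_mul, coeff_polyMap, hf, map_sum,
      dl_mul, if_neg (Nat.not_even_iff_odd.2 hj), M.q_ex hj, Finset.sum_add_distrib]
    abel

namespace Killer
variable {M}

/-- Adjoining an even variable killing the odd generator `v_i`. -/
theorem odd_step {i : Fin M.r} (K : M.Killer i) (hi : Odd (M.deg i)) :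
    Nonempty (M.Killer (i + 1)) := by
  have hs : K.ε (K.σ (M.v i)) = -K.σ (M.v i) := by
    rw [K.σ_ε, ep_v, hi.neg_one_pow, neg_one_smul, map_neg]
  have hDs := K.D_v i rfl
  set s := K.σ (M.v i) with hs_def
  obtain ⟨f, hf⟩ := M.exists_exp hi
  have hσ' : ∀ a n, (((mapAlgHom K.σ).comp f) a).coeff n = K.σ (M.ex i n a) := by
    intro a n; simp [hf]
  set σ' := (mapAlgHom K.σ).comp f
  have hdeg : ∀ z : K.E[X], ∃ n, ∀ k, n ≤ k → z.coeff k = 0 := fun z =>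
    ⟨z.natDegree + 1, fun k hk => coeff_eq_zero_of_natDegree_lt (by omega)⟩
  refine ⟨{ E := K.E[X], ε := mapAlgHom K.ε, super := K.super.poly,
            D := polyDiff K.D s, isd := isDiff_poly K.super K.isd hs hDs,
            F := fun p =>
              { carrier := {x | ∀ n, x.coeff n ∈ K.F p}
                add_mem' := fun hx hy n => by rw [coeff_add]; exact add_mem (hx n) (hy n)
                zero_mem' := fun n => by rw [coeff_zero]; exact zero_mem _
                smul_mem' := fun c x hx n => by
                  rw [coeff_smul]; exact Submodule.smul_mem _ _ (hx n) }
            F_zero := ?_, F_mul := ?_, F_ε := ?_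
            J :=
              { carrier := {x | ∀ n, x.coeff n ∈ K.J}
                add_mem' := fun hx hy n => by rw [coeff_add]; exact add_mem (hx n) (hy n)
                zero_mem' := fun n => by rw [coeff_zero]; exact zero_mem _
                smul_mem' := fun c x hx n => by
                  rw [coeff_smul]; exact Submodule.smul_mem _ _ (hx n) }
            J_mul := ?_, acyc := ?_, N := K.N, F_le := fun x hx n => K.F_le (hx n)
            σ := σ', σ_d := ?_, σ_ε := ?_, σ_kill := ?_, σ_F := ?_
            π := (M.q (i + 1)).comp (K.π.comp (coeffZero K.E)), π_σ := ?_, π_D := ?_ }⟩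
  · rw [eq_top_iff]; intro x _ n; exact K.F_zero ▸ Submodule.mem_top
  · intro p k x y hx hy n
    rw [coeff_mul]
    exact sum_mem fun c _ => K.F_mul _ _ _ _ (hx _) (hy _)
  · intro p x hx n
    simpa using K.F_ε _ _ (hx n)
  · intro x z hz n
    rw [coeff_mul]
    exact sum_mem fun c _ => K.J_mul _ _ (hz _)
  · intro z hz h
    obtain ⟨n, hn⟩ := hdeg z
    induction n generalizing z with
    | zero => exact ⟨0, zero_mem _, by rw [map_zero]; ext k; simp [hn k]⟩
    | succ n ih =>
      have h1 := congrArg (fun p => p.coeff n) h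
      simp only [coeff_polyDiff, hn (n + 1) le_rfl, zero_mul, mul_zero, add_zero, coeff_zero] at h1
      -- The leading coefficient of a cocycle is a cocycle; subtracting the differential of a
      -- primitive times `X ^ n` lowers the degree in `X`.
      obtain ⟨u, hu, huz⟩ := K.acyc _ (hz n) h1
      have hum : ∀ k, (monomial n u : K.E[X]).coeff k ∈ K.J := fun k => by
        rw [coeff_monomial]; split_ifs
        · exact hu
        · exact zero_mem _
      have hDm : ∀ k, (polyDiff K.D s (monomial n u)).coeff k ∈ K.J := fun k => by
        rw [coeff_polyDiff, coeff_monomial]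
        refine add_mem ?_ (K.J_mul _ _ ?_)
        · split_ifs
          · rw [huz]; exact hz n
          · rw [map_zero]; exact zero_mem _
        · rw [← Nat.cast_succ, ← (Nat.cast_commute _ _).eq]
          exact K.J_mul _ _ (hum _)
      obtain ⟨w, hw, hwz⟩ := ih (z - polyDiff K.D s (monomial n u))
        (fun k => by rw [coeff_sub]; exact sub_mem (hz k) (hDm k))
        (by rw [map_sub, h, (isDiff_poly K.super K.isd hs hDs).sq, sub_zero])
        (fun k hk => by
          rw [coeff_sub, coeff_polyDiff, coeff_monomial, coeff_monomial, if_neg (by omega : n ≠ k + 1),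
            zero_mul, mul_zero, add_zero]
          split_ifs with h2
          · rw [← h2, huz, sub_self]
          · rw [map_zero, sub_zero, hn k (by omega)])
      refine ⟨w + monomial n u, fun k => ?_, by rw [map_add, hwz, sub_add_cancel]⟩
      rw [coeff_add]; exact add_mem (hw k) (hum k)
  · intro a
    ext n
    have e : K.σ (M.ex i (n + 1) a) * ((n : K.E) + 1) = -K.σ (M.dl i (M.ex i n a)) := by
      rw [← map_neg, ← ex_succ, map_mul]; simp
    rw [coeff_polyDiff, hσ', hσ', hσ', e, K.σ_d, ex_d M hi, ← K.σ_q (M.d _),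
      ← M.q_ex hi n a, M.q_d_q, M.q_ex hi, map_add, map_mul, hs_def, mul_neg]
    abel
  · intro a
    ext n
    rw [coe_mapAlgHom, coeff_map, hσ', hσ', ex_ep M hi]
    exact K.σ_ε _
  · intro k hk
    ext n
    rw [hσ', ex]
    simp [q_v, hk]
  · intro k n
    rw [hσ']
    refine K.σ_mem _ ?_
    have := M.deg_ge k
    cases n with
    | zero => rw [ex_zero, pj_q, M.pj_of_mem_ne (M.v_mem k) (by omega), map_zero]
    | succ n => simp [ex, pow_succ', M.pj_zero_dl]
  · intro a
    simp only [AlgHom.comp_apply, coeffZero_apply, K.π_σ, M.q_q' (Nat.le_succ _)]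
    rw [hσ', K.π_σ, ex_zero, M.q_q' (Nat.le_succ _)]
    exact M.q_q le_rfl _
  · intro x
    simp only [AlgHom.comp_apply, coeffZero_apply, coeff_polyDiff, map_add, map_mul, K.π_D,
      K.π_σ, hs_def, q_v, M.q_q' (Nat.le_succ _)]
    rw [← M.q_d]; simp [q_v]

end Killer
end Sys

end RHT

/-! ### Bounded cohomology and powers of even generators -/

namespace RHT
open Polynomial

namespace CDGA
variable (C : CDGA)

theorem pj_mul {i : ℕ} {x : C.A} (hx : x ∈ C.grading i) (n : ℕ) (z : C.A) :
    C.pj (i + n) (x * z) = x * C.pj n z := by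
  refine C.hom_induction (p := fun z => C.pj (i + n) (x * z) = x * C.pj n z) (by simp) ?_ ?_ z
  · intro j z hz
    have h := C.mul_mem hx hz
    by_cases hj : j = n
    · subst hj; rw [C.pj_of_mem h, C.pj_of_mem hz]
    · rw [C.pj_of_mem_ne h (by omega), C.pj_of_mem_ne hz hj, mul_zero]
  · intro x y hx hy; rw [mul_add, map_add, hx, hy, map_add, mul_add]

theorem pj_mul_lt {i : ℕ} {x : C.A} (hx : x ∈ C.grading i) {n : ℕ} (hn : n < i) (z : C.A) :
    C.pj n (x * z) = 0 := by
  refine C.hom_induction (p := fun z => C.pj n (x * z) = 0) (by simp) ?_ ?_ z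
  · intro j z hz
    exact C.pj_of_mem_ne (C.mul_mem hx hz) (by omega)
  · intro x y hx hy; rw [mul_add, map_add, hx, hy, add_zero]

/-- The cohomology vanishes in degrees at least `N`. -/
def Vanish (N : ℕ) : Prop := ∀ i, N ≤ i → ∀ x ∈ C.grading i, C.d x = 0 → ∃ y, C.d y = x

end CDGA

namespace Sys
variable (M : Sys)

theorem exists_scalar {x : M.A} (hx : x ∈ M.grading 0) : ∃ c : ℚ, x = c • 1 := by
  have : ∀ x, ∃ c : ℚ, M.pj 0 x = c • 1 := by
    refine mon_induction (fun l => ?_) ⟨0, by simp⟩ ?_ ?_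
    · by_cases h : (l.map M.deg).sum = 0
      · rw [M.deg_zero_of_mon h]; exact ⟨1, by rw [mon_nil, M.pj_of_mem M.one_mem, one_smul]⟩
      · exact ⟨0, by rw [M.pj_of_mem_ne (M.mon_mem l) h, zero_smul]⟩
    · rintro x y ⟨c, hc⟩ ⟨c', hc'⟩; exact ⟨c + c', by rw [map_add, hc, hc', add_smul]⟩
    · rintro a x ⟨c, hc⟩; exact ⟨a * c, by rw [map_smul, hc, mul_smul]⟩
  obtain ⟨c, hc⟩ := this x
  exact ⟨c, by rw [← hc, M.pj_of_mem hx]⟩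

/-- If the cohomology of `M` is bounded, `M` itself is a killer for no generators. -/
theorem killer_zero {N : ℕ} (hN : M.toCDGA.Vanish N) : Nonempty (M.Killer 0) := by
  -- `W` is a complement of the cocycles in degree `N`; with it, the ideal `J` of elements of degree
  -- at least `N` becomes acyclic also in its lowest degrees.
  obtain ⟨W', hW'⟩ := Submodule.exists_isCompl
    ((LinearMap.ker M.d).comap (M.grading N).subtype)
  set W := W'.map (M.grading N).subtype with hW
  have hWN : W ≤ M.grading N := by
    rintro _ ⟨y, _, rfl⟩; exact y.2
  have hWZ : ∀ x ∈ W, M.d x = 0 → x = 0 := by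
    rintro _ ⟨y, hy, rfl⟩ h
    have : y ∈ ((LinearMap.ker M.d).comap (M.grading N).subtype) ⊓ W' := ⟨h, hy⟩
    rw [hW'.inf_eq_bot, Submodule.mem_bot] at this
    rw [this]; rfl
  have hWs : ∀ x ∈ M.grading N, ∃ w ∈ W, M.d w = M.d x := by
    intro x hx
    have : (⟨x, hx⟩ : M.grading N) ∈ ((LinearMap.ker M.d).comap (M.grading N).subtype) ⊔ W' := by
      rw [hW'.sup_eq_top]; trivial
    obtain ⟨a, ha, b, hb, hab⟩ := Submodule.mem_sup.1 this
    refine ⟨b, ⟨b, hb, rfl⟩, ?_⟩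
    have h2 : (a : M.A) + b = x := congrArg Subtype.val hab
    have h3 : M.d (a : M.A) = 0 := ha
    rw [← h2, map_add, h3, zero_add]
  let J : Submodule ℚ M.A :=
    { carrier := {x | (∀ n < N, M.pj n x = 0) ∧ M.pj N x ∈ W}
      add_mem' := fun hx hy => ⟨fun n hn => by rw [map_add, hx.1 n hn, hy.1 n hn, add_zero],
        by rw [map_add]; exact add_mem hx.2 hy.2⟩
      zero_mem' := ⟨fun n _ => map_zero _, by rw [map_zero]; exact zero_mem _⟩
      smul_mem' := fun c x hx => ⟨fun n hn => by rw [map_smul, hx.1 n hn, smul_zero],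
        by rw [map_smul]; exact Submodule.smul_mem _ _ hx.2⟩ }
  refine ⟨{ E := M.A, ε := M.ep, super := M.isSuper, D := M.d, isd := M.isDiff,
            F := fun p =>
              { carrier := {x | ∀ n < p, M.pj n x = 0}
                add_mem' := fun hx hy n hn => by rw [map_add, hx n hn, hy n hn, add_zero]
                zero_mem' := fun n _ => map_zero _
                smul_mem' := fun c x hx n hn => by rw [map_smul, hx n hn, smul_zero] }
            F_zero := ?_, F_mul := ?_, F_ε := ?_, J := J, J_mul := ?_, acyc := ?_, N := N + 1
            F_le := ?_, σ := AlgHom.id ℚ _, σ_d := fun a => rfl, σ_ε := fun a => rfl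
            σ_kill := fun i hi => absurd hi (Nat.not_lt_zero _), σ_F := ?_
            π := AlgHom.id ℚ _, π_σ := fun a => (M.q_zero a).symm
            π_D := fun x => (M.q_zero _).symm }⟩
  · rw [eq_top_iff]; intro x _ n hn; omega
  · intro p k x y hx hy n hn
    obtain ⟨L, -, hL⟩ := M.exists_sum_pj x
    rw [← hL, Finset.sum_mul, map_sum]
    refine Finset.sum_eq_zero fun i _ => ?_
    by_cases hip : i < p
    · rw [hx i hip, zero_mul, map_zero]
    · by_cases hin : n < i
      · exact M.pj_mul_lt (M.pj_mem i x) hin y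
      · obtain ⟨m, rfl⟩ := Nat.exists_eq_add_of_le (not_lt.1 hin)
        rw [M.pj_mul (M.pj_mem i x), hy m (by omega), mul_zero]
  · intro p x hx n hn
    rw [← M.eps_pj, hx n hn, map_zero]
  · intro x z hz
    refine M.toCDGA.hom_induction (p := fun x => x * z ∈ J) (by simp) ?_ ?_ x
    · intro i x hx
      rcases Nat.eq_zero_or_pos i with rfl | hi
      · obtain ⟨c, rfl⟩ := M.exists_scalar hx
        rw [smul_mul_assoc, one_mul]; exact J.smul_mem _ hz
      · have : ∀ n ≤ N, M.pj n (x * z) = 0 := by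
          intro n hn
          by_cases hin : n < i
          · exact M.pj_mul_lt hx hin z
          · obtain ⟨m, rfl⟩ := Nat.exists_eq_add_of_le (not_lt.1 hin)
            rw [M.pj_mul hx, hz.1 m (by omega), mul_zero]
        exact ⟨fun n hn => this n hn.le, by rw [this N le_rfl]; exact zero_mem _⟩
    · intro x y hx hy; rw [add_mul]; exact add_mem hx hy
  · intro z hz h
    have hd : ∀ n, M.d (M.pj n z) = 0 := fun n => by rw [← M.pj_d, h, map_zero]
    have key : ∀ n, ∃ u ∈ J, M.d u = M.pj n z := by
      intro n
      rcases lt_trichotomy n N with hn | rfl | hn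
      · exact ⟨0, zero_mem _, by rw [hz.1 n hn, map_zero]⟩
      · exact ⟨0, zero_mem _, by rw [hWZ _ hz.2 (hd _), map_zero]⟩
      · obtain ⟨m, rfl⟩ : ∃ m, n = m + 1 := ⟨n - 1, by omega⟩
        obtain ⟨y, hy⟩ := hN (m + 1) hn.le _ (M.pj_mem (m + 1) z) (hd _)
        have hy' : M.d (M.pj m y) = M.pj (m + 1) z := by
          rw [← M.pj_d, hy, M.pj_of_mem (M.pj_mem _ _)]
        by_cases hm : m = N
        · subst hm
          obtain ⟨w, hw, hwd⟩ := hWs _ (M.pj_mem m y)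
          refine ⟨w, ⟨fun n hn => M.pj_of_mem_ne (hWN hw) (by omega), ?_⟩, hwd.trans hy'⟩
          rw [M.pj_of_mem (hWN hw)]; exact hw
        · refine ⟨_, ⟨fun n hn => M.pj_of_mem_ne (M.pj_mem m y) (by omega), ?_⟩, hy'⟩
          rw [M.pj_of_mem_ne (M.pj_mem m y) hm]; exact zero_mem _
    choose u hu hud using key
    obtain ⟨L, -, hL⟩ := M.exists_sum_pj z
    exact ⟨∑ n ∈ Finset.range L, u n, sum_mem fun n _ => hu n, by rw [map_sum]; simp only [hud, hL]⟩
  · intro x hx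
    exact ⟨fun n hn => hx n (by omega), by rw [hx N (by omega)]; exact zero_mem _⟩
  · intro i n hn
    have := M.deg_ge i
    exact M.pj_of_mem_ne (M.v_mem i) (by omega)

theorem killer {N : ℕ} (hN : M.toCDGA.Vanish N) (j : ℕ) (hj : j ≤ M.r) :
    Nonempty (M.Killer j) := by
  induction j with
  | zero => exact M.killer_zero hN
  | succ j ih =>
    obtain ⟨K⟩ := ih (by omega)
    let i : Fin M.r := ⟨j, hj⟩
    rcases Nat.even_or_odd (M.deg i) with h | h
    · exact Killer.even_step (i := i) K h
    · exact Killer.odd_step (i := i) K h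

/-- Bounded cohomology makes every even generator nilpotent in the cohomology of the quotient by
the earlier generators. -/
theorem exists_power {N : ℕ} (hN : M.toCDGA.Vanish N) {i : Fin M.r} (hi : Even (M.deg i)) :
    ∃ N Ψ, 0 < N ∧ M.q i Ψ = Ψ ∧ M.q i (M.d Ψ) = M.v i ^ N := by
  obtain ⟨K⟩ := M.killer hN i i.2.le
  exact K.power hi

end Sys

end RHT

/-! ### The weight filtration -/

namespace RHT
open Polynomial

namespace Sys
variable (M : Sys)

theorem exists_scale (g : Fin M.r → ℕ) :
    ∃ f : M.A →ₐ[ℚ] M.A[X], ∀ i, f (M.v i) = monomial (g i) (M.v i) :=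
  M.lift M.A[X] (mapAlgHom M.ep) M.isSuper.poly _ fun i => by
    rw [coe_mapAlgHom, map_monomial, RingHom.coe_coe, ep_v, smul_monomial]

/-- The homomorphism multiplying each generator `v_i` by `X ^ g i`. -/
noncomputable def scale (g : Fin M.r → ℕ) : M.A →ₐ[ℚ] M.A[X] := (M.exists_scale g).choose

theorem scale_mon (g : Fin M.r → ℕ) (l) :
    M.scale g (M.mon l) = monomial (l.map g).sum (M.mon l) := by
  induction l with
  | nil => rw [mon_nil, map_one]; rfl
  | cons i l ih =>
    rw [mon_cons, map_mul, ih, scale, (M.exists_scale g).choose_spec, monomial_mul_monomial]; simp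

/-- The projection onto the part of weight `n`, when the generator `v_i` has weight `g i`. -/
noncomputable def pr (g : Fin M.r → ℕ) (n : ℕ) : M.A →ₗ[ℚ] M.A :=
  ((Polynomial.lcoeff M.A n).restrictScalars ℚ).comp (M.scale g).toLinearMap

theorem pr_def (g : Fin M.r → ℕ) (n : ℕ) (a) : M.pr g n a = (M.scale g a).coeff n := rfl

theorem pr_mon (g : Fin M.r → ℕ) (n : ℕ) (l) :
    M.pr g n (M.mon l) = if (l.map g).sum = n then M.mon l else 0 := by
  rw [pr_def, scale_mon, coeff_monomial]

theorem pr_mul (g : Fin M.r → ℕ) (n : ℕ) (a b) : M.pr g n (a * b) =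
    ∑ c ∈ Finset.HasAntidiagonal.antidiagonal n, M.pr g c.1 a * M.pr g c.2 b := by
  simp only [pr_def, map_mul, coeff_mul]

theorem exists_sum_pr (g : Fin M.r → ℕ) (a) : ∃ N, (∀ n, N ≤ n → M.pr g n a = 0) ∧
    ∑ n ∈ Finset.range N, M.pr g n a = a := by
  refine ⟨(M.scale g a).natDegree + 1, fun n hn => ?_, ?_⟩
  · rw [pr_def]; exact coeff_eq_zero_of_natDegree_lt (by omega)
  · have h : ((Polynomial.leval (1 : M.A)).restrictScalars ℚ).comp (M.scale g).toLinearMap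
        = LinearMap.id := lin_ext fun l => by
      simp [scale_mon]
    have := DFunLike.congr_fun h a
    simp only [LinearMap.comp_apply, LinearMap.restrictScalars_apply, AlgHom.toLinearMap_apply,
      leval_apply, LinearMap.id_apply] at this
    rw [eval_eq_sum_range] at this
    simpa [pr_def] using this

variable {M} in
theorem pr_ext (g : Fin M.r → ℕ) {a b : M.A} (h : ∀ n, M.pr g n a = M.pr g n b) : a = b := by
  obtain ⟨N, hN, hs⟩ := M.exists_sum_pr g (a - b)
  rw [← sub_eq_zero, ← hs]
  exact Finset.sum_eq_zero fun n _ => by rw [map_sub, h, sub_self]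

theorem pr_pr_self (g : Fin M.r → ℕ) (n m : ℕ) (a) :
    M.pr g n (M.pr g m a) = if m = n then M.pr g m a else 0 := by
  split_ifs with h
  · subst h
    refine DFunLike.congr_fun (f := (M.pr g m).comp (M.pr g m)) (lin_ext fun l => ?_) a
    simp only [LinearMap.comp_apply, pr_mon]; split_ifs <;> simp_all [pr_mon]
  · refine DFunLike.congr_fun (f := (M.pr g n).comp (M.pr g m)) (g := 0) (lin_ext fun l => ?_) a
    simp only [LinearMap.comp_apply, pr_mon, LinearMap.zero_apply]
    split_ifs with h1
    · rw [pr_mon, if_neg (by omega)]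
    · simp

theorem pr_pr (g g' : Fin M.r → ℕ) (n m : ℕ) (a) :
    M.pr g n (M.pr g' m a) = M.pr g' m (M.pr g n a) := by
  refine DFunLike.congr_fun (f := (M.pr g n).comp (M.pr g' m)) (g := (M.pr g' m).comp (M.pr g n))
    (lin_ext fun l => ?_) a
  simp only [LinearMap.comp_apply, pr_mon]
  split_ifs <;> simp_all [pr_mon]

theorem pr_q (g : Fin M.r → ℕ) (n j : ℕ) (a) : M.pr g n (M.q j a) = M.q j (M.pr g n a) := by
  refine DFunLike.congr_fun (f := (M.pr g n).comp (M.q j).toLinearMap)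
    (g := (M.q j).toLinearMap.comp (M.pr g n)) (lin_ext fun l => ?_) a
  simp only [LinearMap.comp_apply, AlgHom.toLinearMap_apply, pr_mon]
  rcases M.q_mon j l with h | h <;> rw [h] <;> split_ifs <;> simp_all [pr_mon]

theorem pr_deg (n : ℕ) (a) : M.pr M.deg n a = M.pj n a := by
  refine DFunLike.congr_fun (lin_ext fun l => ?_) a
  rw [pr_mon]
  split_ifs with h
  · exact (M.pj_of_mem (h ▸ M.mon_mem l)).symm
  · exact (M.pj_of_mem_ne (M.mon_mem l) h).symm

theorem pr_pj (g : Fin M.r → ℕ) (n m : ℕ) (a) :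
    M.pr g n (M.pj m a) = M.pj m (M.pr g n a) := by
  rw [← pr_deg, ← pr_deg, pr_pr]

theorem pr_ep (g : Fin M.r → ℕ) (n : ℕ) (a) : M.pr g n (M.ep a) = M.ep (M.pr g n a) := by
  refine DFunLike.congr_fun (f := (M.pr g n).comp M.ep.toLinearMap)
    (g := M.ep.toLinearMap.comp (M.pr g n)) (lin_ext fun l => ?_) a
  simp only [LinearMap.comp_apply, AlgHom.toLinearMap_apply, pr_mon]
  rw [ep, M.eps_of_mem (M.mon_mem l), map_smul, pr_mon]
  split_ifs
  · rw [M.eps_of_mem (M.mon_mem l)]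
  · simp

theorem pr_mul_left (g : Fin M.r → ℕ) {p : ℕ} {x : M.A} (hx : M.pr g p x = x) (n : ℕ) (y) :
    M.pr g (p + n) (x * y) = x * M.pr g n y := by
  rw [pr_mul, Finset.sum_eq_single (p, n)]
  · rw [hx]
  · rintro ⟨a, b⟩ hab hne
    rw [← hx, pr_pr_self, if_neg, zero_mul]
    rintro rfl
    rw [Finset.HasAntidiagonal.mem_antidiagonal] at hab
    exact hne (by simp; omega)
  · simp

theorem pr_mul_lt (g : Fin M.r → ℕ) {p : ℕ} {x : M.A} (hx : M.pr g p x = x) {n : ℕ} (hn : n < p)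
    (y) : M.pr g n (x * y) = 0 := by
  rw [pr_mul]
  refine Finset.sum_eq_zero fun c hc => ?_
  rw [← hx, pr_pr_self, if_neg, zero_mul]
  rw [Finset.HasAntidiagonal.mem_antidiagonal] at hc
  omega

theorem pr_mul_right (g : Fin M.r → ℕ) {p : ℕ} {x : M.A} (hx : M.pr g p x = x) (n : ℕ) (y) :
    M.pr g (n + p) (y * x) = M.pr g n y * x := by
  rw [pr_mul, Finset.sum_eq_single (n, p)]
  · rw [hx]
  · rintro ⟨a, b⟩ hab hne
    nth_rewrite 1 [← hx]
    rw [pr_pr_self, if_neg, mul_zero]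
    rintro rfl
    rw [Finset.HasAntidiagonal.mem_antidiagonal] at hab
    exact hne (by simp; omega)
  · simp

theorem pr_mul_right_lt (g : Fin M.r → ℕ) {p : ℕ} {x : M.A} (hx : M.pr g p x = x) {n : ℕ}
    (hn : n < p) (y) : M.pr g n (y * x) = 0 := by
  rw [pr_mul]
  refine Finset.sum_eq_zero fun c hc => ?_
  rw [← hx, pr_pr_self, if_neg, mul_zero]
  rw [Finset.HasAntidiagonal.mem_antidiagonal] at hc
  omega

theorem pr_v (g : Fin M.r → ℕ) (i) : M.pr g (g i) (M.v i) = M.v i := by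
  have := M.pr_mon g (g i) [i]
  simpa [mon] using this

theorem pr_one (g : Fin M.r → ℕ) : M.pr g 0 1 = 1 := by
  simpa [mon] using M.pr_mon g 0 []

theorem pr_pow (g : Fin M.r → ℕ) (i) (n : ℕ) : M.pr g (g i * n) (M.v i ^ n) = M.v i ^ n := by
  induction n with
  | zero => simpa using M.pr_one g
  | succ n ih =>
    rw [pow_succ', Nat.mul_succ, add_comm, M.pr_mul_left g (M.pr_v g i), ih]

/-- The weight counting odd generators: `1` on odd generators and `0` on even ones. -/
def lw (i : Fin M.r) : ℕ := if Even (M.deg i) then 0 else 1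

/-- The weight: the degree plus the number of odd generators. -/
def wt (i : Fin M.r) : ℕ := M.deg i + M.lw i

theorem wt_even {i : Fin M.r} (h : Even (M.deg i)) : M.wt i = M.deg i := by simp [wt, lw, h]
theorem wt_odd {i : Fin M.r} (h : Odd (M.deg i)) : M.wt i = M.deg i + 1 := by
  simp [wt, lw, Nat.not_even_iff_odd.2 h]
theorem lw_even {i : Fin M.r} (h : Even (M.deg i)) : M.lw i = 0 := by simp [lw, h]
theorem lw_odd {i : Fin M.r} (h : Odd (M.deg i)) : M.lw i = 1 := by
  simp [lw, Nat.not_even_iff_odd.2 h]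

theorem sum_wt (l : List (Fin M.r)) :
    (l.map M.wt).sum = (l.map M.deg).sum + (l.map M.lw).sum := by
  induction l with
  | nil => rfl
  | cons i l ih => simp [ih, wt]; omega

theorem lw_le_deg (i) : M.lw i ≤ M.deg i := by
  have := M.deg_ge i
  unfold lw; split_ifs <;> omega

theorem sum_lw_le (l : List (Fin M.r)) : (l.map M.lw).sum ≤ (l.map M.deg).sum := by
  induction l with
  | nil => rfl
  | cons i l ih => have := M.lw_le_deg i; simp; omega

theorem wt_isEven (i) : Even (M.wt i) := by
  rcases Nat.even_or_odd (M.deg i) with h | h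
  · rwa [M.wt_even h]
  · rw [M.wt_odd h]; exact h.add_one

theorem pr_wt_odd {w : ℕ} (hw : Odd w) (a) : M.pr M.wt w a = 0 := by
  refine DFunLike.congr_fun (f := M.pr M.wt w) (g := 0) (lin_ext fun l => ?_) a
  rw [pr_mon, if_neg]
  · rfl
  · rintro rfl
    refine Nat.not_even_iff_odd.2 hw ?_
    clear hw a
    induction l with
    | nil => exact even_two_mul 0
    | cons i l ih => simpa using (M.wt_isEven i).add ih

theorem pr_wt_lt {w n : ℕ} (h : w < n) (a) : M.pr M.wt w (M.pj n a) = 0 := by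
  refine DFunLike.congr_fun (f := (M.pr M.wt w).comp (M.pj n)) (g := 0) (lin_ext fun l => ?_) a
  rw [LinearMap.comp_apply, ← pr_deg, pr_mon, LinearMap.zero_apply]
  split_ifs with h1
  · rw [pr_mon, if_neg]
    have := M.sum_wt l; omega
  · simp

theorem pr_wt_gt {w n : ℕ} (h : 2 * n < w) (a) : M.pr M.wt w (M.pj n a) = 0 := by
  refine DFunLike.congr_fun (f := (M.pr M.wt w).comp (M.pj n)) (g := 0) (lin_ext fun l => ?_) a
  rw [LinearMap.comp_apply, ← pr_deg, pr_mon, LinearMap.zero_apply]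
  split_ifs with h1
  · rw [pr_mon, if_neg]
    have := M.sum_wt l; have := M.sum_lw_le l; omega
  · simp

theorem pr_lw (n k : ℕ) (a) : M.pr M.lw k (M.pr M.wt (n + k) (M.pj n a)) =
    M.pr M.wt (n + k) (M.pj n a) := by
  refine DFunLike.congr_fun (f := (M.pr M.lw k).comp ((M.pr M.wt (n + k)).comp (M.pj n)))
    (g := (M.pr M.wt (n + k)).comp (M.pj n)) (lin_ext fun l => ?_) a
  simp only [LinearMap.comp_apply, ← pr_deg, pr_mon]
  split_ifs with h1
  · rw [pr_mon]; split_ifs with h2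
    · rw [pr_mon, if_pos (by have := M.sum_wt l; omega)]
    · simp
  · simp

/-- The differential does not lower the weight. -/
theorem pr_wt_d {w w' : ℕ} (h : w' < w) (a) : M.pr M.wt w' (M.d (M.pr M.wt w a)) = 0 := by
  refine DFunLike.congr_fun (f := (M.pr M.wt w').comp (M.d.comp (M.pr M.wt w))) (g := 0)
    (lin_ext fun l => ?_) a
  simp only [LinearMap.comp_apply, pr_mon, LinearMap.zero_apply]
  split_ifs with hl
  swap
  · simp
  subst hl
  clear a
  induction l generalizing w' with
  | nil => simp at h
  | cons i l ih =>
    rw [mon_cons, M.isDiff.mul, map_add]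
    have hl : M.pr M.wt (l.map M.wt).sum (M.mon l) = M.mon l := by rw [pr_mon, if_pos rfl]
    simp only [List.map_cons, List.sum_cons] at h
    have h1 : M.pr M.wt w' (M.d (M.v i) * M.mon l) = 0 := by
      by_cases h2 : w' < (l.map M.wt).sum
      · exact M.pr_mul_right_lt _ hl h2 _
      · obtain ⟨n, rfl⟩ := Nat.exists_eq_add_of_le' (not_lt.1 h2)
        rw [M.pr_mul_right _ hl, ← M.pj_of_mem (M.d_mem (M.v_mem i)), M.pr_wt_lt, zero_mul]
        have : M.lw i ≤ 1 := by unfold lw; split_ifs <;> omega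
        have : M.wt i ≤ M.deg i + 1 := by unfold wt; omega
        omega
    have hv : M.pr M.wt (M.wt i) (M.eps (M.v i)) = M.eps (M.v i) := by
      rw [← ep, M.pr_ep, M.pr_v]
    have h3 : M.pr M.wt w' (M.eps (M.v i) * M.d (M.mon l)) = 0 := by
      by_cases h2 : w' < M.wt i
      · exact M.pr_mul_lt _ hv h2 _
      · obtain ⟨n, rfl⟩ := Nat.exists_eq_add_of_le (not_lt.1 h2)
        rw [M.pr_mul_left _ hv, ih (by omega), mul_zero]
    rw [h1, h3, add_zero]

/-- The leading term of `d` for the weight. -/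
theorem exists_ds : ∃ f : M.A →ₗ[ℚ] M.A, ∀ a w,
    M.pr M.wt w (f a) = M.pr M.wt w (M.d (M.pr M.wt w a)) := by
  obtain ⟨f, hf⟩ := exists_ofCoeff (fun w => (M.pr M.wt w).comp (M.d.comp (M.pr M.wt w)))
    fun a => by
      obtain ⟨N, hN, -⟩ := M.exists_sum_pr M.wt a
      exact ⟨N, fun n hn => by simp [hN n hn]⟩
  refine ⟨((Polynomial.leval (1 : M.A)).restrictScalars ℚ).comp f, fun a w => ?_⟩
  simp only [LinearMap.comp_apply, LinearMap.restrictScalars_apply, leval_apply]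
  rw [eval_eq_sum_range, map_sum]
  simp only [one_pow, mul_one, hf, LinearMap.comp_apply, pr_pr_self, Finset.sum_ite_eq',
    Finset.mem_range]
  split_ifs with h
  · rfl
  · have := coeff_eq_zero_of_natDegree_lt (p := f a) (n := w) (by omega)
    rw [hf] at this
    exact this.symm

/-- The weight-preserving part of the differential. -/
noncomputable def ds : M.A →ₗ[ℚ] M.A := M.exists_ds.choose

theorem pr_ds (w : ℕ) (a) : M.pr M.wt w (M.ds a) = M.pr M.wt w (M.d (M.pr M.wt w a)) :=
  M.exists_ds.choose_spec a w

theorem ds_pr (w : ℕ) (a) : M.ds (M.pr M.wt w a) = M.pr M.wt w (M.ds a) := by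
  refine pr_ext M.wt fun n => ?_
  rw [pr_ds, pr_pr_self, pr_pr_self]
  split_ifs with h
  · subst h; rw [pr_ds]
  · simp

theorem ds_of {w : ℕ} {a : M.A} (h : M.pr M.wt w a = a) : M.ds a = M.pr M.wt w (M.d a) := by
  rw [← h, ds_pr, pr_ds, h]

/-- Elements of weight at least `w` are mapped by `d` to their leading term plus higher terms. -/
theorem pr_d_of {w : ℕ} {a : M.A} (h : ∀ w' < w, M.pr M.wt w' a = 0) :
    M.pr M.wt w (M.d a) = M.ds (M.pr M.wt w a) := by
  obtain ⟨N, -, hs⟩ := M.exists_sum_pr M.wt a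
  rw [ds_pr, pr_ds]
  nth_rewrite 1 [← hs]
  rw [map_sum, map_sum]
  by_cases hw : w < N
  · refine Finset.sum_eq_single w (fun n _ hn => ?_) (fun h => absurd (Finset.mem_range.2 hw) h)
    rcases lt_or_gt_of_ne hn with h1 | h1
    · rw [h n h1, map_zero, map_zero]
    · exact M.pr_wt_d h1 a
  · have : M.pr M.wt w a = 0 := by
      rw [← hs, map_sum]
      refine Finset.sum_eq_zero fun n hn => ?_
      rw [pr_pr_self, if_neg]; rintro rfl; exact hw (Finset.mem_range.1 hn)
    rw [this, map_zero, map_zero]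
    refine Finset.sum_eq_zero fun n hn => ?_
    rw [h n (by have := Finset.mem_range.1 hn; omega), map_zero, map_zero]

theorem pr_d_lt {w : ℕ} {a : M.A} (h : ∀ w' < w, M.pr M.wt w' a = 0) :
    ∀ w' < w, M.pr M.wt w' (M.d a) = 0 := by
  intro w' hw'
  rw [M.pr_d_of fun n hn => h n (by omega), h w' hw', map_zero]

theorem ds_ds (a) : M.ds (M.ds a) = 0 := by
  refine pr_ext M.wt fun w => ?_
  have hb : M.pr M.wt w (M.pr M.wt w a) = M.pr M.wt w a := by rw [pr_pr_self, if_pos rfl]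
  rw [← ds_pr, ← ds_pr, M.ds_of hb, map_zero, ← M.pr_d_of fun w' hw' => M.pr_wt_d hw' a,
    M.d_sq, map_zero]

theorem ds_mul (a b) : M.ds (a * b) = M.ds a * b + M.ep a * M.ds b := by
  have key : ∀ l m, M.ds (M.mon l * M.mon m) =
      M.ds (M.mon l) * M.mon m + M.ep (M.mon l) * M.ds (M.mon m) := by
    intro l m
    have hl : M.pr M.wt (l.map M.wt).sum (M.mon l) = M.mon l := by rw [pr_mon, if_pos rfl]
    have hm : M.pr M.wt (m.map M.wt).sum (M.mon m) = M.mon m := by rw [pr_mon, if_pos rfl]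
    have hl' : M.pr M.wt (l.map M.wt).sum (M.ep (M.mon l)) = M.ep (M.mon l) := by
      rw [pr_ep, hl]
    rw [M.ds_of (w := (l.map M.wt).sum + (m.map M.wt).sum) (by rw [M.pr_mul_left _ hl, hm]),
      M.isDiff.mul, map_add, M.pr_mul_right _ hm, M.pr_mul_left _ hl', M.ds_of hl, M.ds_of hm]
  refine mon_induction (p := fun a => ∀ b, M.ds (a * b) = M.ds a * b + M.ep a * M.ds b)
    (fun l => ?_) (by simp) ?_ ?_ a b
  · refine mon_induction (fun m => key l m) (by simp) ?_ ?_
    · intro x y hx hy; simp only [mul_add, map_add, hx, hy]; abel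
    · intro c x hx; simp only [mul_smul_comm, map_smul, hx, smul_add]
  · intro x y hx hy b; simp only [add_mul, map_add, hx, hy]; abel
  · intro c x hx b; simp only [smul_mul_assoc, map_smul, hx, smul_add]

theorem pj_ds (n : ℕ) (a) : M.pj (n + 1) (M.ds a) = M.ds (M.pj n a) := by
  refine pr_ext M.wt fun w => ?_
  rw [pr_pj, pr_ds, pr_ds, pr_pj, ← pr_pj, M.pj_d]

theorem ds_lw (k : ℕ) (a) : M.pr M.lw k (M.ds a) = M.ds (M.pr M.lw (k + 1) a) := by
  refine DFunLike.congr_fun (f := (M.pr M.lw k).comp M.ds) (g := M.ds.comp (M.pr M.lw (k + 1)))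
    (lin_ext fun l => ?_) a
  simp only [LinearMap.comp_apply]
  have hl : M.pr M.wt (l.map M.wt).sum (M.mon l) = M.mon l := by rw [pr_mon, if_pos rfl]
  have hd : M.d (M.mon l) = M.pj ((l.map M.deg).sum + 1) (M.d (M.mon l)) :=
    (M.pj_of_mem (M.d_mem (M.mon_mem l))).symm
  rw [pr_mon]
  have hs := M.sum_wt l
  rcases Nat.eq_zero_or_pos (l.map M.lw).sum with h0 | h0
  · rw [if_neg (by omega), map_zero, M.ds_of hl, hd, M.pr_wt_lt (by omega), map_zero]
  · obtain ⟨k', hk'⟩ : ∃ k', (l.map M.lw).sum = k' + 1 := ⟨(l.map M.lw).sum - 1, by omega⟩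
    have e : M.pr M.lw k' (M.ds (M.mon l)) = M.ds (M.mon l) := by
      rw [M.ds_of hl, show (l.map M.wt).sum = (l.map M.deg).sum + 1 + k' by omega, hd, pr_lw]
    rw [← e, pr_pr_self]
    by_cases hk : k' = k
    · subst hk; rw [if_pos rfl, if_pos (by omega), e]
    · rw [if_neg hk, if_neg (by omega), map_zero]

theorem q_ds (j : ℕ) (a) : M.q j (M.ds a) = M.q j (M.ds (M.q j a)) := by
  refine pr_ext M.wt fun w => ?_
  rw [pr_q, pr_ds, pr_q, pr_ds, ← pr_q, ← pr_q, M.q_d, M.pr_q M.wt w j a]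

theorem q_ds_v (j : ℕ) (i : Fin M.r) (hi : i.val ≤ j) : M.q j (M.ds (M.v i)) = 0 := by
  rw [M.ds_of (M.pr_v _ i), ← pr_q, q_d_v _ _ _ hi, map_zero]

end Sys

end RHT

/-! ### Acyclicity of the associated graded quotients -/

namespace RHT
open Polynomial

namespace Sys
variable (M : Sys)

/-- The sum of `g` over the even generators of index at least `j`. -/
def tE (g : Fin M.r → ℕ) (j : ℕ) : ℕ :=
  ∑ i : Fin M.r, if j ≤ i.val ∧ Even (M.deg i) then g i else 0

/-- The sum of `g` over the odd generators of index at least `j`. -/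
def tO (g : Fin M.r → ℕ) (j : ℕ) : ℕ :=
  ∑ i : Fin M.r, if j ≤ i.val ∧ Odd (M.deg i) then g i else 0

theorem tail_succ (P : Fin M.r → Prop) [DecidablePred P] (g : Fin M.r → ℕ) (i : Fin M.r) :
    (∑ l : Fin M.r, if i.val ≤ l.val ∧ P l then g l else 0) =
      (∑ l : Fin M.r, if i.val + 1 ≤ l.val ∧ P l then g l else 0) + if P i then g i else 0 := by
  have : (if P i then g i else 0) = ∑ l : Fin M.r, if l = i then (if P l then g l else 0) else 0 := by
    simp
  rw [this, ← Finset.sum_add_distrib]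
  refine Finset.sum_congr rfl fun l _ => ?_
  by_cases h : l = i
  · subst h; simp
  · have h' : l.val ≠ i.val := fun e => h (Fin.ext e)
    by_cases h2 : i.val ≤ l.val
    · have h3 : i.val + 1 ≤ l.val := by omega
      simp [h, h2, h3]
    · have h3 : ¬ i.val + 1 ≤ l.val := by omega
      simp [h, h2, h3]

theorem tE_even (g : Fin M.r → ℕ) {i : Fin M.r} (h : Even (M.deg i)) :
    M.tE g i = M.tE g (i + 1) + g i := by
  rw [tE, M.tail_succ, if_pos h, tE]
theorem tE_odd (g : Fin M.r → ℕ) {i : Fin M.r} (h : Odd (M.deg i)) :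
    M.tE g i = M.tE g (i + 1) := by
  rw [tE, M.tail_succ, if_neg (Nat.not_even_iff_odd.2 h), tE, add_zero]
theorem tO_odd (g : Fin M.r → ℕ) {i : Fin M.r} (h : Odd (M.deg i)) :
    M.tO g i = M.tO g (i + 1) + g i := by
  rw [tO, M.tail_succ, if_pos h, tO]
theorem tO_even (g : Fin M.r → ℕ) {i : Fin M.r} (h : Even (M.deg i)) :
    M.tO g i = M.tO g (i + 1) := by
  rw [tO, M.tail_succ, if_neg (Nat.not_odd_iff_even.2 h), tO, add_zero]

/-- Elements involving only generators of index at least `j`, homogeneous of weight `w` and with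
`k` odd generators in each monomial. -/
def Pc (j w k : ℕ) (z : M.A) : Prop := M.q j z = z ∧ M.pr M.wt w z = z ∧ M.pr M.lw k z = z

/-- The graded differential on the quotient by the first `j` generators. -/
noncomputable def dq (j : ℕ) : M.A →ₗ[ℚ] M.A := (M.q j).toLinearMap.comp M.ds

theorem dq_def (j a) : M.dq j a = M.q j (M.ds a) := rfl

theorem dq_dq (j a) : M.dq j (M.dq j a) = 0 := by
  rw [dq_def, dq_def, ← M.q_ds, M.ds_ds, map_zero]

theorem dq_q (j a) : M.dq j (M.q j a) = M.dq j a := (M.q_ds j a).symm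

theorem q_dq {j k : ℕ} (h : j ≤ k) (a) : M.q k (M.dq j a) = M.dq k a := by
  rw [dq_def, M.q_q' h, dq_def]

theorem dq_mul (j a b) : M.dq j (a * b) = M.dq j a * M.q j b + M.q j (M.ep a) * M.dq j b := by
  simp only [dq_def, M.ds_mul, map_add, map_mul]

theorem dq_pr (j w a) : M.dq j (M.pr M.wt w a) = M.pr M.wt w (M.dq j a) := by
  rw [dq_def, ds_pr, dq_def, pr_q]

theorem dq_lw (j k a) : M.dq j (M.pr M.lw (k + 1) a) = M.pr M.lw k (M.dq j a) := by
  rw [dq_def, ← ds_lw, dq_def, pr_q]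

variable {M}

theorem Pc.add {j w k : ℕ} {x y : M.A} (hx : M.Pc j w k x) (hy : M.Pc j w k y) :
    M.Pc j w k (x + y) :=
  ⟨by rw [map_add, hx.1, hy.1], by rw [map_add, hx.2.1, hy.2.1], by rw [map_add, hx.2.2, hy.2.2]⟩

theorem Pc.neg {j w k : ℕ} {x : M.A} (hx : M.Pc j w k x) : M.Pc j w k (-x) :=
  ⟨by rw [map_neg, hx.1], by rw [map_neg, hx.2.1], by rw [map_neg, hx.2.2]⟩

theorem Pc.sub {j w k : ℕ} {x y : M.A} (hx : M.Pc j w k x) (hy : M.Pc j w k y) :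
    M.Pc j w k (x - y) := sub_eq_add_neg x y ▸ hx.add hy.neg

theorem Pc.mul {j w k w' k' : ℕ} {x y : M.A} (hx : M.Pc j w k x) (hy : M.Pc j w' k' y) :
    M.Pc j (w + w') (k + k') (x * y) :=
  ⟨by rw [map_mul, hx.1, hy.1], by rw [M.pr_mul_left _ hx.2.1, hy.2.1],
    by rw [M.pr_mul_left _ hx.2.2, hy.2.2]⟩

theorem Pc.mono {j j' w k : ℕ} (h : j' ≤ j) {x : M.A} (hx : M.Pc j w k x) : M.Pc j' w k x :=
  ⟨by rw [← hx.1, M.q_q h], hx.2⟩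

theorem Pc.q {j j' w k : ℕ} {x : M.A} (hx : M.Pc j w k x) : M.Pc j' w k (M.q j' x) :=
  ⟨M.q_q le_rfl x, by rw [pr_q, hx.2.1], by rw [pr_q, hx.2.2]⟩

theorem Pc.dq {j j' w k : ℕ} {x : M.A} (hx : M.Pc j w (k + 1) x) : M.Pc j' w k (M.dq j' x) :=
  ⟨M.q_q le_rfl _, by rw [← dq_pr, hx.2.1], by rw [← dq_lw, hx.2.2]⟩

variable (M)

theorem Pc.proj (j w k) (a : M.A) : M.Pc j w k (M.q j (M.pr M.wt w (M.pr M.lw k a))) :=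
  ⟨M.q_q le_rfl _, by rw [pr_q, pr_pr_self, if_pos rfl],
    by rw [pr_q, pr_pr, pr_pr_self, if_pos rfl]⟩

theorem Pc.v_even (i : Fin M.r) (h : Even (M.deg i)) : M.Pc i (M.wt i) 0 (M.v i) :=
  ⟨by rw [q_v, if_neg (lt_irrefl _)], M.pr_v _ i, by simpa [M.lw_even h] using M.pr_v M.lw i⟩

theorem Pc.v_odd (i : Fin M.r) (h : Odd (M.deg i)) : M.Pc i (M.wt i) 1 (M.v i) :=
  ⟨by rw [q_v, if_neg (lt_irrefl _)], M.pr_v _ i, by simpa [M.lw_odd h] using M.pr_v M.lw i⟩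

theorem Pc.pow_even (i : Fin M.r) (h : Even (M.deg i)) (s : ℕ) :
    M.Pc i (M.wt i * s) 0 (M.v i ^ s) := by
  induction s with
  | zero =>
    rw [pow_zero, mul_zero]
    exact ⟨map_one _, M.pr_one _, M.pr_one _⟩
  | succ s ih =>
    have := (Pc.v_even M i h).mul ih
    rwa [← pow_succ', add_comm, ← Nat.mul_succ] at this

theorem dq_v_even (i : Fin M.r) (h : Even (M.deg i)) (a) : M.dq i (M.v i * a) = M.v i * M.dq i a := by
  rw [dq_mul, dq_def M i (M.v i), M.q_ds_v _ _ le_rfl, zero_mul, zero_add, ep_v, h.neg_one_pow,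
    one_smul, q_v, if_neg (lt_irrefl _)]

theorem dq_v_odd (i : Fin M.r) (h : Odd (M.deg i)) (a) :
    M.dq i (M.v i * a) = - (M.v i * M.dq i a) := by
  rw [dq_mul, dq_def M i (M.v i), M.q_ds_v _ _ le_rfl, zero_mul, zero_add, ep_v, h.neg_one_pow,
    neg_one_smul, map_neg, q_v, if_neg (lt_irrefl _), neg_mul]

/-- In the associated graded quotient by the generators before an even `v_i`, a power of `v_i`
bounds. -/
theorem exists_power' {N : ℕ} (hN : M.toCDGA.Vanish N) {i : Fin M.r} (hi : Even (M.deg i)) :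
    ∃ N Φ, M.Pc i (M.wt i * N) 1 Φ ∧ M.dq i Φ = M.v i ^ N := by
  obtain ⟨N, Ψ, hN0, hΨ, hd⟩ := M.exists_power hN hi
  have hdeg := M.deg_ge i
  have hpos : 0 < M.deg i * N := Nat.mul_pos (by omega) hN0
  obtain ⟨n, hn⟩ : ∃ n, M.deg i * N = n + 1 := ⟨M.deg i * N - 1, by omega⟩
  have hwt := M.wt_even hi
  have hmem : M.v i ^ N ∈ M.grading (n + 1) := by
    rw [← hn]
    have := M.mon_mem (List.replicate N i)
    simpa [mon, mul_comm] using this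
  refine ⟨N, M.pr M.wt (n + 1) (M.pj n Ψ), ⟨?_, ?_, ?_⟩, ?_⟩
  · rw [← pr_q, ← M.pj_q, hΨ]
  · rw [hwt, hn, pr_pr_self, if_pos rfl]
  · exact M.pr_lw n 1 Ψ
  · rw [dq_def, ← M.pr_d_of, ← pr_q, ← M.pj_d, ← M.pj_q, hd, M.pj_of_mem hmem, ← hn, ← hwt,
      M.pr_pow]
    intro w hw
    rcases Nat.lt_succ_iff_lt_or_eq.1 hw with h | rfl
    · exact M.pr_wt_lt h _
    · refine M.pr_wt_odd ?_ _
      have : Even (w + 1) := hn ▸ hi.mul_right N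
      rcases Nat.even_or_odd w with h | h
      · exact absurd h (Nat.even_add_one.1 this)
      · exact h

theorem q_r (a : M.A) : ∃ c : ℚ, M.q M.r a = c • 1 := by
  refine mon_induction (p := fun a => ∃ c : ℚ, M.q M.r a = c • 1) (fun l => ?_) ⟨0, by simp⟩ ?_ ?_ a
  · cases l with
    | nil => exact ⟨1, by simp [mon_nil]⟩
    | cons i l => exact ⟨0, by rw [mon_cons, map_mul, q_v, if_pos i.2]; simp⟩
  · rintro x y ⟨c, hc⟩ ⟨e, he⟩; exact ⟨c + e, by rw [map_add, hc, he, add_smul]⟩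
  · rintro e x ⟨c, hc⟩; exact ⟨e * c, by rw [map_smul, hc, smul_smul]⟩

/-- Acyclicity of the associated graded quotients when there are many odd generators in each
monomial, or when the weight is large. -/
theorem acyclic {N : ℕ} (hN : M.toCDGA.Vanish N) (j : ℕ) (hj : j ≤ M.r) : ∀ k w z, M.Pc j w k z →
    M.dq j z = 0 → (M.tO 1 j < k + M.tE 1 j ∨ M.tO M.wt j < w + M.tE M.wt j) →
    ∃ c, M.Pc j w (k + 1) c ∧ M.dq j c = z := by
  induction hs : M.r - j generalizing j with
  | zero =>
    obtain rfl : j = M.r := by omega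
    intro k w z hz _ hc
    obtain ⟨e, he⟩ := M.q_r z
    rw [hz.1] at he
    have h0 : ∀ g, M.tO g M.r = 0 ∧ M.tE g M.r = 0 := fun g =>
      ⟨Finset.sum_eq_zero fun i _ => if_neg (by have := i.2; omega),
        Finset.sum_eq_zero fun i _ => if_neg (by have := i.2; omega)⟩
    simp only [h0] at hc
    have hz0 : z = 0 := by
      rcases hc with h | h
      · have := hz.2.2
        rw [he, map_smul, ← M.pr_one M.lw, pr_pr_self, if_neg (by omega), smul_zero] at this
        rw [he, ← M.pr_one M.lw, ← this]
      · have := hz.2.1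
        rw [he, map_smul, ← M.pr_one M.wt, pr_pr_self, if_neg (by omega), smul_zero] at this
        rw [he, ← M.pr_one M.wt, ← this]
    exact ⟨0, ⟨by simp, by simp, by simp⟩, by rw [hz0, map_zero]⟩
  | succ s ih =>
    have ih := ih (j + 1) (by omega) (by omega)
    obtain ⟨i, rfl⟩ : ∃ i : Fin M.r, j = i := ⟨⟨j, by omega⟩, rfl⟩
    intro k w z hz hdz hc
    have hqv : M.q (i + 1) (M.v i) = 0 := by rw [q_v, if_pos (Nat.lt_succ_self _)]
    rcases Nat.even_or_odd (M.deg i) with hi | hi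
    · rw [M.tO_even _ hi, M.tE_even _ hi, M.tO_even _ hi, M.tE_even _ hi, Pi.one_apply] at hc
      obtain ⟨N, Φ, hΦ, hdΦ⟩ := M.exists_power' hN hi
      -- If `v_i ^ (s + 1) * z` is the differential of `c`, then `c` is a cocycle modulo `v_i`, hence bounds there;
      -- the corrected `c` is divisible by `v_i`, and so `v_i ^ s * z` bounds.
      have key : ∀ s, (∃ c, M.Pc i (M.wt i * s + w) (k + 1) c ∧ M.dq i c = M.v i ^ s * z) →
          ∃ c, M.Pc i w (k + 1) c ∧ M.dq i c = z := by
        intro s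
        induction s with
        | zero =>
          rintro ⟨c, h1, h2⟩
          exact ⟨c, by simpa using h1, by simpa using h2⟩
        | succ s ihs =>
          rintro ⟨c, hc1, hc2⟩
          apply ihs
          obtain ⟨u, hu, hdu⟩ := ih (k + 1) _ (M.q (i + 1) c) hc1.q (by
            rw [dq_q, ← M.q_dq (Nat.le_succ _), hc2, pow_succ', mul_assoc, map_mul, hqv,
              zero_mul]) (by
            rcases hc with h | h
            · left; omega
            · right; rw [Nat.mul_succ]; omega)
          have h1 := M.q_eq i (c - M.dq i u)
          rw [map_sub (M.q (i + 1)), M.q_dq (Nat.le_succ _), hdu, sub_self, zero_add, map_sub,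
            hc1.1, hu.dq.1] at h1
          set y := M.Q i (c - M.dq i u)
          have h2 : M.dq i y = M.v i ^ s * z := by
            have := congrArg (M.dq i) h1
            rw [map_sub, dq_dq, sub_zero, hc2, M.dq_v_even i hi, pow_succ', mul_assoc] at this
            rw [← sub_eq_zero]
            apply M.even_nzd i hi
            rw [mul_sub, this, sub_self]
          refine ⟨_, Pc.proj M i (M.wt i * s + w) (k + 1) y, ?_⟩
          have h3 : M.Pc i (M.wt i * s + w) k (M.v i ^ s * z) := by
            have := (Pc.pow_even M i hi s).mul hz
            rwa [zero_add] at this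
          rw [dq_q, dq_pr, dq_lw, h2, h3.2.2, h3.2.1]
      refine key N ⟨Φ * z, ?_, ?_⟩
      · rw [add_comm k]; exact hΦ.mul hz
      · rw [dq_mul, hdΦ, hdz, mul_zero, add_zero, hz.1]
    · rw [M.tO_odd _ hi, M.tE_odd _ hi, M.tO_odd _ hi, M.tE_odd _ hi, Pi.one_apply] at hc
      -- Modulo `v_i` the cocycle `z` bounds `u`; the difference `z - d u` is `v_i` times a cocycle
      -- of the next quotient with one odd generator fewer, which bounds as well.
      obtain ⟨u, hu, hdu⟩ := ih k w (M.q (i + 1) z) hz.q (by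
        rw [dq_q, ← M.q_dq (Nat.le_succ _), hdz, map_zero]) (by omega)
      have h1 := M.q_eq i (z - M.dq i u)
      rw [map_sub (M.q (i + 1)), M.q_dq (Nat.le_succ _), hdu, sub_self, zero_add, map_sub,
        hz.1, hu.dq.1] at h1
      have hx : M.Pc i w k (z - M.dq i u) := hz.sub hu.dq
      have hy := M.Q_mem i (z - M.dq i u)
      rw [M.co_odd hi] at hy
      have hv := Pc.v_odd M i hi
      have hu' : M.Pc i w (k + 1) u := hu.mono (Nat.le_succ _)
      have hdx : M.dq i (z - M.dq i u) = 0 := by rw [map_sub, hdz, dq_dq, sub_zero]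
      generalize M.Q i (z - M.dq i u) = y at *
      by_cases hkw : 1 ≤ k ∧ M.wt i ≤ w
      · obtain ⟨⟨k, rfl⟩, w, rfl⟩ : (∃ k', k = 1 + k') ∧ ∃ w', w = M.wt i + w' :=
          ⟨⟨k - 1, by omega⟩, w - M.wt i, by omega⟩
        have hy' := Pc.proj M (i + 1) w k y
        have hyx : z - M.dq i u = M.v i * M.q (i + 1) (M.pr M.wt w (M.pr M.lw k y)) := by
          rw [← pr_q, ← pr_q, hy, ← M.pr_mul_left _ hv.2.1, ← M.pr_mul_left _ hv.2.2, ← h1,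
            hx.2.2, hx.2.1]
        generalize M.q (i + 1) (M.pr M.wt w (M.pr M.lw k y)) = y' at *
        have hvq : ∀ a, M.v i * M.q i a = M.v i * M.q (i + 1) a := fun a => by
          rw [M.q_eq i a, mul_add, ← mul_assoc, M.v_sq i hi, zero_mul, add_zero]
        have h2 : M.dq (i + 1) y' = 0 := by
          apply M.odd_nzd i hi (M.q_q le_rfl _)
          rw [← hvq, ← dq_def, ← neg_eq_zero, ← M.dq_v_odd i hi, ← hyx, hdx]
        obtain ⟨u', hu1, hu2⟩ := ih k w y' hy' h2 (by omega)
        refine ⟨u - M.v i * u', ?_, ?_⟩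
        · exact hu'.sub (add_assoc 1 k 1 ▸ hv.mul (hu1.mono (Nat.le_succ _)))
        · rw [map_sub, M.dq_v_odd i hi, dq_def M i u', hvq, ← dq_def, hu2, ← hyx]; abel
      · refine ⟨u, hu', ?_⟩
        have : z - M.dq i u = 0 := by
          by_cases hk : 1 ≤ k
          · rw [← hx.2.1, h1, M.pr_mul_lt _ hv.2.1 (by omega)]
          · rw [← hx.2.2, h1, M.pr_mul_lt _ hv.2.2 (by omega)]
        exact (sub_eq_zero.1 this).symm

/-- Cocycles of large weight, or with many odd generators, bound elements of the same weight. -/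
theorem acyclic_wt {N : ℕ} (hN : M.toCDGA.Vanish N) (n w₁ : ℕ)
    (hc : ∀ w ≥ w₁, n + 1 ≤ w ∧ (M.tO 1 0 < w - (n + 1) + M.tE 1 0 ∨
      M.tO M.wt 0 < w + M.tE M.wt 0)) (z : M.A) (hz : z ∈ M.grading (n + 1)) (hdz : M.d z = 0)
    (hw : ∀ w < w₁, M.pr M.wt w z = 0) :
    ∃ u ∈ M.grading n, (∀ w < w₁, M.pr M.wt w u = 0) ∧ M.d u = z := by
  -- The weight of an element of degree `n + 1` is at most `2 * (n + 1)`.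
  induction hs : 2 * (n + 1) + 1 - w₁ generalizing w₁ z with
  | zero =>
    refine ⟨0, zero_mem _, by simp, ?_⟩
    rw [map_zero]
    refine pr_ext M.wt fun w => ?_
    rw [map_zero]
    by_cases h : w < w₁
    · rw [hw w h]
    · rw [← M.pj_of_mem hz, M.pr_wt_gt (by omega)]
  | succ s ih =>
    obtain ⟨h1, h2⟩ := hc w₁ le_rfl
    obtain ⟨k, rfl⟩ := Nat.exists_eq_add_of_le h1
    obtain ⟨c, hc1, hc2⟩ := M.acyclic hN 0 (Nat.zero_le _) k (n + 1 + k)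
      (M.pr M.wt (n + 1 + k) z) ⟨M.q_zero _, by rw [pr_pr_self, if_pos rfl], by
        rw [← M.pj_of_mem hz, pr_lw]⟩ (by
        rw [dq_def, q_zero, ← M.pr_d_of hw, hdz, map_zero]) (by omega)
    rw [dq_def, q_zero] at hc2
    set u := M.pj n c with hu
    have hu1 : M.pr M.wt (n + 1 + k) u = u := by rw [pr_pj, hc1.2.1]
    have hu3 : ∀ w, w ≠ n + 1 + k → M.pr M.wt w u = 0 := fun w h => by
      rw [← hu1, pr_pr_self, if_neg (Ne.symm h)]
    have hu2 : M.pr M.wt (n + 1 + k) (M.d u) = M.pr M.wt (n + 1 + k) z := by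
      rw [M.pr_d_of fun w h => hu3 w (by omega), hu1, hu, ← pj_ds, hc2, ← pr_pj, M.pj_of_mem hz]
    obtain ⟨y, hy1, hy2, hy3⟩ := ih (n + 1 + k + 1) (fun w h => hc w (by omega)) (z - M.d u)
      (sub_mem hz (M.d_mem (M.pj_mem _ _))) (by rw [map_sub, hdz, M.d_sq, sub_zero]) (by
        intro w h
        rcases Nat.lt_succ_iff_lt_or_eq.1 h with h | rfl
        · rw [map_sub, hw w h, M.pr_d_lt (w := n + 1 + k) (fun w h => hu3 w (by omega)) w h,
            sub_zero]
        · rw [map_sub, hu2, sub_self]) (by omega)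
    refine ⟨u + y, add_mem (M.pj_mem _ _) hy1, fun w h => ?_, ?_⟩
    · rw [map_add, hu3 w (by omega), hy2 w (by omega), add_zero]
    · rw [map_add, hy3]; abel

end Sys

end RHT

/-! ### Euler characteristics and generating functions -/

namespace RHT
open Polynomial

theorem finrank_map_add {E F : Type} [AddCommGroup E] [Module ℚ E] [AddCommGroup F] [Module ℚ F]
    (f : E →ₗ[ℚ] F) (S : Submodule ℚ E) [FiniteDimensional ℚ S] :
    Module.finrank ℚ (S.map f) + Module.finrank ℚ ↥(S ⊓ LinearMap.ker f) = Module.finrank ℚ S := by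
  have h := LinearMap.finrank_range_add_finrank_ker (f.domRestrict S)
  rw [LinearMap.range_domRestrict, LinearMap.ker_domRestrict] at h
  rw [← h, ← Submodule.finrank_map_subtype_eq S (Submodule.comap S.subtype (LinearMap.ker f)),
    Submodule.map_comap_subtype]

namespace CDGA
variable (C : CDGA)

theorem coboundaries_zero : C.coboundaries 0 = ⊥ := by
  rw [eq_bot_iff]
  rintro x ⟨hx, y, rfl⟩
  rw [Submodule.mem_bot, ← C.pj_of_mem hx, C.pj_zero_d]

theorem coboundaries_succ (i : ℕ) : C.coboundaries (i + 1) = (C.grading i).map C.d := by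
  apply le_antisymm
  · rintro x ⟨hx, y, rfl⟩
    exact ⟨C.pj i y, C.pj_mem i y, by rw [← C.pj_d, C.pj_of_mem hx]⟩
  · rintro _ ⟨y, hy, rfl⟩
    exact ⟨C.d_mem hy, y, rfl⟩

theorem coboundaries_le (i : ℕ) : C.coboundaries i ≤ C.cocycles i := by
  rintro x ⟨hx, y, rfl⟩
  exact ⟨hx, C.d_sq y⟩

theorem finrank_cohomology (i : ℕ) [FiniteDimensional ℚ (C.grading i)] :
    Module.finrank ℚ (C.cohomology i) + Module.finrank ℚ (C.coboundaries i) =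
      Module.finrank ℚ (C.cocycles i) := by
  have : FiniteDimensional ℚ (C.cocycles i) := Submodule.finiteDimensional_of_le inf_le_left
  rw [← Submodule.finrank_quotient_add_finrank
    (Submodule.comap (C.cocycles i).subtype (C.coboundaries i)),
    ← Submodule.finrank_map_subtype_eq _ (Submodule.comap _ (C.coboundaries i)),
    Submodule.map_comap_subtype, inf_eq_right.2 (C.coboundaries_le i)]

/-- The quotient by an acyclic subcomplex which exhausts the complex in large degrees has the
Euler characteristic of the cohomology. -/
theorem euler_quotient (hfin : ∀ i, FiniteDimensional ℚ (C.grading i))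
    (G : ℕ → Submodule ℚ C.A) (hG : ∀ i, G i ≤ C.grading i)
    (hGd : ∀ i, ∀ x ∈ G i, C.d x ∈ G (i + 1)) (hG0 : G 0 = ⊥)
    (hac : ∀ i, ∀ x ∈ G (i + 1), C.d x = 0 → ∃ u ∈ G i, C.d u = x)
    (I : ℕ) (hI : C.grading I ≤ G I) :
    ∑ i ∈ Finset.range (I + 1), (-1 : ℤ) ^ i *
      ((Module.finrank ℚ (C.grading i) : ℤ) - Module.finrank ℚ (G i)) =
    ∑ i ∈ Finset.range (I + 1), (-1 : ℤ) ^ i * (Module.finrank ℚ (C.cohomology i) : ℤ) := by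
  have hGf : ∀ i, FiniteDimensional ℚ (G i) := fun i => Submodule.finiteDimensional_of_le (hG i)
  set b : ℕ → ℤ := fun i => Module.finrank ℚ (C.coboundaries i) with hb
  set z : ℕ → ℤ := fun i => Module.finrank ℚ (C.cocycles i) with hz
  let gb : ℕ → ℤ := fun i => match i with
    | 0 => 0
    | i + 1 => Module.finrank ℚ ((G i).map C.d)
  have h1 : ∀ i, (Module.finrank ℚ (C.grading i) : ℤ) = b (i + 1) + z i := fun i => by
    have h := finrank_map_add C.d (C.grading i)
    rw [← C.coboundaries_succ] at h
    change (Module.finrank ℚ (C.grading i) : ℤ) = Module.finrank ℚ (C.coboundaries (i + 1)) +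
      Module.finrank ℚ ↥(C.grading i ⊓ LinearMap.ker C.d)
    exact_mod_cast h.symm
  have h2 : ∀ i, (Module.finrank ℚ (C.cohomology i) : ℤ) = z i - b i := fun i => by
    have := C.finrank_cohomology i
    rw [hb, hz]; simp only [← this]; push_cast; ring
  have h3 : ∀ i, (Module.finrank ℚ (G i) : ℤ) = gb (i + 1) + gb i := fun i => by
    rw [← finrank_map_add C.d (G i)]
    push_cast
    congr 1
    cases i with
    | zero =>
      rw [hG0, bot_inf_eq]; simp [gb]
    | succ i =>
      have : G (i + 1) ⊓ LinearMap.ker C.d = (G i).map C.d := by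
        apply le_antisymm
        · rintro x ⟨hx, hx'⟩
          obtain ⟨u, hu, rfl⟩ := hac i x hx hx'
          exact ⟨u, hu, rfl⟩
        · rintro _ ⟨u, hu, rfl⟩
          exact ⟨hGd i u hu, C.d_sq u⟩
      rw [this]
  have hb0 : b 0 = 0 := by
    change (Module.finrank ℚ (C.coboundaries 0) : ℤ) = 0
    rw [C.coboundaries_zero, finrank_bot]; rfl
  have key : ∀ n, ∑ i ∈ Finset.range n, (-1 : ℤ) ^ i *
      ((Module.finrank ℚ (C.grading i) : ℤ) - Module.finrank ℚ (G i)) =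
      ∑ i ∈ Finset.range n, (-1 : ℤ) ^ i * (Module.finrank ℚ (C.cohomology i) : ℤ)
        - (-1) ^ n * (b n - gb n) := by
    intro n
    induction n with
    | zero => simp [hb0, gb]
    | succ n ih =>
      rw [Finset.sum_range_succ, ih, Finset.sum_range_succ, h1, h2, h3]; ring
  rw [key]
  have : b (I + 1) = gb (I + 1) := by
    change (Module.finrank ℚ (C.coboundaries (I + 1)) : ℤ) = Module.finrank ℚ ((G I).map C.d)
    rw [C.coboundaries_succ, le_antisymm hI (hG I)]
  rw [this, sub_self, mul_zero, sub_zero]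

end CDGA

namespace Sys
variable (M : Sys)

theorem deg_ge_length (l : List (Fin M.r)) : l.length ≤ (l.map M.deg).sum := by
  induction l with
  | nil => simp
  | cons i l ih => have := M.deg_ge i; simp; omega

/-- The span of the monomials of length at most `n`. -/
def short (n : ℕ) : Submodule ℚ M.A := Submodule.span ℚ (M.mon '' {l | l.length ≤ n})

instance short_fin (n : ℕ) : FiniteDimensional ℚ (M.short n) :=
  FiniteDimensional.span_of_finite ℚ ((List.finite_length_le (Fin M.r) n).image _)

theorem pj_short (n : ℕ) (a) : M.pj n a ∈ M.short n := by
  refine mon_induction (p := fun a => M.pj n a ∈ M.short n) (fun l => ?_) (by simp) ?_ ?_ a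
  · rw [← pr_deg, pr_mon]
    split_ifs with h
    · exact Submodule.subset_span ⟨l, h ▸ M.deg_ge_length l, rfl⟩
    · exact zero_mem _
  · intro x y hx hy; rw [map_add]; exact add_mem hx hy
  · intro c x hx; rw [map_smul]; exact Submodule.smul_mem _ _ hx

theorem pr_short (n : ℕ) (a) : M.pr M.wt n a ∈ M.short n := by
  refine mon_induction (p := fun a => M.pr M.wt n a ∈ M.short n) (fun l => ?_) (by simp) ?_ ?_ a
  · rw [pr_mon]
    split_ifs with h
    · refine Submodule.subset_span ⟨l, ?_, rfl⟩
      have := M.sum_wt l; have := M.deg_ge_length l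
      change l.length ≤ n; omega
    · exact zero_mem _
  · intro x y hx hy; rw [map_add]; exact add_mem hx hy
  · intro c x hx; rw [map_smul]; exact Submodule.smul_mem _ _ hx

instance grading_fin (i : ℕ) : FiniteDimensional ℚ (M.grading i) :=
  Submodule.finiteDimensional_of_le (S₂ := M.short i) fun a ha =>
    M.pj_of_mem ha ▸ M.pj_short i a

/-- The space of elements satisfying `Pc`. -/
def S (j w k : ℕ) : Submodule ℚ M.A where
  carrier := {a | M.Pc j w k a}
  add_mem' := Pc.add
  zero_mem' := ⟨map_zero _, map_zero _, map_zero _⟩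
  smul_mem' c _ h := ⟨by rw [map_smul, h.1], by rw [map_smul, h.2.1], by rw [map_smul, h.2.2]⟩

theorem mem_S {j w k : ℕ} {a : M.A} : a ∈ M.S j w k ↔ M.Pc j w k a := Iff.rfl

instance S_fin (j w k : ℕ) : FiniteDimensional ℚ (M.S j w k) :=
  Submodule.finiteDimensional_of_le (S₂ := M.short w) fun a ha =>
    (M.mem_S.1 ha).2.1 ▸ M.pr_short w a

theorem Pc.v (i : Fin M.r) : M.Pc i (M.wt i) (M.lw i) (M.v i) :=
  ⟨by rw [q_v, if_neg (lt_irrefl _)], M.pr_v _ i, M.pr_v _ i⟩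

/-- The dimension of `S j w k`. -/
noncomputable def h (j w k : ℕ) : ℤ := Module.finrank ℚ (M.S j w k)

theorem h_step (i : Fin M.r) (w k : ℕ) : M.h i w k = M.h (i + 1) w k +
    if M.wt i ≤ w ∧ M.lw i ≤ k then M.h (M.co i) (w - M.wt i) (k - M.lw i) else 0 := by
  have h1 := finrank_map_add (M.q (i + 1)).toLinearMap (M.S i w k)
  have h2 : (M.S i w k).map (M.q (i + 1)).toLinearMap = M.S (i + 1) w k := by
    apply le_antisymm
    · rintro _ ⟨a, ha, rfl⟩; exact Pc.q ha
    · intro a ha; exact ⟨a, Pc.mono (Nat.le_succ _) ha, ha.1⟩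
  rw [h2] at h1
  rw [h, ← h1, h]
  push_cast
  congr 1
  have hv := Pc.v M i
  have hK : ∀ a ∈ M.S i w k ⊓ LinearMap.ker (M.q (i + 1)).toLinearMap, a = M.v i * M.Q i a := by
    rintro a ⟨ha, ha'⟩
    have := M.q_eq i a
    rw [ha.1, show M.q (i + 1) a = 0 from ha', zero_add] at this
    exact this
  split_ifs with hwk
  · obtain ⟨⟨w, rfl⟩, k, rfl⟩ : (∃ w', w = M.wt i + w') ∧ ∃ k', k = M.lw i + k' :=
      ⟨⟨w - M.wt i, by omega⟩, k - M.lw i, by omega⟩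
    rw [Nat.add_sub_cancel_left, Nat.add_sub_cancel_left, h]
    have h3 := finrank_map_add (LinearMap.mulLeft ℚ (M.v i)) (M.S (M.co i) w k)
    have h4 : M.S (M.co i) w k ⊓ LinearMap.ker (LinearMap.mulLeft ℚ (M.v i)) = ⊥ := by
      rw [eq_bot_iff]
      rintro a ⟨ha, ha'⟩
      exact M.v_cancel i (Pc.mono le_rfl ha).1 (map_zero _) (by
        rw [mul_zero]; exact ha')
    rw [h4, finrank_bot, add_zero] at h3
    rw [← h3]
    have : M.S i (M.wt i + w) (M.lw i + k) ⊓ LinearMap.ker (M.q (i + 1)).toLinearMap =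
        (M.S (M.co i) w k).map (LinearMap.mulLeft ℚ (M.v i)) := by
      apply le_antisymm
      · intro a ha
        refine ⟨M.pr M.wt w (M.pr M.lw k (M.Q i a)), ⟨?_, ?_, ?_⟩, ?_⟩
        · rw [← pr_q, ← pr_q, Q_mem]
        · rw [pr_pr_self, if_pos rfl]
        · rw [pr_pr, pr_pr_self, if_pos rfl]
        · rw [LinearMap.mulLeft_apply, ← M.pr_mul_left _ hv.2.1, ← M.pr_mul_left _ hv.2.2,
            ← hK a ha, ha.1.2.2, ha.1.2.1]
      · rintro _ ⟨a, ha, rfl⟩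
        refine ⟨hv.mul (Pc.mono (M.le_co i) ha), ?_⟩
        change M.q (i + 1) (M.v i * a) = 0
        rw [map_mul, q_v, if_pos (Nat.lt_succ_self _), zero_mul]
    rw [this]
  · have : M.S i w k ⊓ LinearMap.ker (M.q (i + 1)).toLinearMap = ⊥ := by
      rw [eq_bot_iff]
      intro a ha
      rw [Submodule.mem_bot]
      by_cases hw : M.wt i ≤ w
      · rw [← ha.1.2.2, hK a ha, M.pr_mul_lt _ hv.2.2 (by omega)]
      · rw [← ha.1.2.1, hK a ha, M.pr_mul_lt _ hv.2.1 (by omega)]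
    rw [this, finrank_bot]; rfl

theorem h_zero {j w k : ℕ} (hk : w < k) : M.h j w k = 0 := by
  have : M.S j w k = ⊥ := by
    rw [eq_bot_iff]
    intro a ha
    rw [Submodule.mem_bot, ← ha.2.2, ← ha.2.1]
    refine DFunLike.congr_fun (f := (M.pr M.lw k).comp (M.pr M.wt w)) (g := 0)
      (lin_ext fun l => ?_) a
    rw [LinearMap.comp_apply, pr_mon, LinearMap.zero_apply]
    split_ifs
    · rw [pr_mon, if_neg]; have := M.sum_wt l; omega
    · simp
  rw [h, this, finrank_bot]; rfl

/-- The Euler characteristic, for the number of odd generators, of the part of weight `w` of the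
quotient by the first `j` generators. -/
noncomputable def e (j w : ℕ) : ℤ := ∑ k ∈ Finset.range (w + 1), (-1) ^ k * M.h j w k

theorem e_eq {j w n : ℕ} (hn : w < n) : M.e j w = ∑ k ∈ Finset.range n, (-1) ^ k * M.h j w k := by
  refine Finset.sum_subset (Finset.range_subset_range.2 hn) fun k _ hk => ?_
  rw [Finset.mem_range] at hk
  rw [h_zero, mul_zero]; omega

theorem e_even {i : Fin M.r} (hi : Even (M.deg i)) (w : ℕ) :
    M.e i w = M.e (i + 1) w + if M.wt i ≤ w then M.e i (w - M.wt i) else 0 := by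
  have step : ∀ k, M.h i w k = M.h (i + 1) w k +
      if M.wt i ≤ w then M.h i (w - M.wt i) k else 0 := fun k => by
    rw [M.h_step i, M.lw_even hi, M.co_even hi]; simp
  rw [e, e, Finset.sum_congr rfl fun k _ => by rw [step k, mul_add], Finset.sum_add_distrib]
  congr 1
  split_ifs with hw
  · rw [M.e_eq (n := w + 1) (by omega)]
  · simp

theorem e_odd {i : Fin M.r} (hi : Odd (M.deg i)) (w : ℕ) :
    M.e i w = M.e (i + 1) w - if M.wt i ≤ w then M.e (i + 1) (w - M.wt i) else 0 := by
  rw [M.e_eq (n := w + 2) (by omega), M.e_eq (n := w + 2) (by omega)]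
  have step : ∀ k, M.h i w k = M.h (i + 1) w k +
      if M.wt i ≤ w ∧ 1 ≤ k then M.h (i + 1) (w - M.wt i) (k - 1) else 0 := fun k => by
    rw [M.h_step i, M.lw_odd hi, M.co_odd hi]
  rw [Finset.sum_congr rfl fun k _ => by rw [step k, mul_add], Finset.sum_add_distrib,
    sub_eq_add_neg]
  congr 1
  rw [Finset.sum_range_succ', if_neg (fun h => absurd h.2 (by omega)), mul_zero, add_zero]
  split_ifs with hw
  · rw [M.e_eq (n := w + 1) (by omega), ← Finset.sum_neg_distrib]
    refine Finset.sum_congr rfl fun k _ => ?_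
    rw [if_pos ⟨hw, by omega⟩, pow_succ, Nat.add_sub_cancel]; ring
  · rw [neg_zero]
    exact Finset.sum_eq_zero fun k _ => by rw [if_neg (fun h => hw h.1), mul_zero]

theorem e_last (w : ℕ) : M.e M.r w = if w = 0 then 1 else 0 := by
  obtain ⟨φ⟩ : Nonempty (M.A →ₐ[ℚ] ℚ) := by
    obtain ⟨φ, -⟩ := M.lift ℚ (AlgHom.id ℚ ℚ) isSuper_id 0 (by simp)
    exact ⟨φ⟩
  have : Nontrivial M.A := φ.toRingHom.domain_nontrivial
  have h0 : ∀ w k, w ≠ 0 → M.h M.r w k = 0 := by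
    intro w k hw
    have : M.S M.r w k = ⊥ := by
      rw [eq_bot_iff]
      intro a ha
      obtain ⟨c, hc⟩ := M.q_r a
      rw [Submodule.mem_bot, ← ha.2.1, ← ha.1, hc, map_smul, ← M.pr_one M.wt, pr_pr_self,
        if_neg (Ne.symm hw), smul_zero]
    rw [h, this, finrank_bot]; rfl
  split_ifs with hw
  · subst hw
    have : M.S M.r 0 0 = Submodule.span ℚ {1} := by
      apply le_antisymm
      · intro a ha
        obtain ⟨c, hc⟩ := M.q_r a
        rw [← ha.1, hc]
        exact Submodule.smul_mem _ _ (Submodule.mem_span_singleton_self _)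
      · rw [Submodule.span_singleton_le_iff_mem]
        exact ⟨map_one _, M.pr_one _, M.pr_one _⟩
    have h1 : M.h M.r 0 0 = 1 := by
      rw [h, this, finrank_span_singleton (one_ne_zero' M.A)]; rfl
    simp [e, h1]
  · exact Finset.sum_eq_zero fun k _ => by rw [h0 w k hw, mul_zero]

/-- The generating function of the Euler characteristics `e`. -/
noncomputable def ps (j : ℕ) : PowerSeries ℤ := PowerSeries.mk (M.e j)

theorem ps_even {i : Fin M.r} (hi : Even (M.deg i)) :
    M.ps i * (1 - PowerSeries.X ^ M.wt i) = M.ps (i + 1) := by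
  ext w
  rw [mul_comm, sub_mul, one_mul, map_sub, PowerSeries.coeff_X_pow_mul']
  simp only [ps, PowerSeries.coeff_mk]
  rw [M.e_even hi]; ring

theorem ps_odd {i : Fin M.r} (hi : Odd (M.deg i)) :
    M.ps i = (1 - PowerSeries.X ^ M.wt i) * M.ps (i + 1) := by
  ext w
  rw [sub_mul, one_mul, map_sub, PowerSeries.coeff_X_pow_mul']
  simp only [ps, PowerSeries.coeff_mk]
  rw [M.e_odd hi]

theorem one_sub_pow (a : ℕ) (ha : a ≠ 0) : ∃ g : ℤ[X], g.eval 1 ≠ 0 ∧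
    ((1 - PowerSeries.X ^ a : PowerSeries ℤ)) = (((1 - X) * g : ℤ[X]) : PowerSeries ℤ) := by
  refine ⟨∑ i ∈ Finset.range a, X ^ i, ?_, ?_⟩
  · simp [eval_finsetSum, ha]
  · rw [mul_neg_geom_sum]; simp

/-- The generating function is a product of factors `1 - X ^ a`, one in the numerator for each odd
generator and one in the denominator for each even generator. Each factor is `1 - X` times a
polynomial that does not vanish at `1`. -/
theorem ps_order (j : ℕ) (hj : j ≤ M.r) : ∃ g g' : ℤ[X], g.eval 1 ≠ 0 ∧
    M.ps j * (((1 - X) ^ M.tE 1 j * g : ℤ[X]) : PowerSeries ℤ) =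
      (((1 - X) ^ M.tO 1 j * g' : ℤ[X]) : PowerSeries ℤ) := by
  induction hs : M.r - j generalizing j with
  | zero =>
    obtain rfl : j = M.r := by omega
    refine ⟨1, 1, by simp, ?_⟩
    have h0 : M.tE 1 M.r = 0 ∧ M.tO 1 M.r = 0 :=
      ⟨Finset.sum_eq_zero fun i _ => if_neg (by have := i.2; omega),
        Finset.sum_eq_zero fun i _ => if_neg (by have := i.2; omega)⟩
    rw [h0.1, h0.2]
    have : M.ps M.r = 1 := by
      ext w; rw [ps, PowerSeries.coeff_mk, e_last, PowerSeries.coeff_one]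
    simp [this]
  | succ s ih =>
    obtain ⟨g, g', hg, h⟩ := ih (j + 1) (by omega) (by omega)
    obtain ⟨i, rfl⟩ : ∃ i : Fin M.r, j = i := ⟨⟨j, by omega⟩, rfl⟩
    have hwt : M.wt i ≠ 0 := by have := M.deg_ge i; unfold wt; omega
    obtain ⟨f, hf, hf'⟩ := one_sub_pow (M.wt i) hwt
    rcases Nat.even_or_odd (M.deg i) with hi | hi
    · rw [M.tE_even _ hi, M.tO_even _ hi]
      refine ⟨g * f, g', by rw [eval_mul]; exact mul_ne_zero hg hf, ?_⟩
      rw [← h, ← M.ps_even hi, hf', Pi.one_apply, pow_succ]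
      push_cast; ring
    · rw [M.tE_odd _ hi, M.tO_odd _ hi]
      refine ⟨g, g' * f, hg, ?_⟩
      rw [M.ps_odd hi, mul_assoc, h, hf', Pi.one_apply, pow_succ]
      push_cast; ring

/-- If the partial sums of the Euler characteristics `e` are eventually a nonzero constant, there are at most as many odd
generators as even ones. -/
theorem tO_le_tE (m₀ : ℕ) (χ : ℤ) (hχ : χ ≠ 0)
    (h : ∀ m ≥ m₀, ∑ w ∈ Finset.range m, M.e 0 w = χ) : M.tO 1 0 ≤ M.tE 1 0 := by
  obtain ⟨g, g', hg, hgg⟩ := M.ps_order 0 (Nat.zero_le _)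
  have he : ∀ m ≥ m₀, M.e 0 m = 0 := fun m hm => by
    have h1 := h m hm
    have h2 := h (m + 1) (by omega)
    rw [Finset.sum_range_succ, h1] at h2
    linarith
  let p : ℤ[X] := ∑ w ∈ Finset.range m₀, C (M.e 0 w) * X ^ w
  have hp : M.ps 0 = (p : PowerSeries ℤ) := by
    ext n
    rw [Polynomial.coeff_coe, ps, PowerSeries.coeff_mk, finsetSum_coeff]
    simp only [coeff_C_mul, coeff_X_pow, mul_ite, mul_one, mul_zero, Finset.sum_ite_eq,
      Finset.mem_range]
    split_ifs with hn
    · rfl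
    · exact he n (by omega)
  have hp1 : p.eval 1 = χ := by
    rw [← h m₀ le_rfl]
    simp [p, eval_finsetSum]
  rw [hp, ← Polynomial.coe_mul, Polynomial.coe_inj] at hgg
  by_contra hlt
  obtain ⟨t, ht⟩ := Nat.exists_eq_add_of_lt (not_le.1 hlt)
  rw [ht, show M.tE 1 0 + t + 1 = M.tE 1 0 + (t + 1) by ring, pow_add, mul_left_comm,
    mul_assoc] at hgg
  have hX : ((1 - X : ℤ[X])) ^ M.tE 1 0 ≠ 0 := pow_ne_zero _ fun h0 => by
    have := congrArg (eval 0) h0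
    simp at this
  have := congrArg (eval 1) (mul_left_cancel₀ hX hgg)
  simp [hp1, hχ, hg] at this

end Sys

end RHT

/-! ### Exactness of odd cocycles -/

namespace RHT

namespace Sys
variable (M : Sys)

/-- The elements of degree `i` all of whose components have weight at least `m`. -/
def G (m i : ℕ) : Submodule ℚ M.A where
  carrier := {a | a ∈ M.grading i ∧ ∀ w < m, M.pr M.wt w a = 0}
  add_mem' ha hb := ⟨add_mem ha.1 hb.1, fun w hw => by rw [map_add, ha.2 w hw, hb.2 w hw, add_zero]⟩
  zero_mem' := ⟨zero_mem _, fun _ _ => map_zero _⟩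
  smul_mem' c _ h := ⟨Submodule.smul_mem _ c h.1, fun w hw => by rw [map_smul, h.2 w hw, smul_zero]⟩

theorem mem_G {m i : ℕ} {a : M.A} :
    a ∈ M.G m i ↔ a ∈ M.grading i ∧ ∀ w < m, M.pr M.wt w a = 0 := Iff.rfl

/-- The component of degree `i` and weight `w`. -/
def W (w i : ℕ) : Submodule ℚ M.A where
  carrier := {a | a ∈ M.grading i ∧ M.pr M.wt w a = a}
  add_mem' ha hb := ⟨add_mem ha.1 hb.1, by rw [map_add, ha.2, hb.2]⟩
  zero_mem' := ⟨zero_mem _, map_zero _⟩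
  smul_mem' c _ h := ⟨Submodule.smul_mem _ c h.1, by rw [map_smul, h.2]⟩

theorem mem_W {w i : ℕ} {a : M.A} : a ∈ M.W w i ↔ a ∈ M.grading i ∧ M.pr M.wt w a = a := Iff.rfl

theorem pr_mem {g : Fin M.r → ℕ} {n i : ℕ} {a : M.A} (ha : a ∈ M.grading i) :
    M.pr g n a ∈ M.grading i := by
  rw [← M.pj_of_mem ha, M.pr_pj]
  exact M.pj_mem _ _

instance G_fin (m i : ℕ) : FiniteDimensional ℚ (M.G m i) :=
  Submodule.finiteDimensional_of_le (S₂ := M.grading i) fun _ ha => ha.1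

theorem finrank_G (m i : ℕ) : (Module.finrank ℚ (M.grading i) : ℤ) = Module.finrank ℚ (M.G m i) +
    ∑ w ∈ Finset.range m, (Module.finrank ℚ (M.W w i) : ℤ) := by
  induction m with
  | zero =>
    have : M.G 0 i = M.grading i := le_antisymm (fun _ h => h.1) fun a ha => ⟨ha, by simp⟩
    rw [this]; simp
  | succ m ih =>
    rw [ih, ← finrank_map_add (M.pr M.wt m) (M.G m i), Finset.sum_range_succ]
    have h1 : (M.G m i).map (M.pr M.wt m) = M.W m i := by
      apply le_antisymm
      · rintro _ ⟨a, ha, rfl⟩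
        exact ⟨M.pr_mem ha.1, by rw [pr_pr_self, if_pos rfl]⟩
      · rintro a ⟨ha, hw⟩
        refine ⟨a, ⟨ha, fun w hwm => ?_⟩, hw⟩
        rw [← hw, pr_pr_self, if_neg (by omega)]
    have h2 : M.G m i ⊓ LinearMap.ker (M.pr M.wt m) = M.G (m + 1) i := by
      ext a
      constructor
      · rintro ⟨ha, h⟩
        refine ⟨ha.1, fun w hw => ?_⟩
        rcases Nat.lt_succ_iff_lt_or_eq.1 hw with hw | rfl
        · exact ha.2 w hw
        · exact h
      · exact fun h => ⟨⟨h.1, fun w hw => h.2 w (by omega)⟩, h.2 m (by omega)⟩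
    rw [h1, h2]; push_cast; ring

theorem W_lt {w i : ℕ} (h : w < i) : M.W w i = ⊥ := by
  rw [eq_bot_iff]
  rintro a ⟨ha, hw⟩
  rw [Submodule.mem_bot, ← hw, ← M.pj_of_mem ha, M.pr_wt_lt h]

theorem W_eq (i k : ℕ) : M.W (i + k) i = M.S 0 (i + k) k := by
  ext a
  constructor
  · rintro ⟨ha, hw⟩
    refine ⟨M.q_zero a, hw, ?_⟩
    have := M.pr_lw i k a
    rwa [M.pj_of_mem ha, hw] at this
  · rintro ⟨-, hw, hk⟩
    refine ⟨?_, hw⟩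
    rw [← hk, ← hw]
    have : M.pr M.deg i ∘ₗ M.pr M.lw k ∘ₗ M.pr M.wt (i + k) = M.pr M.lw k ∘ₗ M.pr M.wt (i + k) :=
      lin_ext fun l => by
        simp only [LinearMap.comp_apply, pr_mon]
        split_ifs with h
        · rw [pr_mon]
          split_ifs with h'
          · rw [pr_mon, if_pos]
            have := M.sum_wt l; omega
          · simp
        · simp
    have h2 := LinearMap.congr_fun this a
    simp only [LinearMap.comp_apply, pr_deg] at h2
    rw [← h2]
    exact M.pj_mem _ _

theorem e_W (w n : ℕ) (hn : w < n) :
    ∑ i ∈ Finset.range n, (-1 : ℤ) ^ i * (Module.finrank ℚ (M.W w i) : ℤ) = M.e 0 w := by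
  have h1 : ∑ i ∈ Finset.range (w + 1), (-1 : ℤ) ^ i * (Module.finrank ℚ (M.W w i) : ℤ) =
      ∑ i ∈ Finset.range n, (-1 : ℤ) ^ i * (Module.finrank ℚ (M.W w i) : ℤ) := by
    refine Finset.sum_subset (Finset.range_subset_range.2 hn) fun i _ hi => ?_
    rw [Finset.mem_range] at hi
    rw [M.W_lt (by omega), finrank_bot]; simp
  rw [← h1, ← Finset.sum_range_reflect, e]
  refine Finset.sum_congr rfl fun k hk => ?_
  rw [Finset.mem_range] at hk
  obtain ⟨i, rfl⟩ : ∃ i, w = i + k := ⟨w - k, by omega⟩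
  rw [show i + k + 1 - 1 - k = i by omega, M.W_eq, h]
  rcases Nat.even_or_odd (i + k) with hw | hw
  · congr 1
    rcases Nat.even_or_odd i with hi | hi
    · rw [hi.neg_one_pow, ((Nat.even_add.1 hw).1 hi).neg_one_pow]
    · rw [hi.neg_one_pow, Odd.neg_one_pow]
      rw [← Nat.not_even_iff_odd] at hi ⊢
      exact fun h => hi ((Nat.even_add.1 hw).2 h)
  · have : M.S 0 (i + k) k = ⊥ := by
      rw [eq_bot_iff]
      intro a ha
      rw [Submodule.mem_bot, ← ha.2.1, M.pr_wt_odd hw]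
    rw [this, finrank_bot]; simp

/-- The Euler characteristics of the parts of weight `w` add up to the Euler characteristic of the
cohomology, because the part of large weight is an acyclic subcomplex. -/
theorem euler {N : ℕ} (hN : M.toCDGA.Vanish N) (N₀ : ℕ)
    (h₀ : ∀ i, N₀ ≤ i → Subsingleton (M.toCDGA.cohomology i)) (m : ℕ) (hm : M.tO M.wt 0 < m) :
    ∑ w ∈ Finset.range m, M.e 0 w =
      ∑ i ∈ Finset.range N₀, (-1 : ℤ) ^ i * (Module.finrank ℚ (M.toCDGA.cohomology i) : ℤ) := by
  have h := M.toCDGA.euler_quotient (fun i => M.grading_fin i) (M.G m) (fun i x hx => hx.1)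
    (fun i x hx => ⟨M.d_mem hx.1, M.pr_d_lt hx.2⟩) ?_ ?_ (max m N₀) ?_
  · have h1 : ∑ i ∈ Finset.range (max m N₀ + 1), (-1 : ℤ) ^ i *
        (Module.finrank ℚ (M.toCDGA.cohomology i) : ℤ) = ∑ i ∈ Finset.range N₀, (-1 : ℤ) ^ i *
        (Module.finrank ℚ (M.toCDGA.cohomology i) : ℤ) := by
      symm
      refine Finset.sum_subset (Finset.range_subset_range.2 (by omega)) fun i _ hi => ?_
      rw [Finset.mem_range, not_lt] at hi
      have := h₀ i hi
      rw [Module.finrank_zero_of_subsingleton]; simp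
    rw [← h1, ← h]
    have h2 : ∀ i, (-1 : ℤ) ^ i * ((Module.finrank ℚ (M.grading i) : ℤ) -
        Module.finrank ℚ (M.G m i)) = ∑ w ∈ Finset.range m,
          (-1 : ℤ) ^ i * (Module.finrank ℚ (M.W w i) : ℤ) := fun i => by
      rw [M.finrank_G m i, add_sub_cancel_left, Finset.mul_sum]
    rw [Finset.sum_congr rfl fun i _ => h2 i, Finset.sum_comm]
    refine Finset.sum_congr rfl fun w hw => ?_
    rw [Finset.mem_range] at hw
    rw [M.e_W _ _ (by omega)]
  · rw [eq_bot_iff]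
    rintro a ⟨ha, h⟩
    obtain ⟨c, rfl⟩ := M.exists_scalar ha
    have := h 0 (by omega)
    rwa [map_smul, pr_one] at this
  · rintro n z ⟨hz, hw⟩ hd
    obtain ⟨u, hu, hu', rfl⟩ := M.acyclic_wt hN n (max m (n + 1)) (fun w hw => ⟨by omega, by
      right; omega⟩) z hz hd fun w hw' => by
        by_cases h : w < m
        · exact hw w h
        · rw [← M.pj_of_mem hz, M.pr_wt_lt (by omega)]
    exact ⟨u, ⟨hu, fun w hw => hu' w (by omega)⟩, rfl⟩
  · exact fun a ha => ⟨ha, fun w hw => by rw [← M.pj_of_mem ha, M.pr_wt_lt (by omega)]⟩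

/-- Positive Euler characteristic forces at least as many even as odd generators. -/
theorem tO_le {N : ℕ} (hN : M.toCDGA.Vanish N) (N₀ : ℕ)
    (h₀ : ∀ i, N₀ ≤ i → Subsingleton (M.toCDGA.cohomology i))
    (hχ : 0 < ∑ i ∈ Finset.range N₀, (-1 : ℤ) ^ i *
      (Module.finrank ℚ (M.toCDGA.cohomology i) : ℤ)) : M.tO 1 0 ≤ M.tE 1 0 :=
  M.tO_le_tE (M.tO M.wt 0 + 1) _ hχ.ne' fun m hm => M.euler hN N₀ h₀ m (by omega)

/-- A cocycle of odd degree bounds an element all of whose monomials contain an odd generator: its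
monomials contain an odd generator themselves, and the leading part of `d` lowers their number
by one. -/
theorem exact_odd {N : ℕ} (hN : M.toCDGA.Vanish N) (hc : M.tO 1 0 ≤ M.tE 1 0) {n : ℕ}
    (hn : Even n) {z : M.A} (hz : z ∈ M.grading (n + 1)) (hd : M.d z = 0) :
    ∃ u ∈ M.grading n, M.pr M.lw 0 u = 0 ∧ M.d u = z := by
  obtain ⟨u, hu, hw, hz⟩ := M.acyclic_wt hN n (n + 2) (fun w hw => ⟨by omega, by left; omega⟩)
    z hz hd fun w hw => by
      rcases (show w < n + 1 ∨ w = n + 1 by omega) with h | rfl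
      · rw [← M.pj_of_mem hz, M.pr_wt_lt h]
      · exact M.pr_wt_odd hn.add_one z
  refine ⟨u, hu, M.pr_ext M.wt fun w => ?_, hz⟩
  rw [M.pr_pr, map_zero]
  by_cases h : w < n + 2
  · rw [hw w h, map_zero]
  · have := M.pr_lw n (w - n) u
    rw [M.pj_of_mem hu, show n + (w - n) = w by omega] at this
    rw [← this, pr_pr_self, if_neg (by omega)]

end Sys

end RHT

/-! ### Sullivan algebras: subalgebras generated in low degrees -/

namespace RHT

namespace Sullivan
variable (S : Sullivan)

/-- The subalgebra generated by the generators of degree less than `n`. -/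
def low (n : ℕ) : Subalgebra ℚ S.A := Algebra.adjoin ℚ (⋃ i : {i // i < n}, (S.V i : Set S.A))

theorem low_mono {n m : ℕ} (h : n ≤ m) : S.low n ≤ S.low m :=
  Algebra.adjoin_mono (Set.iUnion_subset fun i =>
    Set.subset_iUnion_of_subset ⟨i.1, i.2.trans_le h⟩ le_rfl)

theorem V_low {i n : ℕ} (h : i < n) {x : S.A} (hx : x ∈ S.V i) : x ∈ S.low n :=
  Algebra.subset_adjoin (Set.mem_iUnion.2 ⟨⟨i, h⟩, hx⟩)

theorem gen_induction {p : S.A → Prop} (h1 : p 1) (hadd : ∀ x y, p x → p y → p (x + y))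
    (hs : ∀ (c : ℚ) x, p x → p (c • x)) (hm : ∀ i, ∀ x ∈ S.V i, ∀ y, p y → p (x * y)) (x : S.A) :
    p x := by
  have hx : x ∈ Algebra.adjoin ℚ (⋃ i, (S.V i : Set S.A)) := S.generates ▸ Algebra.mem_top
  suffices ∀ y, p y → p (x * y) by simpa using this 1 h1
  induction hx using Algebra.adjoin_induction with
  | mem x hx =>
    obtain ⟨i, hi⟩ := Set.mem_iUnion.1 hx
    exact hm i x hi
  | algebraMap c => intro y hy; rw [← Algebra.smul_def]; exact hs c y hy
  | add a b _ _ ha hb => intro y hy; rw [add_mul]; exact hadd _ _ (ha y hy) (hb y hy)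
  | mul a b _ _ ha hb => intro y hy; rw [mul_assoc]; exact ha _ (hb y hy)

/-- A product with a generator of degree `i` has degree at least `i`, and `i` is at least two. -/
theorem pj_V_mul {i : ℕ} {x : S.A} (hx : x ∈ S.V i) (n : ℕ) (y : S.A) :
    S.pj n (x * y) = 0 ∨ 2 ≤ i ∧ ∃ m, n = i + m ∧ S.pj n (x * y) = x * S.pj m y := by
  have hx' := S.V_le i hx
  by_cases h : n < i
  · exact Or.inl (S.pj_mul_lt hx' h y)
  · obtain ⟨m, rfl⟩ := Nat.exists_eq_add_of_le (not_lt.1 h)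
    rcases Nat.lt_or_ge i 2 with hi | hi
    · have : x = 0 := by
        rw [← Submodule.mem_bot ℚ]
        interval_cases i
        · rwa [S.V_zero] at hx
        · rwa [S.V_one] at hx
      left; rw [this, zero_mul, map_zero]
    · exact Or.inr ⟨hi, m, rfl, S.pj_mul hx' m y⟩

theorem pj_low (n : ℕ) (a : S.A) : S.pj n a ∈ S.low (n + 1) := by
  induction a using S.gen_induction generalizing n with
  | h1 =>
    by_cases h : n = 0
    · subst h; rw [S.pj_of_mem S.one_mem]; exact one_mem _
    · rw [S.pj_of_mem_ne S.one_mem (Ne.symm h)]; exact zero_mem _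
  | hadd x y hx hy => rw [map_add]; exact add_mem (hx n) (hy n)
  | hs c x hx => rw [map_smul]; exact Subalgebra.smul_mem _ (hx n) c
  | hm i x hx y hy =>
    rcases S.pj_V_mul hx n y with h | ⟨-, m, rfl, h⟩
    · rw [h]; exact zero_mem _
    · rw [h]
      exact mul_mem (S.V_low (by omega) hx) (S.low_mono (by omega) (hy m))

theorem mem_low {n : ℕ} {a : S.A} (ha : a ∈ S.grading n) : a ∈ S.low (n + 1) :=
  S.pj_of_mem ha ▸ S.pj_low n a

theorem low_two : S.low 2 = ⊥ := by
  rw [eq_bot_iff]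
  refine Algebra.adjoin_le (Set.iUnion_subset ?_)
  rintro ⟨i, hi⟩ x hx
  have : x = 0 := by
    rw [← Submodule.mem_bot ℚ]
    interval_cases i
    · rwa [S.V_zero] at hx
    · rwa [S.V_one] at hx
  rw [this]; exact zero_mem _

theorem scalar {i : ℕ} (hi : i < 2) {x : S.A} (hx : x ∈ S.grading i) : ∃ c : ℚ, x = c • 1 := by
  have := S.low_mono (by omega : i + 1 ≤ 2) (S.mem_low hx)
  rw [S.low_two] at this
  obtain ⟨c, rfl⟩ := Algebra.mem_bot.1 this
  exact ⟨c, by rw [Algebra.algebraMap_eq_smul_one]⟩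

theorem grading_one {x : S.A} (hx : x ∈ S.grading 1) : x = 0 := by
  obtain ⟨c, rfl⟩ := S.scalar (by omega) hx
  rw [← S.pj_of_mem hx, map_smul, S.pj_of_mem_ne S.one_mem (by omega), smul_zero]

/-- Decomposable elements of degree `n + 1` only involve generators of degree less than `n`. -/
theorem pj_lengthGE {a : S.A} (ha : a ∈ S.lengthGE 2) (n : ℕ) : S.pj (n + 1) a ∈ S.low n := by
  rw [lengthGE, pow_two] at ha
  have key : ∀ i, ∀ x ∈ S.V i, ∀ j, ∀ y ∈ S.V j, ∀ b, S.pj (n + 1) (x * (y * b)) ∈ S.low n := by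
    intro i x hx j y hy b
    rcases S.pj_V_mul hx (n + 1) (y * b) with h | ⟨hi, m, hm, h⟩
    · rw [h]; exact zero_mem _
    rw [h]
    rcases S.pj_V_mul hy m b with h | ⟨hj, k, rfl, h⟩
    · rw [h, mul_zero]; exact zero_mem _
    rw [h]
    exact mul_mem (S.V_low (by omega) hx) (mul_mem (S.V_low (by omega) hy)
      (S.low_mono (by omega) (S.pj_low k b)))
  induction ha using Submodule.mul_induction_on' with
  | mem_mul_mem w hw b _ =>
    induction hw using Submodule.mul_induction_on' with
    | mem_mul_mem x hx y hy =>
      rw [mul_assoc]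
      unfold genSpan at hx hy
      induction hx using Submodule.iSup_induction' with
      | mem i x hx =>
        induction hy using Submodule.iSup_induction' with
        | mem j y hy => exact key i x hx j y hy b
        | zero => rw [zero_mul, mul_zero, map_zero]; exact zero_mem _
        | add y z _ _ h1 h2 => rw [add_mul, mul_add, map_add]; exact add_mem h1 h2
      | zero => rw [zero_mul, map_zero]; exact zero_mem _
      | add y z _ _ h1 h2 => rw [add_mul, map_add]; exact add_mem h1 h2
    | add y _ z _ h1 h2 => rw [add_mul, map_add]; exact add_mem h1 h2
  | add y _ z _ h1 h2 => rw [map_add]; exact add_mem h1 h2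

theorem d_V_low (hm : S.Minimal) {n : ℕ} {x : S.A} (hx : x ∈ S.V n) : S.d x ∈ S.low n := by
  rw [← S.pj_of_mem (S.d_mem (S.V_le n hx))]
  exact S.pj_lengthGE (hm x (Submodule.mem_iSup_of_mem n hx)) n

theorem d_low (hm : S.Minimal) {n : ℕ} {x : S.A} (hx : x ∈ S.low n) : S.d x ∈ S.low n := by
  induction hx using Algebra.adjoin_induction with
  | mem x hx =>
    obtain ⟨⟨i, hi⟩, hx⟩ := Set.mem_iUnion.1 hx
    exact S.low_mono hi.le (S.d_V_low hm hx)
  | algebraMap c =>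
    rw [Algebra.algebraMap_eq_smul_one, map_smul, S.d_one, smul_zero]; exact zero_mem _
  | add a b _ _ ha hb => rw [map_add]; exact add_mem ha hb
  | mul a b ha' hb' ha hb =>
    rw [S.isDiff.mul]
    refine add_mem (mul_mem ha hb') (mul_mem ?_ hb)
    clear ha hb
    induction ha' using Algebra.adjoin_induction with
    | mem x hx =>
      obtain ⟨⟨i, hi⟩, hx⟩ := Set.mem_iUnion.1 hx
      rw [S.eps_of_mem (S.V_le i hx)]
      exact Subalgebra.smul_mem _ (S.V_low hi hx) _
    | algebraMap c => rw [AlgHom.commutes]; exact Subalgebra.algebraMap_mem _ c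
    | add a b _ _ ha hb => rw [map_add]; exact add_mem ha hb
    | mul a b _ _ ha hb => rw [map_mul]; exact mul_mem ha hb

end Sullivan

end RHT

/-! ### Minimal models of elliptic spaces with positive Euler characteristic -/

namespace RHT

namespace Sullivan
variable (S : Sullivan)

instance (i : ℕ) : FiniteDimensional ℚ (S.V i) := S.V_fin i

/-- The index set of a homogeneous basis of the generators of degree less than `N`. -/
abbrev Idx (N : ℕ) : Type := Σ i : Fin N, Fin (Module.finrank ℚ (S.V i))

theorem exists_sorted (N : ℕ) : ∃ (r : ℕ) (e : Fin r ≃ S.Idx N),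
    Monotone fun k => ((e k).1 : ℕ) := by
  let e0 : Fin (Fintype.card (S.Idx N)) ≃ S.Idx N := (Fintype.equivFin _).symm
  refine ⟨_, (Tuple.sort fun k => ((e0 k).1 : ℕ)).trans e0, ?_⟩
  exact Tuple.monotone_sort fun k => ((e0 k).1 : ℕ)

/-- The homogeneous basis element of given index. -/
noncomputable def bas {N : ℕ} (x : S.Idx N) : S.A := (Module.finBasis ℚ (S.V x.1) x.2 : S.V x.1)

theorem bas_mem {N : ℕ} (x : S.Idx N) : S.bas x ∈ S.V x.1 := Subtype.prop _

theorem V_le_span {N : ℕ} {i : ℕ} (hi : i < N) :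
    S.V i ≤ Submodule.span ℚ (S.bas '' {x : S.Idx N | (x.1 : ℕ) = i}) := by
  intro x hx
  have h := (Module.finBasis ℚ (S.V i)).sum_repr ⟨x, hx⟩
  have h' := congrArg (S.V i).subtype h
  rw [map_sum] at h'
  rw [show x = _ from h'.symm]
  refine Submodule.sum_mem _ fun k _ => ?_
  rw [map_smul]
  exact Submodule.smul_mem _ _ (Submodule.subset_span ⟨⟨⟨i, hi⟩, k⟩, rfl, rfl⟩)

theorem low_le_adjoin {N n : ℕ} (hV : ∀ i, N ≤ i → S.V i = ⊥) :
    S.low n ≤ Algebra.adjoin ℚ (S.bas '' {x : S.Idx N | (x.1 : ℕ) < n}) := by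
  refine Algebra.adjoin_le (Set.iUnion_subset ?_)
  rintro ⟨i, hi⟩ x hx
  rcases Nat.lt_or_ge i N with h | h
  · have := S.V_le_span h hx
    refine Algebra.span_le_adjoin ℚ _ (Submodule.span_mono (Set.image_mono ?_) this)
    rintro y rfl
    exact hi
  · have hx' : x ∈ S.V i := hx
    rw [hV i h, Submodule.mem_bot] at hx'
    rw [hx']; exact zero_mem _

theorem adjoin_bas {N : ℕ} (hV : ∀ i, N ≤ i → S.V i = ⊥) :
    Algebra.adjoin ℚ (Set.range (S.bas : S.Idx N → S.A)) = ⊤ := by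
  rw [eq_top_iff]
  intro x _
  induction x using S.gen_induction with
  | h1 => exact one_mem _
  | hadd x y hx hy => exact add_mem (hx trivial) (hy trivial)
  | hs c x hx => exact Subalgebra.smul_mem _ (hx trivial) c
  | hm i x hx y hy =>
    exact mul_mem (Algebra.adjoin_mono (Set.image_subset_range _ _)
      (S.low_le_adjoin hV (S.V_low (Nat.lt_succ_self i) hx))) (hy trivial)

theorem two_le {N : ℕ} (x : S.Idx N) : 2 ≤ (x.1 : ℕ) := by
  obtain ⟨⟨i, hi⟩, k⟩ := x
  by_contra h
  have : Module.finrank ℚ (S.V i) = 0 := by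
    have : S.V i = ⊥ := by
      simp only [not_le] at h
      interval_cases i
      · exact S.V_zero
      · exact S.V_one
    rw [this]; simp
  exact (Fin.cast this k).elim0

theorem lift_bas {N : ℕ} (E : Type) [Ring E] [Algebra ℚ E] (ε : E →ₐ[ℚ] E) (hε : IsSuper ε)
    (c : S.Idx N → E) (hc : ∀ x, ε (c x) = ((-1 : ℚ) ^ (x.1 : ℕ)) • c x) :
    ∃ φ : S.A →ₐ[ℚ] E, ∀ x, φ (S.bas x) = c x := by
  let 𝒞 : ℕ → Submodule ℚ E := fun i => LinearMap.ker (ε.toLinearMap - ((-1 : ℚ) ^ i) • LinearMap.id)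
  have hm : ∀ i x, x ∈ 𝒞 i ↔ ε x = ((-1 : ℚ) ^ i) • x := fun i x => by
    simp [𝒞, sub_eq_zero]
  let f : (i : ℕ) → S.V i →ₗ[ℚ] E := fun i =>
    if hi : i < N then (Module.finBasis ℚ (S.V i)).constr ℚ fun k => c ⟨⟨i, hi⟩, k⟩ else 0
  obtain ⟨φ, hφ, -⟩ := S.free E 𝒞 ((hm _ _).2 (by simp)) (fun i j x y hx hy => by
      rw [hm] at *
      rw [map_mul, hx, hy, smul_mul_smul_comm, pow_add])
    (fun i j x y hx hy => by
      rw [hm] at *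
      rcases Nat.even_or_odd i with hi | hi
      · rw [hε.even_comm x y (by rw [hx, hi.neg_one_pow, one_smul]), (hi.mul_right j).neg_one_pow,
          one_smul]
      · rw [hε.odd_comm x y (by rw [hx, hi.neg_one_pow, neg_one_smul]), hy, pow_mul,
          hi.neg_one_pow, smul_mul_assoc])
    f (fun i v => by
      rw [hm]
      by_cases hi : i < N
      · simp only [f, dif_pos hi]
        rw [Module.Basis.constr_apply_fintype, map_sum, Finset.smul_sum]
        refine Finset.sum_congr rfl fun k _ => ?_
        rw [map_smul, hc, smul_comm]
      · simp [f, dif_neg hi])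
  refine ⟨φ, fun x => ?_⟩
  obtain ⟨⟨i, hi⟩, k⟩ := x
  have := hφ i (Module.finBasis ℚ (S.V i) k)
  simp only [f, dif_pos hi, Module.Basis.constr_basis] at this
  exact this

/-- A minimal Sullivan algebra with finitely many generators, with a chosen ordered homogeneous
basis of its generators. -/
noncomputable def toSys (hm : S.Minimal) {N : ℕ} (hV : ∀ i, N ≤ i → S.V i = ⊥) : Sys where
  toCDGA := S.toCDGA
  r := (S.exists_sorted N).choose
  v k := S.bas ((S.exists_sorted N).choose_spec.choose k)
  deg k := ((S.exists_sorted N).choose_spec.choose k).1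
  deg_ge k := S.two_le _
  mono := (S.exists_sorted N).choose_spec.choose_spec
  v_mem k := S.V_le _ (S.bas_mem _)
  gen := by
    rw [← S.adjoin_bas hV]
    congr 1
    exact (S.exists_sorted N).choose_spec.choose.surjective.range_comp S.bas
  lift E _ _ ε hε c hc := by
    obtain ⟨φ, hφ⟩ := S.lift_bas E ε hε
      (fun x => c ((S.exists_sorted N).choose_spec.choose.symm x)) (fun x => by
        rw [hc]; simp)
    exact ⟨φ, fun i => by rw [hφ, Equiv.symm_apply_apply]⟩
  d_v k := by
    refine Algebra.adjoin_mono ?_ (S.low_le_adjoin hV (S.d_V_low hm (S.bas_mem _)))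
    rintro _ ⟨x, hx, rfl⟩
    refine ⟨(S.exists_sorted N).choose_spec.choose.symm x, ?_, by simp⟩
    simpa using hx

theorem bas_linearIndependent (N : ℕ) : LinearIndependent ℚ (S.bas : S.Idx N → S.A) := by
  classical
  rw [linearIndependent_iff']
  intro s g hg x hx
  have h1 := congrArg (S.pj (x.1 : ℕ)) hg
  rw [map_sum, map_zero] at h1
  have hli : LinearIndependent ℚ fun k => (S.V x.1).subtype (Module.finBasis ℚ (S.V x.1) k) :=
    (Module.finBasis ℚ (S.V x.1)).linearIndependent.map' _ (Submodule.ker_subtype _)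
  rw [Fintype.linearIndependent_iff] at hli
  have := hli (fun k => if (⟨x.1, k⟩ : S.Idx N) ∈ s then g ⟨x.1, k⟩ else 0) ?_ x.2
  · rw [if_pos (by exact hx)] at this
    exact this
  rw [← h1]
  symm
  let t : Finset (S.Idx N) := Finset.univ.map
    ⟨fun k => (⟨x.1, k⟩ : S.Idx N), fun _ _ h => eq_of_heq (Sigma.mk.inj h).2⟩
  have e1 : ∑ y ∈ s, S.pj (x.1 : ℕ) (g y • S.bas y) =
      ∑ y ∈ t, if y ∈ s then g y • S.bas y else 0 := by
    rw [← Finset.sum_filter, Finset.filter_mem_eq_inter]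
    rw [← Finset.sum_subset (Finset.inter_subset_right : t ∩ s ⊆ s)]
    · refine Finset.sum_congr rfl fun y hy => ?_
      rw [Finset.mem_inter, Finset.mem_map] at hy
      obtain ⟨⟨k, -, rfl⟩, -⟩ := hy
      change S.pj (x.1 : ℕ) (g ⟨x.1, k⟩ • S.bas ⟨x.1, k⟩) = g ⟨x.1, k⟩ • S.bas ⟨x.1, k⟩
      rw [map_smul, S.pj_of_mem (S.V_le _ (S.bas_mem (⟨x.1, k⟩ : S.Idx N)))]
    · intro y hy hy'
      rw [map_smul, S.pj_of_mem_ne (S.V_le _ (S.bas_mem y)), smul_zero]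
      intro h
      apply hy'
      rw [Finset.mem_inter, Finset.mem_map]
      refine ⟨?_, hy⟩
      obtain ⟨i, k⟩ := y
      have : i = x.1 := Fin.ext h
      subst this
      exact ⟨k, Finset.mem_univ _, rfl⟩
  rw [e1, Finset.sum_map]
  refine Finset.sum_congr rfl fun k _ => ?_
  simp only [ite_smul, zero_smul]
  rfl

/-- A finite ordered basis of the generators for which the differential is triangular. -/
theorem exists_basis (hm : S.Minimal) (hE : ∃ N, ∀ i, N ≤ i → S.V i = ⊥) :
    ∃ (r : ℕ) (v : Fin r → S.A), LinearIndependent ℚ v ∧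
      Submodule.span ℚ (Set.range v) = (⨆ i, S.V i) ∧ (∀ k, ∃ i, v k ∈ S.V i) ∧
      ∀ k, S.d (v k) ∈ Algebra.adjoin ℚ (v '' {l | l < k}) := by
  obtain ⟨N, hV⟩ := hE
  refine ⟨(S.exists_sorted N).choose, fun k => S.bas ((S.exists_sorted N).choose_spec.choose k),
    ?_, ?_, ?_, (S.toSys hm hV).d_v_adjoin⟩
  · exact (S.bas_linearIndependent N).comp _ (Equiv.injective _)
  · have : (Set.range fun k => S.bas ((S.exists_sorted N).choose_spec.choose k)) =
        Set.range (S.bas : S.Idx N → S.A) :=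
      (S.exists_sorted N).choose_spec.choose.surjective.range_comp S.bas
    rw [this]
    apply le_antisymm
    · rw [Submodule.span_le]
      rintro _ ⟨x, rfl⟩
      exact Submodule.mem_iSup_of_mem _ (S.bas_mem x)
    · refine iSup_le fun i => ?_
      rcases Nat.lt_or_ge i N with h | h
      · exact (S.V_le_span h).trans (Submodule.span_mono (Set.image_subset_range _ _))
      · rw [hV i h]; exact bot_le
  · intro k
    exact ⟨_, S.bas_mem _⟩

theorem vanish_of {C : CDGA} {N : ℕ} (h : ∀ i, N ≤ i → Subsingleton (C.cohomology i)) :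
    C.Vanish N := by
  intro i hi x hx hd
  have := h i hi
  have hz : x ∈ C.cocycles i := ⟨hx, hd⟩
  have h0 := Subsingleton.elim (Submodule.Quotient.mk ⟨x, hz⟩ : C.cohomology i) 0
  rw [Submodule.Quotient.mk_eq_zero] at h0
  exact h0.2

theorem mon_low (hm : S.Minimal) {N : ℕ} (hV : ∀ i, N ≤ i → S.V i = ⊥) {n : ℕ}
    (l : List (Fin (S.toSys hm hV).r)) (hl : ∀ i ∈ l, (S.toSys hm hV).deg i < n) :
    (S.toSys hm hV).mon l ∈ S.low n := by
  induction l with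
  | nil => exact one_mem (S.low n)
  | cons i l ih =>
    rw [Sys.mon_cons]
    exact mul_mem (S := Subalgebra ℚ S.A)
      (S.V_low (hl i (by simp)) (S.bas_mem _)) (ih fun j hj => hl j (by simp [hj]))

/-- An element of even degree `n` without monomials purely in the even generators does not
involve generators of degree `n`. -/
theorem mem_low_of_pr (hm : S.Minimal) {N : ℕ} (hV : ∀ i, N ≤ i → S.V i = ⊥) {n : ℕ} (hn : Even n)
    {u : S.A} (hu : u ∈ S.grading n) (h0 : (S.toSys hm hV).pr (S.toSys hm hV).lw 0 u = 0) :
    u ∈ S.low n := by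
  set M := S.toSys hm hV with hM
  have key : ∀ a : M.A, M.pj n a - M.pr M.lw 0 (M.pj n a) ∈ S.low n := by
    intro a
    induction a using Sys.mon_induction with
    | h l =>
      by_cases h : (l.map M.deg).sum = n
      · rw [M.pj_of_mem (h ▸ M.mon_mem l), Sys.pr_mon]
        split_ifs with hl
        · rw [sub_self]; exact zero_mem (S.low n)
        · rw [sub_zero]
          refine S.mon_low hm hV l fun i hi => lt_of_not_ge fun hin => hl ?_
          -- A monomial of degree `n` containing a generator of degree `n` is that generator,
          -- which is even.
          replace hin : n ≤ M.deg i := hin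
          have hp := List.perm_cons_erase hi
          have e1 := (hp.map M.deg).sum_eq
          have e2 := (hp.map M.lw).sum_eq
          rw [List.map_cons, List.sum_cons] at e1 e2
          have hz : ((l.erase i).map M.deg).sum = 0 := by omega
          rw [M.deg_zero_of_mon hz] at e1 e2
          rw [e2, M.lw_even (by simp at e1; rw [← e1, h]; exact hn)]
          simp
      · rw [M.pj_of_mem_ne (M.mon_mem l) h, map_zero, sub_zero]; exact zero_mem (S.low n)
    | h0 => rw [map_zero, map_zero, sub_zero]; exact zero_mem (S.low n)
    | ha x y hx hy =>
      rw [map_add, map_add, add_sub_add_comm]; exact add_mem (S := Subalgebra ℚ S.A) hx hy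
    | hs c x hx =>
      rw [map_smul, map_smul, ← smul_sub]; exact Subalgebra.smul_mem (S.low n) hx c
  have := key u
  have h3 : M.pj n u - M.pr M.lw 0 (M.pj n u) = u := by
    rw [M.pj_of_mem hu, h0]; exact sub_zero (G := M.A) u
  exact h3 ▸ this

/-- In a minimal model of an elliptic space of positive Euler characteristic, a cocycle of odd
degree `n + 1` bounds an element not involving generators of degree `n`. -/
theorem exact_odd (hm : S.Minimal) (hE : S.Elliptic) (hχ : S.PosEuler) {n : ℕ} (hn : Even n)
    {z : S.A} (hz : z ∈ S.grading (n + 1)) (hd : S.d z = 0) :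
    ∃ u ∈ S.grading n, u ∈ S.low n ∧ S.d u = z := by
  obtain ⟨⟨N, hV⟩, -, N', hN'⟩ := hE
  obtain ⟨N₀, h₀, hpos⟩ := hχ
  have hv : (S.toSys hm hV).toCDGA.Vanish N' := vanish_of hN'
  obtain ⟨u, hu, h0, hdu⟩ := (S.toSys hm hV).exact_odd hv
    ((S.toSys hm hV).tO_le hv N₀ h₀ hpos) hn hz hd
  exact ⟨u, hu, S.mem_low_of_pr hm hV hn hu h0, hdu⟩

/-- On elements of odd degree, exactness of cocycles is witnessed by a linear contraction. -/
theorem exists_contraction (hm : S.Minimal) (hE : S.Elliptic) (hχ : S.PosEuler) :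
    ∃ κ l : S.A →ₗ[ℚ] S.A, ∀ a, S.eps a = -a → a = S.d (κ a) + l (S.d a) := by
  have h1 : ∀ z, S.eps z = -z → S.d z = 0 → ∃ u, S.d u = z := by
    intro z hz hd
    obtain ⟨N, -, hN⟩ := S.exists_sum_pj z
    have : ∀ n, ∃ u, S.d u = S.pj n z := by
      intro n
      rcases Nat.even_or_odd n with hn | hn
      · refine ⟨0, ?_⟩
        have h2 := S.eps_even hn (S.pj_mem n z)
        rw [S.eps_pj, hz, map_neg] at h2
        have h3 : (2 : ℚ) • S.pj n z = 0 := by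
          rw [two_smul]; nth_rewrite 1 [← h2]; exact neg_add_cancel _
        rw [map_zero, (smul_eq_zero.1 h3).resolve_left two_ne_zero]
      · obtain ⟨m, rfl⟩ := hn
        obtain ⟨u, -, -, hu⟩ := S.exact_odd hm hE hχ (even_two_mul m) (S.pj_mem _ z)
          (by rw [← S.pj_d, hd, map_zero])
        exact ⟨u, hu⟩
    choose u hu using this
    exact ⟨∑ n ∈ Finset.range N, u n, by rw [map_sum, ← hN]; exact Finset.sum_congr rfl fun n _ => hu n⟩
  obtain ⟨σ, hσ⟩ : ∃ σ : S.A →ₗ[ℚ] S.A, ∀ a, S.d (σ (S.d a)) = S.d a := by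
    obtain ⟨g, hg⟩ := S.d.rangeRestrict.exists_rightInverse_of_surjective S.d.range_rangeRestrict
    obtain ⟨σ, hσ⟩ := LinearMap.exists_extend g
    refine ⟨σ, fun a => ?_⟩
    have e1 : σ (S.d a) = g ⟨S.d a, a, rfl⟩ := LinearMap.congr_fun hσ ⟨S.d a, a, rfl⟩
    have e2 := LinearMap.congr_fun hg ⟨S.d a, a, rfl⟩
    rw [e1]
    exact congrArg Subtype.val e2
  let o : S.A →ₗ[ℚ] S.A := (1 / 2 : ℚ) • (LinearMap.id - S.eps.toLinearMap)
  have ho : ∀ x, o x = (1 / 2 : ℚ) • (x - S.eps x) := fun _ => rfl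
  refine ⟨σ ∘ₗ (LinearMap.id - o ∘ₗ σ ∘ₗ S.d), o ∘ₗ σ, fun a ha => ?_⟩
  have hda : S.eps (S.d a) = S.d a := by
    have := S.isDiff.eps a
    rw [ha, map_neg, neg_inj] at this
    exact this.symm
  have h2 : S.d (o (σ (S.d a))) = S.d a := by
    rw [ho, map_smul, map_sub, S.isDiff.eps, hσ, hda, sub_neg_eq_add, ← two_smul ℚ, smul_smul]
    norm_num
  obtain ⟨u, hu⟩ := h1 (a - o (σ (S.d a))) (by
    rw [map_sub, ha, ho, map_smul, map_sub, S.isSuper.invol]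
    module) (by rw [map_sub, h2, sub_self])
  have h3 : S.d (σ (a - o (σ (S.d a)))) = a - o (σ (S.d a)) := by
    rw [← hu, hσ]
  simp only [LinearMap.comp_apply, LinearMap.sub_apply, LinearMap.id_apply]
  rw [h3, sub_add_cancel]

/-- Every even generator agrees with a cocycle modulo generators of smaller degree. -/
theorem exists_low_even (hm : S.Minimal) (hE : S.Elliptic) (hχ : S.PosEuler) {n : ℕ} (hn : Even n)
    {x : S.A} (hx : x ∈ S.V n) : ∃ u ∈ S.grading n, u ∈ S.low n ∧ S.d u = S.d x :=
  S.exact_odd hm hE hχ hn (S.d_mem (S.V_le n hx)) (S.d_sq x)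

end Sullivan

end RHT

/-! ### Graded tensor products -/

namespace RHT
open TensorProduct

/-- The graded tensor product `B ⊗ F` of the underlying graded algebras. -/
def Tens (B F : CDGA) : Type := B.grading ᵍ⊗[ℚ] F.grading

namespace Tens
variable {B F : CDGA}

noncomputable instance : Ring (Tens B F) := inferInstanceAs (Ring (B.grading ᵍ⊗[ℚ] F.grading))
noncomputable instance : Algebra ℚ (Tens B F) :=
  inferInstanceAs (Algebra ℚ (B.grading ᵍ⊗[ℚ] F.grading))

variable (B F) in
/-- The linear identification with the ordinary tensor product. -/
noncomputable def of : (B.A ⊗[ℚ] F.A) ≃ₗ[ℚ] Tens B F := GradedTensorProduct.of ℚ B.grading F.grading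

/-- The elementary tensor `b ⊗ a`. -/
noncomputable def tm (b : B.A) (a : F.A) : Tens B F := of B F (b ⊗ₜ a)

variable (B F) in
/-- The inclusion `b ↦ b ⊗ 1`. -/
noncomputable def inl : B.A →ₐ[ℚ] Tens B F := GradedTensorProduct.includeLeft B.grading F.grading

variable (B F) in
/-- The inclusion `a ↦ 1 ⊗ a`. -/
noncomputable def inr : F.A →ₐ[ℚ] Tens B F := GradedTensorProduct.includeRight B.grading F.grading

theorem inl_eq (b : B.A) : inl B F b = tm b 1 := rfl
theorem inr_eq (a : F.A) : inr B F a = tm 1 a := rfl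

theorem inl_mul_inr (b : B.A) (a : F.A) : inl B F b * inr B F a = tm b a :=
  GradedTensorProduct.tmul_one_mul_one_tmul B.grading F.grading b a

theorem inr_mul_inl {i j : ℕ} {b : B.A} {a : F.A} (hb : b ∈ B.grading i) (ha : a ∈ F.grading j) :
    inr B F a * inl B F b = ((-1 : ℚ) ^ (i * j)) • (inl B F b * inr B F a) := by
  have h := GradedTensorProduct.tmul_coe_mul_coe_tmul (R := ℚ) B.grading F.grading 1 ⟨a, ha⟩ ⟨b, hb⟩ 1
  have h' : inr B F a * inl B F b = ((-1 : ℤˣ) ^ (j * i)) • tm b a := by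
    rw [one_mul, mul_one] at h
    exact h
  rw [h', inl_mul_inr, mul_comm i j]
  rcases Nat.even_or_odd (j * i) with h | h
  · rw [h.neg_one_pow, h.neg_one_pow, one_smul, one_smul]
  · rw [h.neg_one_pow, h.neg_one_pow, Units.neg_smul, neg_smul, one_smul, one_smul]

theorem tm_add_left (b b' : B.A) (a : F.A) : tm (b + b') a = tm b a + tm b' a := by
  rw [tm, add_tmul, map_add]; rfl
theorem tm_add_right (b : B.A) (a a' : F.A) : tm b (a + a') = tm b a + tm b a' := by
  rw [tm, tmul_add, map_add]; rfl
theorem tm_smul_left (c : ℚ) (b : B.A) (a : F.A) : tm (c • b) a = c • tm b a := by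
  rw [tm, ← smul_tmul', map_smul]; rfl
theorem tm_smul_right (c : ℚ) (b : B.A) (a : F.A) : tm b (c • a) = c • tm b a := by
  rw [tm, tmul_smul, map_smul]; rfl
theorem tm_zero_left (a : F.A) : tm (0 : B.A) a = 0 := by rw [tm, zero_tmul, map_zero]
theorem tm_zero_right (b : B.A) : tm b (0 : F.A) = 0 := by rw [tm, tmul_zero, map_zero]

theorem ind {p : Tens B F → Prop} (h0 : p 0) (ht : ∀ b a, p (tm b a))
    (ha : ∀ x y, p x → p y → p (x + y)) (x : Tens B F) : p x := by
  obtain ⟨x, rfl⟩ := (of B F).surjective x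
  induction x using TensorProduct.induction_on with
  | zero => rw [map_zero]; exact h0
  | tmul b a => exact ht b a
  | add x y hx hy => rw [map_add]; exact ha _ _ hx hy

/-- The linear map `φ ⊗ ψ`. -/
noncomputable def map {B' F' : CDGA} (φ : B.A →ₗ[ℚ] B'.A) (ψ : F.A →ₗ[ℚ] F'.A) :
    Tens B F →ₗ[ℚ] Tens B' F' :=
  (of B' F').toLinearMap ∘ₗ TensorProduct.map φ ψ ∘ₗ (of B F).symm.toLinearMap

theorem map_tm {B' F' : CDGA} (φ : B.A →ₗ[ℚ] B'.A) (ψ : F.A →ₗ[ℚ] F'.A) (b : B.A) (a : F.A) :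
    map φ ψ (tm b a) = tm (φ b) (ψ a) := rfl

theorem exists_linear {M : Type*} [AddCommGroup M] [Module ℚ M] (m : B.A →ₗ[ℚ] F.A →ₗ[ℚ] M) :
    ∃ φ : Tens B F →ₗ[ℚ] M, ∀ b a, φ (tm b a) = m b a :=
  ⟨TensorProduct.lift m ∘ₗ (of B F).symm.toLinearMap, fun b a => TensorProduct.lift.tmul b a⟩

theorem exists_lift {C : Type} [Ring C] [Algebra ℚ C] (f : B.A →ₐ[ℚ] C) (g : F.A →ₐ[ℚ] C)
    (h : ∀ i j b a, b ∈ B.grading i → a ∈ F.grading j →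
      f b * g a = ((-1 : ℚ) ^ (i * j)) • (g a * f b)) :
    ∃ φ : Tens B F →ₐ[ℚ] C, ∀ b a, φ (tm b a) = f b * g a := by
  refine ⟨GradedTensorProduct.lift B.grading F.grading f g ?_,
    fun b a => GradedTensorProduct.lift_tmul _ _ _ _ _ b a⟩
  intro i j a b
  rw [h i j a b a.2 b.2, mul_comm i j]
  rcases Nat.even_or_odd (j * i) with h | h
  · rw [h.neg_one_pow, h.neg_one_pow, one_smul, one_smul]
  · rw [h.neg_one_pow, h.neg_one_pow, Units.neg_smul, neg_smul, one_smul, one_smul]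

theorem algHom_ext {C : Type} [Ring C] [Algebra ℚ C] {f g : Tens B F →ₐ[ℚ] C}
    (h1 : ∀ b, f (inl B F b) = g (inl B F b)) (h2 : ∀ a, f (inr B F a) = g (inr B F a)) :
    f = g :=
  GradedTensorProduct.algHom_ext B.grading F.grading (AlgHom.ext h1) (AlgHom.ext h2)

/-- The kernel of `f ⊗ 1` is spanned by the tensors with first factor in the kernel of `f`. -/
theorem ker_map {B' : CDGA} (f : B.A →ₗ[ℚ] B'.A) (hf : Function.Surjective f) {x : Tens B F}
    (hx : map f (LinearMap.id : F.A →ₗ[ℚ] F.A) x = 0) :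
    x ∈ Submodule.span ℚ {y | ∃ k a, f k = 0 ∧ y = (tm k a : Tens B F)} := by
  have hex : Function.Exact (LinearMap.ker f).subtype f := by
    intro y; simp
  have h := rTensor_exact F.A hex hf
  obtain ⟨z, hz⟩ := (h ((of B F).symm x)).1 ((of B' F).injective (by rw [map_zero]; exact hx))
  have hx : x = of B F ((LinearMap.ker f).subtype.rTensor F.A z) := by rw [hz]; simp
  rw [hx]
  clear hz hx
  induction z using TensorProduct.induction_on with
  | zero => rw [map_zero, map_zero]; exact zero_mem _
  | tmul k a => exact Submodule.subset_span ⟨k, a, k.2, rfl⟩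
  | add x y hx hy => rw [map_add, map_add]; exact add_mem hx hy

variable (B F) in
/-- The total grading. -/
noncomputable def gr (n : ℕ) : Submodule ℚ (Tens B F) :=
  Submodule.span ℚ {x | ∃ i j b a, i + j = n ∧ b ∈ B.grading i ∧ a ∈ F.grading j ∧ x = tm b a}

theorem tm_mem {i j : ℕ} {b : B.A} {a : F.A} (hb : b ∈ B.grading i) (ha : a ∈ F.grading j) :
    tm b a ∈ gr B F (i + j) := Submodule.subset_span ⟨i, j, b, a, rfl, hb, ha, rfl⟩

theorem tm_mul_tm {i j : ℕ} {b b' : B.A} {a a' : F.A} (ha : a ∈ F.grading j)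
    (hb' : b' ∈ B.grading i) :
    tm b a * tm b' a' = ((-1 : ℚ) ^ (i * j)) • tm (b * b') (a * a') := by
  rw [← inl_mul_inr, ← inl_mul_inr, ← inl_mul_inr, map_mul, map_mul]
  calc _ = inl B F b * (inr B F a * inl B F b') * inr B F a' := by simp only [mul_assoc]
    _ = _ := by rw [inr_mul_inl hb' ha]; simp only [mul_assoc, smul_mul_assoc, mul_smul_comm]

theorem gr_one : (1 : Tens B F) ∈ gr B F 0 := by
  have h : (1 : Tens B F) = tm 1 1 := (map_one (inl B F)).symm
  have h' : tm (1 : B.A) (1 : F.A) ∈ gr B F (0 + 0) := tm_mem B.one_mem F.one_mem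
  rwa [zero_add, ← h] at h'

theorem gr_mul (n m : ℕ) (x y : Tens B F) (hx : x ∈ gr B F n) (hy : y ∈ gr B F m) :
    x * y ∈ gr B F (n + m) := by
  induction hx using Submodule.span_induction with
  | mem x hx =>
    induction hy using Submodule.span_induction with
    | mem y hy =>
      obtain ⟨i, j, b, a, rfl, hb, ha, rfl⟩ := hx
      obtain ⟨i', j', b', a', rfl, hb', ha', rfl⟩ := hy
      rw [tm_mul_tm ha hb', add_add_add_comm]
      exact Submodule.smul_mem _ _ (tm_mem (B.mul_mem hb hb') (F.mul_mem ha ha'))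
    | zero => rw [mul_zero]; exact zero_mem _
    | add y z _ _ h1 h2 => rw [mul_add]; exact add_mem h1 h2
    | smul c y _ h => rw [mul_smul_comm]; exact Submodule.smul_mem _ _ h
  | zero => rw [zero_mul]; exact zero_mem _
  | add y z _ _ h1 h2 => rw [add_mul]; exact add_mem h1 h2
  | smul c y _ h => rw [smul_mul_assoc]; exact Submodule.smul_mem _ _ h

theorem gr_comm (n m : ℕ) (x y : Tens B F) (hx : x ∈ gr B F n) (hy : y ∈ gr B F m) :
    x * y = ((-1 : ℚ) ^ (n * m)) • (y * x) := by
  induction hx using Submodule.span_induction with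
  | mem x hx =>
    induction hy using Submodule.span_induction with
    | mem y hy =>
      obtain ⟨i, j, b, a, rfl, hb, ha, rfl⟩ := hx
      obtain ⟨i', j', b', a', rfl, hb', ha', rfl⟩ := hy
      rw [tm_mul_tm ha hb', tm_mul_tm ha' hb, B.gcomm hb hb', F.gcomm ha ha', tm_smul_left,
        tm_smul_right, smul_smul, smul_smul, smul_smul, ← pow_add, ← pow_add, ← pow_add]
      congr 1
      rw [show i' * j + i * i' + j * j' = (i * j' + (i * i' + i' * j + j * j')) - i * j' by omega,
        show (i + j) * (i' + j') + i * j' = (i * i' + i' * j + j * j') + 2 * (i * j') by ring,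
        pow_add _ _ (2 * _), pow_mul]
      rw [show i * j' + (i * i' + i' * j + j * j') - i * j' = i * i' + i' * j + j * j' by omega]
      norm_num
    | zero => rw [mul_zero, zero_mul, smul_zero]
    | add y z _ _ h1 h2 => rw [mul_add, add_mul, smul_add, h1, h2]
    | smul c y _ h => rw [mul_smul_comm, smul_mul_assoc, h, smul_comm]
  | zero => rw [mul_zero, zero_mul, smul_zero]
  | add y z _ _ h1 h2 => rw [mul_add, add_mul, smul_add, h1, h2]
  | smul c y _ h => rw [mul_smul_comm, smul_mul_assoc, h, smul_comm]

end Tens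

end RHT

/-! ### Quotients of cochain algebras -/

namespace RHT

/-- A multiplicative map which preserves the degrees of the generators preserves all degrees. -/
theorem Sullivan.map_mem (S : Sullivan) {C : Type} [Ring C] [Algebra ℚ C]
    (𝒞 : ℕ → Submodule ℚ C) (h1 : (1 : C) ∈ 𝒞 0)
    (hmul : ∀ i j (x y : C), x ∈ 𝒞 i → y ∈ 𝒞 j → x * y ∈ 𝒞 (i + j)) (φ : S.A →ₐ[ℚ] C)
    (hV : ∀ i, ∀ x ∈ S.V i, φ x ∈ 𝒞 i) {n : ℕ} {x : S.A} (hx : x ∈ S.grading n) :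
    φ x ∈ 𝒞 n := by
  suffices ∀ a n, φ (S.pj n a) ∈ 𝒞 n by rw [← S.pj_of_mem hx]; exact this x n
  clear hx x n
  intro a
  induction a using S.gen_induction with
  | h1 =>
    intro n
    by_cases h : n = 0
    · subst h; rw [S.pj_of_mem S.one_mem, map_one]; exact h1
    · rw [S.pj_of_mem_ne S.one_mem (Ne.symm h), map_zero]; exact zero_mem _
  | hadd x y hx hy => intro n; rw [map_add, map_add]; exact add_mem (hx n) (hy n)
  | hs c x hx => intro n; rw [map_smul, map_smul]; exact Submodule.smul_mem _ _ (hx n)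
  | hm i x hx y hy =>
    intro n
    rcases S.pj_V_mul hx n y with h | ⟨-, m, rfl, h⟩
    · rw [h, map_zero]; exact zero_mem _
    · rw [h, map_mul]; exact hmul _ _ _ _ (hV i x hx) (hy m)

namespace CDGA
variable (C : CDGA) {Q : Type} [Ring Q] [Algebra ℚ Q] (ρ : C.A →ₐ[ℚ] Q)

/-- The endomorphism of the quotient `Q` of `C` induced by a linear endomorphism `L` of `C`, when
`L` preserves the kernel of `ρ`. -/
noncomputable def desc (hρ : Function.Surjective ρ) (L : C.A →ₗ[ℚ] C.A) : Q →ₗ[ℚ] Q :=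
  ρ.toLinearMap ∘ₗ L ∘ₗ
    (ρ.toLinearMap.exists_rightInverse_of_surjective (LinearMap.range_eq_top.2 hρ)).choose

variable {ρ} in
theorem desc_apply (hρ : Function.Surjective ρ) {L : C.A →ₗ[ℚ] C.A}
    (hL : ∀ x, ρ x = 0 → ρ (L x) = 0) (x : C.A) : C.desc ρ hρ L (ρ x) = ρ (L x) := by
  have h := (ρ.toLinearMap.exists_rightInverse_of_surjective
    (LinearMap.range_eq_top.2 hρ)).choose_spec
  have h' := LinearMap.congr_fun h (ρ x)
  simp only [LinearMap.comp_apply, AlgHom.toLinearMap_apply, LinearMap.id_apply] at h'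
  simp only [desc, LinearMap.comp_apply, AlgHom.toLinearMap_apply]
  rw [← sub_eq_zero, ← map_sub, ← map_sub]
  apply hL
  rw [map_sub, h', sub_self]

variable {ρ} in
theorem push_internal (hρ : Function.Surjective ρ) (hpj : ∀ n x, ρ x = 0 → ρ (C.pj n x) = 0) :
    DirectSum.IsInternal fun i => (C.grading i).map ρ.toLinearMap := by
  classical
  constructor
  · rw [injective_iff_map_eq_zero]
    intro x hx
    have key : ∀ (x : DirectSum ℕ fun i => (C.grading i).map ρ.toLinearMap) n,
        C.desc ρ hρ (C.pj n) (DirectSum.coeAddMonoidHom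
          (fun i => (C.grading i).map ρ.toLinearMap) x) = x n := by
      intro x n
      induction x using DirectSum.induction_on with
      | zero => simp
      | of i y =>
        obtain ⟨_, y, hy, rfl⟩ := y
        rw [DirectSum.coeAddMonoidHom_of]
        change C.desc ρ hρ (C.pj n) (ρ y) = _
        rw [C.desc_apply hρ (hpj n)]
        by_cases h : i = n
        · subst h
          rw [C.pj_of_mem hy, DirectSum.of_eq_same]; rfl
        · rw [C.pj_of_mem_ne hy h, DirectSum.of_eq_of_ne _ _ _ (Ne.symm h), map_zero]; rfl
      | add x y hx hy => rw [map_add, map_add, hx, hy]; rfl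
    ext n
    rw [← key, hx, map_zero]; rfl
  · intro y
    obtain ⟨x, rfl⟩ := hρ y
    obtain ⟨N, -, hN⟩ := C.exists_sum_pj x
    refine ⟨∑ n ∈ Finset.range N, DirectSum.of (fun i => (C.grading i).map ρ.toLinearMap) n
      ⟨ρ (C.pj n x), _, C.pj_mem n x, rfl⟩, ?_⟩
    rw [map_sum]
    conv_rhs => rw [← hN, map_sum]
    exact Finset.sum_congr rfl fun n _ => DirectSum.coeAddMonoidHom_of _ _ _

/-- The quotient of a cochain algebra along a surjection whose kernel is a homogeneous
differential ideal. -/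
noncomputable def push (hρ : Function.Surjective ρ) (hpj : ∀ n x, ρ x = 0 → ρ (C.pj n x) = 0)
    (hd : ∀ x, ρ x = 0 → ρ (C.d x) = 0) : CDGA where
  A := Q
  grading i := (C.grading i).map ρ.toLinearMap
  gradedA :=
    { one_mem := ⟨1, C.one_mem, map_one ρ⟩
      mul_mem := by
        rintro i j _ _ ⟨x, hx, rfl⟩ ⟨y, hy, rfl⟩
        exact ⟨x * y, C.mul_mem hx hy, map_mul ρ x y⟩
      toDecomposition := (C.push_internal hρ hpj).chooseDecomposition }
  gcomm := by
    rintro i j _ _ ⟨x, hx, rfl⟩ ⟨y, hy, rfl⟩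
    change ρ x * ρ y = _ • (ρ y * ρ x)
    rw [← map_mul, C.gcomm hx hy, map_smul, map_mul]
  d := C.desc ρ hρ C.d
  d_mem := by
    rintro i _ ⟨x, hx, rfl⟩
    exact ⟨C.d x, C.d_mem hx, (C.desc_apply hρ hd x).symm⟩
  d_sq := by
    intro y
    obtain ⟨x, rfl⟩ := hρ y
    rw [C.desc_apply hρ hd, C.desc_apply hρ hd, C.d_sq, map_zero]
  leibniz := by
    rintro i _ z ⟨x, hx, rfl⟩
    obtain ⟨y, rfl⟩ := hρ z
    change C.desc ρ hρ C.d (ρ x * ρ y) = C.desc ρ hρ C.d (ρ x) * ρ y + _ • (ρ x * _)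
    rw [← map_mul, C.desc_apply hρ hd, C.desc_apply hρ hd, C.desc_apply hρ hd, C.leibniz x y hx,
      map_add, map_mul, map_smul, map_mul]

/-- The projection to the quotient cochain algebra. -/
noncomputable def pushHom (hρ : Function.Surjective ρ)
    (hpj : ∀ n x, ρ x = 0 → ρ (C.pj n x) = 0) (hd : ∀ x, ρ x = 0 → ρ (C.d x) = 0) :
    Hom C (C.push ρ hρ hpj hd) where
  toAlgHom := ρ
  map_grading := fun hx => ⟨_, hx, rfl⟩
  comm_d := fun x => (C.desc_apply hρ hd x).symm

end CDGA

end RHT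

/-! ### Splitting of the total algebra and its pushouts -/

namespace RHT

theorem Hom.pj {C D : CDGA} (f : Hom C D) (n : ℕ) (x : C.A) :
    f.toAlgHom (C.pj n x) = D.pj n (f.toAlgHom x) := by
  refine C.hom_induction (p := fun x => f.toAlgHom (C.pj n x) = D.pj n (f.toAlgHom x))
    (by simp) ?_ ?_ x
  · intro i x hx
    by_cases h : i = n
    · subst h; rw [C.pj_of_mem hx, D.pj_of_mem (f.map_grading hx)]
    · rw [C.pj_of_mem_ne hx h, D.pj_of_mem_ne (f.map_grading hx) h, map_zero]
  · intro x y hx hy; simp only [map_add, hx, hy]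

theorem Hom.eps {C D : CDGA} (f : Hom C D) (x : C.A) :
    f.toAlgHom (C.eps x) = D.eps (f.toAlgHom x) := by
  refine C.hom_induction (p := fun x => f.toAlgHom (C.eps x) = D.eps (f.toAlgHom x))
    (by simp) ?_ ?_ x
  · intro i x hx
    rw [C.eps_of_mem hx, D.eps_of_mem (f.map_grading hx), map_smul]
  · intro x y hx hy; simp only [map_add, hx, hy]

namespace FibrationModel
variable {B B' : CDGA} {F : Sullivan} (P : FibrationModel B F)

theorem exists_sec : ∃ s : F.A →ₐ[ℚ] P.T.A, (∀ i, ∀ x ∈ F.V i, s x ∈ P.V i) ∧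
    (∀ x, P.proj.toAlgHom (s x) = x) ∧ ∀ i, ∀ v ∈ P.V i, s (P.proj.toAlgHom v) = v := by
  have hadj : ∀ i, ∀ v ∈ P.V i,
      v ∈ Subalgebra.toSubmodule (Algebra.adjoin ℚ (⋃ i, (P.V i : Set P.T.A))) :=
    fun i v hv => Algebra.subset_adjoin (Set.mem_iUnion.2 ⟨i, hv⟩)
  have hmem : ∀ i, ∀ v : P.V i, P.proj.toAlgHom v ∈ F.V i := fun i v =>
    (P.proj_V i) ▸ ⟨v, v.2, rfl⟩
  let g : (i : ℕ) → P.V i →ₗ[ℚ] F.V i := fun i =>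
    (P.proj.toAlgHom.toLinearMap ∘ₗ (P.V i).subtype).codRestrict (F.V i) (hmem i)
  have hg : ∀ i, Function.Bijective (g i) := by
    intro i
    constructor
    · rw [injective_iff_map_eq_zero]
      intro v hv
      exact Subtype.ext (P.fiber_inj v (hadj i v v.2) (congrArg Subtype.val hv))
    · rintro ⟨x, hx⟩
      rw [← P.proj_V i] at hx
      obtain ⟨v, hv, rfl⟩ := hx
      exact ⟨⟨v, hv⟩, rfl⟩
  let f : (i : ℕ) → F.V i →ₗ[ℚ] P.T.A := fun i =>
    (P.V i).subtype ∘ₗ (LinearEquiv.ofBijective (g i) (hg i)).symm.toLinearMap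
  obtain ⟨s, hs, -⟩ := F.free P.T.A P.T.grading P.T.one_mem (fun _ _ _ _ => P.T.mul_mem)
    (fun _ _ _ _ => P.T.gcomm) f (fun i v => P.V_le i (Subtype.mem _))
  have hpf : ∀ i (v : F.V i), P.proj.toAlgHom (f i v) = v := fun i v =>
    congrArg Subtype.val ((LinearEquiv.ofBijective (g i) (hg i)).apply_symm_apply v)
  have hps : ∀ x, P.proj.toAlgHom (s x) = x := by
    intro x
    have : P.proj.toAlgHom.comp s = AlgHom.id ℚ F.A := by
      apply AlgHom.ext_of_adjoin_eq_top F.generates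
      intro v hv
      obtain ⟨i, hi⟩ := Set.mem_iUnion.1 hv
      change P.proj.toAlgHom (s v) = v
      rw [hs i ⟨v, hi⟩]; exact hpf i ⟨v, hi⟩
    exact DFunLike.congr_fun this x
  have hsV : ∀ i, ∀ x ∈ F.V i, s x ∈ P.V i := by
    intro i x hx
    rw [hs i ⟨x, hx⟩]; exact Subtype.mem _
  refine ⟨s, hsV, hps, ?_⟩
  intro i v hv
  rw [← sub_eq_zero]
  refine P.fiber_inj _ (sub_mem (hadj i _ (hsV i _ (hmem i ⟨v, hv⟩))) (hadj i v hv)) ?_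
  rw [map_sub, hps, sub_self]

/-- The multiplicative section of the projection to the fibre which identifies the generators of
the fibre with the lifted generators. -/
noncomputable def sec : F.A →ₐ[ℚ] P.T.A := P.exists_sec.choose

theorem sec_V {i : ℕ} {x : F.A} (hx : x ∈ F.V i) : P.sec x ∈ P.V i :=
  P.exists_sec.choose_spec.1 i x hx
theorem proj_sec (x : F.A) : P.proj.toAlgHom (P.sec x) = x := P.exists_sec.choose_spec.2.1 x
theorem sec_proj {i : ℕ} {v : P.T.A} (hv : v ∈ P.V i) : P.sec (P.proj.toAlgHom v) = v :=
  P.exists_sec.choose_spec.2.2 i v hv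
theorem sec_mem {i : ℕ} {x : F.A} (hx : x ∈ F.grading i) : P.sec x ∈ P.T.grading i :=
  F.map_mem P.T.grading P.T.one_mem (fun _ _ _ _ => P.T.mul_mem) P.sec
    (fun i _ hx => P.V_le i (P.sec_V hx)) hx

theorem exists_triv (g : Hom B B') : ∃ τ : P.T.A →ₐ[ℚ] Tens B' F.toCDGA,
    (∀ b, τ (P.incl.toAlgHom b) = Tens.inl B' F.toCDGA (g.toAlgHom b)) ∧
    ∀ a, τ (P.sec a) = Tens.inr B' F.toCDGA a := by
  have hm : ∀ i (v : P.V i), P.proj.toAlgHom v ∈ F.grading i := fun i v =>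
    F.V_le i ((P.proj_V i) ▸ ⟨v, v.2, rfl⟩)
  obtain ⟨τ, ⟨h1, h2⟩, -⟩ := P.relFree (Tens B' F.toCDGA) (Tens.gr B' F.toCDGA) Tens.gr_one
    Tens.gr_mul Tens.gr_comm ((Tens.inl B' F.toCDGA).comp g.toAlgHom)
    (by
      intro i x hx
      have := Tens.tm_mem (F := F.toCDGA) (g.map_grading hx) F.one_mem
      rwa [add_zero] at this)
    (fun i => (Tens.inr B' F.toCDGA).toLinearMap ∘ₗ P.proj.toAlgHom.toLinearMap ∘ₗ
      (P.V i).subtype)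
    (by
      intro i v
      have := Tens.tm_mem (B := B') B'.one_mem (hm i v)
      rwa [zero_add] at this)
  refine ⟨τ, h1, fun a => ?_⟩
  have : τ.comp P.sec = Tens.inr B' F.toCDGA := by
    apply AlgHom.ext_of_adjoin_eq_top F.generates
    intro v hv
    obtain ⟨i, hi⟩ := Set.mem_iUnion.1 hv
    change τ (P.sec v) = _
    rw [h2 i ⟨P.sec v, P.sec_V hi⟩]
    change Tens.inr B' F.toCDGA (P.proj.toAlgHom (P.sec v)) = _
    rw [P.proj_sec]
  exact DFunLike.congr_fun this a

/-- The map `B ⊗ ΛV → B' ⊗ ΛV` of algebras given by a morphism of the bases. -/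
noncomputable def triv (g : Hom B B') : P.T.A →ₐ[ℚ] Tens B' F.toCDGA := (P.exists_triv g).choose

theorem triv_incl (g : Hom B B') (b : B.A) :
    P.triv g (P.incl.toAlgHom b) = Tens.inl B' F.toCDGA (g.toAlgHom b) :=
  (P.exists_triv g).choose_spec.1 b
theorem triv_sec (g : Hom B B') (a : F.A) : P.triv g (P.sec a) = Tens.inr B' F.toCDGA a :=
  (P.exists_triv g).choose_spec.2 a
theorem triv_mul (g : Hom B B') (b : B.A) (a : F.A) :
    P.triv g (P.incl.toAlgHom b * P.sec a) = Tens.tm (g.toAlgHom b) a := by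
  rw [map_mul, P.triv_incl, P.triv_sec, Tens.inl_mul_inr]

/-- The element `b ⊗ a` of the total algebra. -/
noncomputable def el (b : B.A) (a : F.A) : P.T.A := P.incl.toAlgHom b * P.sec a

theorem exists_untriv : ∃ μ : Tens B F.toCDGA →ₐ[ℚ] P.T.A, ∀ b a, μ (Tens.tm b a) = P.el b a :=
  Tens.exists_lift P.incl.toAlgHom P.sec fun _ _ _ _ hb ha =>
    P.T.gcomm (P.incl.map_grading hb) (P.sec_mem ha)

/-- The identity morphism. -/
def _root_.RHT.Hom.refl (C : CDGA) : Hom C C := ⟨AlgHom.id ℚ C.A, id, fun _ => rfl⟩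

theorem untriv_triv {μ : Tens B F.toCDGA →ₐ[ℚ] P.T.A} (hμ : ∀ b a, μ (Tens.tm b a) = P.el b a)
    (t : P.T.A) : μ (P.triv (Hom.refl B) t) = t := by
  obtain ⟨φ, -, hφ⟩ := P.relFree P.T.A P.T.grading P.T.one_mem (fun _ _ _ _ => P.T.mul_mem)
    (fun _ _ _ _ => P.T.gcomm) P.incl.toAlgHom (fun _ _ => P.incl.map_grading)
    (fun i => (P.V i).subtype) (fun i v => P.V_le i v.2)
  have h1 := hφ (AlgHom.id ℚ P.T.A) ⟨fun _ => rfl, fun _ _ => rfl⟩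
  have h2 := hφ (μ.comp (P.triv (Hom.refl B))) ⟨?_, ?_⟩
  · exact DFunLike.congr_fun (h2.trans h1.symm) t
  · intro b
    change μ (P.triv (Hom.refl B) (P.incl.toAlgHom b)) = _
    rw [P.triv_incl, Tens.inl_eq, hμ, el, map_one, mul_one]; rfl
  · intro i v
    change μ (P.triv (Hom.refl B) v) = v
    conv_lhs => rw [← P.sec_proj v.2, P.triv_sec, Tens.inr_eq, hμ, el, map_one, one_mul]
    exact P.sec_proj v.2

theorem el_induction {p : P.T.A → Prop} (h0 : p 0) (he : ∀ b a, p (P.el b a))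
    (ha : ∀ x y, p x → p y → p (x + y)) (t : P.T.A) : p t := by
  obtain ⟨μ, hμ⟩ := P.exists_untriv
  rw [← P.untriv_triv hμ t]
  induction P.triv (Hom.refl B) t using Tens.ind with
  | h0 => rwa [map_zero]
  | ht b a => rw [hμ]; exact he b a
  | ha x y hx hy => rw [map_add]; exact ha _ _ hx hy

/-- An endomorphism `κ` of the base extends to `κ ⊗ 1`. -/
theorem exists_ext (κ : B.A →ₗ[ℚ] B.A) : ∃ h : P.T.A →ₗ[ℚ] P.T.A,
    ∀ b a, h (P.el b a) = P.el (κ b) a := by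
  obtain ⟨μ, hμ⟩ := P.exists_untriv
  refine ⟨μ.toLinearMap ∘ₗ Tens.map κ LinearMap.id ∘ₗ (P.triv (Hom.refl B)).toLinearMap,
    fun b a => ?_⟩
  change μ (Tens.map κ LinearMap.id (P.triv (Hom.refl B) (P.incl.toAlgHom b * P.sec a))) = _
  rw [P.triv_mul, Tens.map_tm, hμ]; rfl

variable {g : Hom B B'}

theorem triv_surjective (hg : Function.Surjective g.toAlgHom) :
    Function.Surjective (P.triv g) := by
  intro x
  induction x using Tens.ind with
  | h0 => exact ⟨0, map_zero _⟩
  | ht b a =>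
    obtain ⟨b, rfl⟩ := hg b
    exact ⟨_, P.triv_mul g b a⟩
  | ha x y hx hy =>
    obtain ⟨x, rfl⟩ := hx
    obtain ⟨y, rfl⟩ := hy
    exact ⟨x + y, map_add _ _ _⟩

/-- The kernel of `B ⊗ ΛV → B' ⊗ ΛV` is spanned by the elements `k ⊗ a` with `k` in the kernel of
`B → B'`. -/
theorem ker_triv (hg : Function.Surjective g.toAlgHom) {t : P.T.A} (ht : P.triv g t = 0) :
    t ∈ Submodule.span ℚ {x | ∃ k a, g.toAlgHom k = 0 ∧ x = P.el k a} := by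
  obtain ⟨μ, hμ⟩ := P.exists_untriv
  have h1 : ∀ t, Tens.map g.toAlgHom.toLinearMap LinearMap.id (P.triv (Hom.refl B) t) =
      P.triv g t := by
    intro t
    induction t using P.el_induction with
    | h0 => simp
    | he b a => rw [el, P.triv_mul, P.triv_mul, Tens.map_tm]; rfl
    | ha x y hx hy => simp only [map_add, hx, hy]
  have h2 := Tens.ker_map g.toAlgHom.toLinearMap hg ((h1 t).trans ht)
  rw [← P.untriv_triv hμ t]
  generalize P.triv (Hom.refl B) t = z at h2 ⊢
  induction h2 using Submodule.span_induction with
  | mem x hx =>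
    obtain ⟨k, a, hk, rfl⟩ := hx
    rw [hμ]; exact Submodule.subset_span ⟨k, a, hk, rfl⟩
  | zero => rw [map_zero]; exact zero_mem _
  | add x y _ _ hx hy => rw [map_add]; exact add_mem hx hy
  | smul c x _ hx => rw [map_smul]; exact Submodule.smul_mem _ _ hx

theorem ker_triv_induction (hg : Function.Surjective g.toAlgHom) {p : P.T.A → Prop} (h0 : p 0)
    (he : ∀ k a, g.toAlgHom k = 0 → p (P.el k a)) (ha : ∀ x y, p x → p y → p (x + y))
    {t : P.T.A} (ht : P.triv g t = 0) : p t := by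
  refine Submodule.closure_induction (p := fun t _ => p t) h0 (fun x y _ _ => ha x y) ?_
    (P.ker_triv hg ht)
  rintro r _ ⟨k, a, hk, rfl⟩
  have : r • P.el k a = P.el (r • k) a := by rw [el, el, map_smul, smul_mul_assoc]
  rw [this]
  exact he _ _ (by rw [map_smul, hk, smul_zero])

theorem triv_incl_mul {k : B.A} (hk : g.toAlgHom k = 0) (y : P.T.A) :
    P.triv g (P.incl.toAlgHom k * y) = 0 := by
  rw [map_mul, P.triv_incl, hk, map_zero, zero_mul]

theorem triv_pj (hg : Function.Surjective g.toAlgHom) (n : ℕ) (t : P.T.A)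
    (ht : P.triv g t = 0) : P.triv g (P.T.pj n t) = 0 := by
  refine P.ker_triv_induction hg (p := fun t => P.triv g (P.T.pj n t) = 0) (by simp) ?_ ?_ ht
  · intro k a hk
    obtain ⟨N, -, hN⟩ := B.exists_sum_pj k
    rw [← hN, el, map_sum, Finset.sum_mul, map_sum, map_sum]
    refine Finset.sum_eq_zero fun i _ => ?_
    have hi : g.toAlgHom (B.pj i k) = 0 := by rw [Hom.pj, hk, map_zero]
    have hm := P.incl.map_grading (B.pj_mem i k)
    rcases lt_or_ge n i with h | h
    · rw [P.T.pj_mul_lt hm h, map_zero]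
    · obtain ⟨m, rfl⟩ := Nat.exists_eq_add_of_le h
      rw [P.T.pj_mul hm, P.triv_incl_mul hi]
  · intro x y hx hy; simp only [map_add, hx, hy, add_zero]

theorem triv_d (hg : Function.Surjective g.toAlgHom) (t : P.T.A)
    (ht : P.triv g t = 0) : P.triv g (P.T.d t) = 0 := by
  refine P.ker_triv_induction hg (p := fun t => P.triv g (P.T.d t) = 0) (by simp) ?_ ?_ ht
  · intro k a hk
    rw [el, P.T.isDiff.mul, ← P.incl.comm_d, ← Hom.eps, map_add, P.triv_incl_mul,
      P.triv_incl_mul, add_zero]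
    · rw [Hom.eps, hk, map_zero]
    · rw [g.comm_d, hk, map_zero]
  · intro x y hx hy; simp only [map_add, hx, hy, add_zero]

/-- The pushout `B' ⊗ ΛV` of the total algebra along a surjection of bases. -/
noncomputable def po (hg : Function.Surjective g.toAlgHom) : CDGA :=
  P.T.push (P.triv g) (P.triv_surjective hg) (fun n t ht => P.triv_pj hg n t ht)
    (fun t ht => P.triv_d hg t ht)

/-- The map of total algebras to the pushout. -/
noncomputable def poHom (hg : Function.Surjective g.toAlgHom) : Hom P.T (P.po hg) :=
  P.T.pushHom (P.triv g) (P.triv_surjective hg) (fun n t ht => P.triv_pj hg n t ht)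
    (fun t ht => P.triv_d hg t ht)

end FibrationModel

end RHT

/-! ### Pushouts along quasi-isomorphisms -/

namespace RHT

/-- A linear map over a field has a generalized inverse. -/
theorem exists_ginv {M N : Type*} [AddCommGroup M] [Module ℚ M] [AddCommGroup N] [Module ℚ N]
    (f : M →ₗ[ℚ] N) : ∃ σ : N →ₗ[ℚ] M, ∀ x, f (σ (f x)) = f x := by
  obtain ⟨r, hr⟩ := f.rangeRestrict.exists_rightInverse_of_surjective
    (LinearMap.range_eq_top.2 f.surjective_rangeRestrict)
  obtain ⟨σ, hσ⟩ := LinearMap.exists_extend r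
  refine ⟨σ, fun x => ?_⟩
  have h1 : σ (f x) = r (f.rangeRestrict x) := LinearMap.congr_fun hσ (f.rangeRestrict x)
  have h2 := congrArg Subtype.val (LinearMap.congr_fun hr (f.rangeRestrict x))
  rw [h1]; exact h2

/-- The kernel of a surjective quasi-isomorphism has a contracting homotopy of odd degree. -/
theorem Hom.exists_homotopy {B B' : CDGA} (g : Hom B B') (hg : Function.Surjective g.toAlgHom)
    (hq : QuasiIso g) : ∃ κ : B.A →ₗ[ℚ] B.A, (∀ b, g.toAlgHom (κ b) = 0) ∧
      (∀ b, κ (B.eps b) = -B.eps (κ b)) ∧ ∀ k, g.toAlgHom k = 0 → B.d (κ k) + κ (B.d k) = k := by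
  have hacyc : ∀ k, g.toAlgHom k = 0 → B.d k = 0 → ∃ e, g.toAlgHom e = 0 ∧ B.d e = k := by
    intro k hk hd
    obtain ⟨y, hy⟩ := hq.2 k hd ⟨0, by rw [map_zero, hk]⟩
    have h1 : B'.d (g.toAlgHom y) = 0 := by rw [← g.comm_d, hy, hk]
    obtain ⟨x, hx, w, hw⟩ := hq.1 _ h1
    obtain ⟨w, rfl⟩ := hg w
    refine ⟨y - x + B.d w, ?_, by rw [map_add, map_sub, hy, hx, B.d_sq]; abel⟩
    rw [map_add, map_sub, g.comm_d, hw]; abel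
  let K := LinearMap.ker g.toAlgHom.toLinearMap
  have hKd : ∀ k ∈ K, B.d k ∈ K := by
    intro k hk
    change g.toAlgHom (B.d k) = 0
    have hk' : g.toAlgHom k = 0 := hk
    rw [g.comm_d, hk', map_zero]
  obtain ⟨σ, hσ⟩ := exists_ginv (B.d.restrict hKd)
  obtain ⟨π, hπ⟩ := LinearMap.exists_extend (LinearMap.id : K →ₗ[ℚ] K)
  have hπ' : ∀ k : K, π k = k := fun k => LinearMap.congr_fun hπ k
  let κ0 : B.A →ₗ[ℚ] B.A :=
    K.subtype ∘ₗ (σ - σ ∘ₗ σ ∘ₗ B.d.restrict hKd) ∘ₗ π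
  have hκ0 : ∀ b, g.toAlgHom (κ0 b) = 0 := fun b =>
    ((σ - σ ∘ₗ σ ∘ₗ B.d.restrict hKd) (π b)).2
  have hκ : ∀ k, g.toAlgHom k = 0 → B.d (κ0 k) + κ0 (B.d k) = k := by
    intro k hk
    obtain ⟨k, rfl⟩ : ∃ k' : K, k = k' := ⟨⟨k, hk⟩, rfl⟩
    have hd2 : B.d.restrict hKd (B.d.restrict hKd k) = 0 := Subtype.ext (B.d_sq _)
    obtain ⟨e, he, hde⟩ := hacyc (k - σ (B.d.restrict hKd k) : K)
      (k - σ (B.d.restrict hKd k)).2 (by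
      have := congrArg Subtype.val (hσ k)
      change B.d (σ (B.d.restrict hKd k)) = B.d k at this
      change B.d (k - σ (B.d.restrict hKd k)) = 0
      rw [map_sub, this, sub_self])
    have hde' : B.d.restrict hKd ⟨e, he⟩ = k - σ (B.d.restrict hKd k) := Subtype.ext hde
    have h1 : B.d.restrict hKd (σ (k - σ (B.d.restrict hKd k))) = k - σ (B.d.restrict hKd k) := by
      rw [← hde', hσ]
    have h2 : B.d (κ0 k) = (B.d.restrict hKd (σ (k - σ (B.d.restrict hKd k))) : K) := by
      change B.d ((σ - σ ∘ₗ σ ∘ₗ B.d.restrict hKd) (π k) : K) = _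
      rw [hπ', map_sub]; rfl
    have h3 : κ0 (B.d k) = (σ (B.d.restrict hKd k) : K) := by
      change ((σ - σ ∘ₗ σ ∘ₗ B.d.restrict hKd) (π (B.d.restrict hKd k : K)) : B.A) = _
      rw [hπ', LinearMap.sub_apply, LinearMap.comp_apply, LinearMap.comp_apply, hd2, map_zero,
        map_zero, sub_zero]
    rw [h2, h1, h3]
    simp
  refine ⟨(2⁻¹ : ℚ) • (κ0 - B.eps.toLinearMap ∘ₗ κ0 ∘ₗ B.eps.toLinearMap), ?_, ?_, ?_⟩
  · intro b
    change g.toAlgHom ((2⁻¹ : ℚ) • (κ0 b - B.eps (κ0 (B.eps b)))) = 0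
    rw [map_smul, map_sub, Hom.eps, hκ0, hκ0, map_zero, sub_zero, smul_zero]
  · intro b
    change (2⁻¹ : ℚ) • (κ0 (B.eps b) - B.eps (κ0 (B.eps (B.eps b)))) =
      -B.eps ((2⁻¹ : ℚ) • (κ0 b - B.eps (κ0 (B.eps b))))
    rw [B.isSuper.invol, map_smul, map_sub, B.isSuper.invol, ← smul_neg]
    congr 1; abel
  · intro k hk
    change B.d ((2⁻¹ : ℚ) • (κ0 k - B.eps (κ0 (B.eps k)))) +
      (2⁻¹ : ℚ) • (κ0 (B.d k) - B.eps (κ0 (B.eps (B.d k)))) = k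
    have h1 := hκ k hk
    have h2 := congrArg B.eps (hκ (B.eps k) (by rw [Hom.eps, hk, map_zero]))
    rw [B.isSuper.invol, map_add, B.isDiff.eps, map_neg, map_neg] at h2
    rw [map_smul, ← smul_add, map_sub, B.isDiff.eps]
    have h3 : B.d (κ0 k) - -B.eps (B.d (κ0 (B.eps k))) +
        (κ0 (B.d k) - B.eps (κ0 (B.eps (B.d k)))) = (2 : ℚ) • k := by
      calc _ = (B.d (κ0 k) + κ0 (B.d k)) +
            (B.eps (B.d (κ0 (B.eps k))) + -B.eps (κ0 (B.eps (B.d k)))) := by abel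
        _ = _ := by rw [h1, h2, two_smul]
    rw [h3, smul_smul]; norm_num

namespace FibrationModel
variable {B B' : CDGA} {F : Sullivan} (P : FibrationModel B F) {g : Hom B B'}

theorem el_hom_induction {p : P.T.A → Prop} (h0 : p 0)
    (he : ∀ i j b a, b ∈ B.grading i → a ∈ F.grading j → p (P.el b a))
    (ha : ∀ x y, p x → p y → p (x + y)) (t : P.T.A) : p t := by
  refine P.el_induction h0 ?_ ha t
  intro b a
  refine B.hom_induction (p := fun b => p (P.el b a)) ?_ ?_ ?_ b
  · rwa [el, map_zero, zero_mul]
  · intro i b hb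
    refine F.hom_induction (p := fun a => p (P.el b a)) ?_ ?_ ?_ a
    · rwa [el, map_zero, mul_zero]
    · intro j a haj; exact he i j b a hb haj
    · intro x y hx hy; rw [el, map_add, mul_add]; exact ha _ _ hx hy
  · intro x y hx hy; rw [el, map_add, add_mul]; exact ha _ _ hx hy

theorem proj_el {i : ℕ} (hi : 0 < i) {b : B.A} (hb : b ∈ B.grading i) (a : F.A) :
    P.proj.toAlgHom (P.el b a) = 0 := by
  rw [el, map_mul, P.proj_incl i hi b hb, zero_mul]

theorem el_mem {i j : ℕ} {b : B.A} {a : F.A} (hb : b ∈ B.grading i) (ha : a ∈ F.grading j) :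
    P.el b a ∈ P.T.grading (i + j) := P.T.mul_mem (P.incl.map_grading hb) (P.sec_mem ha)

/-- Over a simply connected base, an element of degree `m` agrees with its restriction to the
fibre up to terms whose fibre factor has degree at most `m - 2`. -/
theorem sub_sec_mem (hB0 : ∀ x ∈ B.grading 0, ∃ c : ℚ, x = c • 1)
    (hB1 : ∀ x ∈ B.grading 1, x = 0) {m : ℕ} {t : P.T.A} (ht : t ∈ P.T.grading m) :
    t - P.sec (P.proj.toAlgHom t) ∈
      Submodule.span ℚ {x | ∃ b a i, a ∈ F.grading i ∧ i + 2 ≤ m ∧ x = P.el b a} := by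
  suffices ∀ t, P.T.pj m t - P.sec (P.proj.toAlgHom (P.T.pj m t)) ∈
      Submodule.span ℚ {x | ∃ b a i, a ∈ F.grading i ∧ i + 2 ≤ m ∧ x = P.el b a} by
    have := this t
    rwa [P.T.pj_of_mem ht] at this
  clear ht t
  intro t
  induction t using P.el_hom_induction with
  | h0 => simp
  | he i j b a hb ha =>
    by_cases h : i + j = m
    · subst h
      rw [P.T.pj_of_mem (P.el_mem hb ha)]
      rcases Nat.lt_or_ge i 2 with hi | hi
      · interval_cases i
        · obtain ⟨c, rfl⟩ := hB0 b hb
          rw [el, map_smul, map_one, smul_mul_assoc, one_mul, map_smul, map_smul, P.proj_sec,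
            sub_self]
          exact zero_mem _
        · rw [hB1 b hb, el, map_zero, zero_mul, map_zero, map_zero, sub_zero]; exact zero_mem _
      · rw [P.proj_el (by omega) hb, map_zero, sub_zero]
        exact Submodule.subset_span ⟨b, a, j, ha, by omega, rfl⟩
    · rw [P.T.pj_of_mem_ne (P.el_mem hb ha) h, map_zero, map_zero, sub_zero]; exact zero_mem _
  | ha x y hx hy =>
    rw [map_add, map_add, map_add, add_sub_add_comm]; exact add_mem hx hy

variable (g) in
/-- The part of the kernel of `B ⊗ ΛV → B' ⊗ ΛV` with fibre factors of degree less than `m`. -/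
noncomputable def kf (m : ℕ) : Submodule ℚ P.T.A :=
  Submodule.span ℚ {x | ∃ k a i, g.toAlgHom k = 0 ∧ a ∈ F.grading i ∧ i < m ∧ x = P.el k a}

theorem kf_mono {m n : ℕ} (h : m ≤ n) : P.kf g m ≤ P.kf g n :=
  Submodule.span_mono fun _ ⟨k, a, i, h1, h2, h3, h4⟩ => ⟨k, a, i, h1, h2, by omega, h4⟩

theorem triv_kf {m : ℕ} {t : P.T.A} (ht : t ∈ P.kf g m) : P.triv g t = 0 := by
  induction ht using Submodule.span_induction with
  | mem x hx => obtain ⟨k, a, i, hk, -, -, rfl⟩ := hx; exact P.triv_incl_mul hk _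
  | zero => rw [map_zero]
  | add x y _ _ hx hy => rw [map_add, hx, hy, add_zero]
  | smul c x _ hx => rw [map_smul, hx, smul_zero]

theorem exists_kf (hg : Function.Surjective g.toAlgHom) {t : P.T.A} (ht : P.triv g t = 0) :
    ∃ m, t ∈ P.kf g m := by
  refine P.ker_triv_induction hg (p := fun t => ∃ m, t ∈ P.kf g m) ⟨0, zero_mem _⟩ ?_ ?_ ht
  · intro k a hk
    refine F.hom_induction (p := fun a => ∃ m, P.el k a ∈ P.kf g m) ?_ ?_ ?_ a
    · exact ⟨0, by rw [el, map_zero, mul_zero]; exact zero_mem _⟩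
    · intro j a ha
      exact ⟨j + 1, Submodule.subset_span ⟨k, a, j, hk, ha, by omega, rfl⟩⟩
    · rintro x y ⟨m, hm⟩ ⟨n, hn⟩
      refine ⟨max m n, ?_⟩
      rw [el, map_add, mul_add]
      exact add_mem (P.kf_mono (le_max_left _ _) hm) (P.kf_mono (le_max_right _ _) hn)
  · rintro x y ⟨m, hm⟩ ⟨n, hn⟩
    exact ⟨max m n, add_mem (P.kf_mono (le_max_left _ _) hm) (P.kf_mono (le_max_right _ _) hn)⟩

/-- If `B → B'` is a surjective quasi-isomorphism, the kernel of `B ⊗ ΛV → B' ⊗ ΛV` is acyclic: the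
contraction of the kernel of `B → B'`, extended to `B ⊗ ΛV`, is a contraction up to terms of lower
fibre degree. -/
theorem ker_triv_acyclic (hB0 : ∀ x ∈ B.grading 0, ∃ c : ℚ, x = c • 1)
    (hB1 : ∀ x ∈ B.grading 1, x = 0) (hg : Function.Surjective g.toAlgHom) (hq : QuasiIso g)
    {t : P.T.A} (ht : P.triv g t = 0) (hd : P.T.d t = 0) :
    ∃ u, P.triv g u = 0 ∧ P.T.d u = t := by
  obtain ⟨κ, hκg, hκe, hκd⟩ := g.exists_homotopy hg hq
  obtain ⟨h, hh⟩ := P.exists_ext κ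
  have hmul : ∀ b b' a, P.incl.toAlgHom b * P.el b' a = P.el (b * b') a := by
    intro b b' a; rw [el, el, map_mul, mul_assoc]
  -- On the associated graded, `h` is a contracting homotopy.
  have key : ∀ m, ∀ t ∈ P.kf g (m + 1), P.T.d (h t) + h (P.T.d t) - t ∈ P.kf g m := by
    intro m t ht
    induction ht using Submodule.span_induction with
    | mem x hx =>
      obtain ⟨k, a, i, hk, ha, hi, rfl⟩ := hx
      have hr := P.sub_sec_mem hB0 hB1 (P.T.d_mem (P.sec_mem ha))
      rw [P.proj.comm_d, P.proj_sec] at hr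
      obtain ⟨r, hr', hr⟩ : ∃ r, r = P.T.d (P.sec a) - P.sec (F.d a) ∧ r ∈ _ := ⟨_, rfl, hr⟩
      have hds : P.T.d (P.sec a) = P.sec (F.d a) + r := by rw [hr']; abel
      have hD : ∀ b, P.T.d (P.el b a) =
          P.el (B.d b) a + P.el (B.eps b) (F.d a) + P.incl.toAlgHom (B.eps b) * r := by
        intro b
        rw [el, P.T.isDiff.mul, ← P.incl.comm_d, ← Hom.eps, hds, mul_add, ← add_assoc]; rfl
      have h1 : P.T.d (h (P.el k a)) + h (P.T.d (P.el k a)) - P.el k a =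
          P.incl.toAlgHom (B.eps (κ k)) * r + h (P.incl.toAlgHom (B.eps k) * r) := by
        rw [hh, hD, hD, map_add, map_add, hh, hh, hκe]
        have h2 : P.el k a = P.el (B.d (κ k)) a + P.el (κ (B.d k)) a := by
          rw [el, el, el, ← add_mul, ← map_add, hκd k hk]
        have h3 : P.el (-B.eps (κ k)) (F.d a) = -P.el (B.eps (κ k)) (F.d a) := by
          rw [el, map_neg, neg_mul]; rfl
        rw [h2, h3]; abel
      rw [h1]
      clear hr' hds hD h1
      induction hr using Submodule.span_induction with
      | mem r hr =>
        obtain ⟨b, a', j, ha', hj, rfl⟩ := hr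
        rw [hmul, hmul, hh]
        refine add_mem (Submodule.subset_span ⟨_, a', j, ?_, ha', by omega, rfl⟩)
          (Submodule.subset_span ⟨_, a', j, hκg _, ha', by omega, rfl⟩)
        rw [map_mul, Hom.eps, hκg, map_zero, zero_mul]
      | zero => rw [mul_zero, mul_zero, map_zero, add_zero]; exact zero_mem _
      | add x y _ _ hx hy =>
        rw [mul_add, mul_add, map_add, add_add_add_comm]; exact add_mem hx hy
      | smul c x _ hx =>
        rw [mul_smul_comm, mul_smul_comm, map_smul, ← smul_add]; exact Submodule.smul_mem _ _ hx
    | zero => simp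
    | add x y _ _ hx hy =>
      rw [map_add, map_add, map_add, map_add,
        show ∀ a b c d e f : P.T.A, a + b + (c + d) - (e + f) = (a + c - e) + (b + d - f) by
          intros; abel]
      exact add_mem hx hy
    | smul c x _ hx =>
      rw [map_smul, map_smul, map_smul, map_smul, ← smul_add, ← smul_sub]
      exact Submodule.smul_mem _ _ hx
  have hhk : ∀ t, P.triv g (h t) = 0 := by
    intro t
    induction t using P.el_induction with
    | h0 => simp
    | he b a => rw [hh]; exact P.triv_incl_mul (hκg b) _
    | ha x y hx hy => simp only [map_add, hx, hy, add_zero]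
  obtain ⟨m, hm⟩ := P.exists_kf hg ht
  clear ht
  induction m generalizing t with
  | zero =>
    have : t = 0 := by
      rw [← Submodule.mem_bot ℚ]
      refine (Submodule.span_le.2 ?_) hm
      rintro _ ⟨k, a, i, -, -, hi, -⟩
      omega
    exact ⟨0, map_zero _, by rw [map_zero, this]⟩
  | succ m ih =>
    have h1 := key m t hm
    rw [hd, map_zero, add_zero] at h1
    obtain ⟨u, hu, hdu⟩ := ih (by rw [map_sub, P.T.d_sq, hd, sub_zero]) h1
    refine ⟨h t - u, by rw [map_sub, hhk, hu, sub_zero], by rw [map_sub, hdu]; abel⟩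

/-- The pushout along a surjective quasi-isomorphism of bases is quasi-isomorphic to the total
algebra, the kernel of the projection being acyclic. -/
theorem poHom_quasiIso (hB0 : ∀ x ∈ B.grading 0, ∃ c : ℚ, x = c • 1)
    (hB1 : ∀ x ∈ B.grading 1, x = 0) (hg : Function.Surjective g.toAlgHom) (hq : QuasiIso g) :
    QuasiIso (P.poHom hg) := by
  have hsurj : Function.Surjective (P.poHom hg).toAlgHom := P.triv_surjective hg
  have hker : ∀ t, (P.poHom hg).toAlgHom t = 0 → P.T.d t = 0 →
      ∃ u, (P.poHom hg).toAlgHom u = 0 ∧ P.T.d u = t :=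
    fun t ht hd => P.ker_triv_acyclic hB0 hB1 hg hq ht hd
  constructor
  · intro y hy
    obtain ⟨x, rfl⟩ := hsurj y
    rw [← (P.poHom hg).comm_d] at hy
    obtain ⟨u, hu, hdu⟩ := hker _ hy (P.T.d_sq x)
    exact ⟨x - u, by rw [map_sub, hdu, sub_self], 0, by
      rw [map_zero, map_sub, hu, sub_zero, sub_self]⟩
  · rintro x hx ⟨y, hy⟩
    obtain ⟨y, rfl⟩ := hsurj y
    rw [← (P.poHom hg).comm_d] at hy
    obtain ⟨u, hu, hdu⟩ := hker (x - P.T.d y) (by rw [map_sub, hy, sub_self])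
      (by rw [map_sub, hx, P.T.d_sq, sub_self])
    exact ⟨u + y, by rw [map_add, hdu]; abel⟩

end FibrationModel

end RHT

/-! ### The fibration over the cohomology of the base -/

namespace RHT

/-- Algebra homomorphisms descend along surjections whose kernel they annihilate. -/
theorem exists_algHom_desc {A Q C : Type} [Ring A] [Algebra ℚ A] [Ring Q] [Algebra ℚ Q] [Ring C]
    [Algebra ℚ C] (ρ : A →ₐ[ℚ] Q) (hρ : Function.Surjective ρ) (p : A →ₐ[ℚ] C)
    (h : ∀ t, ρ t = 0 → p t = 0) : ∃ π : Q →ₐ[ℚ] C, ∀ t, π (ρ t) = p t := by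
  obtain ⟨σ, hσ⟩ := ρ.toLinearMap.exists_rightInverse_of_surjective (LinearMap.range_eq_top.2 hρ)
  have key : ∀ t, p (σ (ρ t)) = p t := by
    intro t
    rw [← sub_eq_zero, ← map_sub]
    apply h
    have : ρ (σ (ρ t)) = ρ t := LinearMap.congr_fun hσ (ρ t)
    rw [map_sub, this, sub_self]
  refine ⟨AlgHom.ofLinearMap (p.toLinearMap ∘ₗ σ) ?_ ?_, key⟩
  · have := key 1
    rw [map_one ρ, map_one p] at this
    exact this
  · intro x y
    obtain ⟨x, rfl⟩ := hρ x
    obtain ⟨y, rfl⟩ := hρ y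
    change p (σ (ρ x * ρ y)) = p (σ (ρ x)) * p (σ (ρ y))
    rw [← map_mul, key, key, key, map_mul]

/-- A cochain algebra `H ⊗ ΛV` over `H` with fibre `ΛV`; the differential of `T` need not preserve
the second factor. -/
structure Twisted (H : CDGA) (F : Sullivan) where
  T : CDGA
  inl : Hom H T
  inr : F.A →ₐ[ℚ] T.A
  proj : Hom T F.toCDGA
  inr_mem : ∀ {i : ℕ} {a : F.A}, a ∈ F.grading i → inr a ∈ T.grading i
  proj_inr : ∀ a, proj.toAlgHom (inr a) = a
  proj_inl : ∀ i, 0 < i → ∀ x ∈ H.grading i, proj.toAlgHom (inl.toAlgHom x) = 0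
  ind : ∀ {p : T.A → Prop}, p 0 → (∀ h a, p (inl.toAlgHom h * inr a)) →
    (∀ x y, p x → p y → p (x + y)) → ∀ t, p t
  lin : ∀ {M : Type} [AddCommGroup M] [Module ℚ M] (m : H.A →ₗ[ℚ] F.A →ₗ[ℚ] M),
    ∃ φ : T.A →ₗ[ℚ] M, ∀ h a, φ (inl.toAlgHom h * inr a) = m h a
  lift : ∀ {C : Type} [Ring C] [Algebra ℚ C] (f : H.A →ₐ[ℚ] C) (g : F.A →ₐ[ℚ] C),
    (∀ i j h a, h ∈ H.grading i → a ∈ F.grading j →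
      f h * g a = ((-1 : ℚ) ^ (i * j)) • (g a * f h)) →
    ∃ φ : T.A →ₐ[ℚ] C, ∀ h a, φ (inl.toAlgHom h * inr a) = f h * g a

namespace FibrationModel
variable {B H : CDGA} {F : Sullivan} (P : FibrationModel B F) {g : Hom B H}

theorem proj_triv_ker (hB0 : ∀ x ∈ B.grading 0, ∃ c : ℚ, x = c • 1)
    (hg : Function.Surjective g.toAlgHom) (hq : QuasiIso g) (t : P.T.A) (ht : P.triv g t = 0) :
    P.proj.toAlgHom t = 0 := by
  refine P.ker_triv_induction hg (p := fun t => P.proj.toAlgHom t = 0) (map_zero _) ?_ ?_ ht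
  · intro k a hk
    obtain ⟨N, -, hN⟩ := B.exists_sum_pj k
    rw [← hN, el, map_sum, map_mul, map_sum, Finset.sum_mul]
    refine Finset.sum_eq_zero fun i _ => ?_
    rcases Nat.eq_zero_or_pos i with rfl | hi
    · have h0 : g.toAlgHom (B.pj 0 k) = 0 := by rw [Hom.pj, hk, map_zero]
      obtain ⟨c, hc⟩ := hB0 _ (B.pj_mem 0 k)
      obtain ⟨y, hy⟩ := hq.2 (B.pj 0 k) (by rw [hc, map_smul, B.d_one, smul_zero])
        ⟨0, by rw [map_zero, h0]⟩
      have : B.pj 0 k = 0 := by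
        rw [← B.pj_of_mem (B.pj_mem 0 k), ← hy, B.pj_zero_d]
      rw [this, map_zero, map_zero, zero_mul]
    · rw [P.proj_incl i hi _ (B.pj_mem i k), zero_mul]
  · intro x y hx hy; rw [map_add, hx, hy, add_zero]

/-- The total algebra of a fibration is quasi-isomorphic to a twisted tensor product over any
algebra receiving a surjective quasi-isomorphism from the model of the base. -/
theorem exists_twisted (hB0 : ∀ x ∈ B.grading 0, ∃ c : ℚ, x = c • 1)
    (hB1 : ∀ x ∈ B.grading 1, x = 0) (hg : Function.Surjective g.toAlgHom) (hq : QuasiIso g) :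
    ∃ (W : Twisted H F) (ρ : Hom P.T W.T), QuasiIso ρ ∧ Function.Surjective ρ.toAlgHom ∧
      (∀ b, ρ.toAlgHom (P.incl.toAlgHom b) = W.inl.toAlgHom (g.toAlgHom b)) ∧
      ∀ t, W.proj.toAlgHom (ρ.toAlgHom t) = P.proj.toAlgHom t := by
  let ρ := P.poHom hg
  have hρ : Function.Surjective ρ.toAlgHom := P.triv_surjective hg
  obtain ⟨π, hπ⟩ := exists_algHom_desc ρ.toAlgHom hρ P.proj.toAlgHom
    (P.proj_triv_ker hB0 hg hq)
  obtain ⟨inl, inr, hρi, hρs, hind, hlin, hlift⟩ : ∃ (inl : H.A →ₐ[ℚ] (P.po hg).A)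
      (inr : F.A →ₐ[ℚ] (P.po hg).A),
      (∀ b, ρ.toAlgHom (P.incl.toAlgHom b) = inl (g.toAlgHom b)) ∧
      (∀ a, ρ.toAlgHom (P.sec a) = inr a) ∧
      (∀ {p : (P.po hg).A → Prop}, p 0 → (∀ h a, p (inl h * inr a)) →
        (∀ x y, p x → p y → p (x + y)) → ∀ t, p t) ∧
      (∀ {M : Type} [AddCommGroup M] [Module ℚ M] (m : H.A →ₗ[ℚ] F.A →ₗ[ℚ] M),
        ∃ φ : (P.po hg).A →ₗ[ℚ] M, ∀ h a, φ (inl h * inr a) = m h a) ∧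
      (∀ {C : Type} [Ring C] [Algebra ℚ C] (f : H.A →ₐ[ℚ] C) (g : F.A →ₐ[ℚ] C),
        (∀ i j h a, h ∈ H.grading i → a ∈ F.grading j →
          f h * g a = ((-1 : ℚ) ^ (i * j)) • (g a * f h)) →
        ∃ φ : (P.po hg).A →ₐ[ℚ] C, ∀ h a, φ (inl h * inr a) = f h * g a) := by
    refine ⟨Tens.inl H F.toCDGA, Tens.inr H F.toCDGA, P.triv_incl g, P.triv_sec g, ?_, ?_, ?_⟩
    · intro p h0 he ha t
      exact Tens.ind (F := F.toCDGA) h0 (fun b a => (Tens.inl_mul_inr b a) ▸ he b a) ha t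
    · intro M _ _ m
      obtain ⟨φ, hφ⟩ := Tens.exists_linear (F := F.toCDGA) m
      exact ⟨φ, fun h a => (congrArg φ (Tens.inl_mul_inr h a)).trans (hφ h a)⟩
    · intro C _ _ f g' h
      obtain ⟨φ, hφ⟩ := Tens.exists_lift (F := F.toCDGA) f g' h
      exact ⟨φ, fun h a => (congrArg φ (Tens.inl_mul_inr h a)).trans (hφ h a)⟩
  refine ⟨
    { T := P.po hg
      inl := ⟨inl, ?_, ?_⟩
      inr := inr
      proj := ⟨π, ?_, ?_⟩
      inr_mem := ?_
      proj_inr := ?_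
      proj_inl := ?_
      ind := hind
      lin := hlin
      lift := hlift }, ρ, P.poHom_quasiIso hB0 hB1 hg hq, hρ, hρi, hπ⟩
  · intro i x hx
    obtain ⟨b, rfl⟩ := hg x
    rw [← H.pj_of_mem hx, ← Hom.pj, ← hρi]
    exact ρ.map_grading (P.incl.map_grading (B.pj_mem i b))
  · intro x
    obtain ⟨b, rfl⟩ := hg x
    rw [← hρi, ← ρ.comm_d, ← P.incl.comm_d, hρi, g.comm_d]
  · rintro i _ ⟨t, ht, rfl⟩
    exact (hπ t).symm ▸ P.proj.map_grading ht
  · intro y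
    obtain ⟨t, rfl⟩ := hρ y
    rw [← ρ.comm_d, hπ, hπ, P.proj.comm_d]
  · intro i a ha
    rw [← hρs]; exact ρ.map_grading (P.sec_mem ha)
  · intro a
    rw [← hρs]; exact (hπ _).trans (P.proj_sec a)
  · intro i hi x hx
    obtain ⟨b, rfl⟩ := hg x
    have h1 : g.toAlgHom b = g.toAlgHom (B.pj i b) := by rw [Hom.pj, H.pj_of_mem hx]
    rw [h1]
    change π (inl _) = 0
    rw [← hρi, hπ]; exact P.proj_incl i hi _ (B.pj_mem i b)

end FibrationModel

end RHT

/-! ### The chain section -/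

namespace RHT

/-- `H` is the cohomology algebra of a connected wedge of odd-dimensional spheres. -/
structure WedgeAlg (H : CDGA) : Prop where
  zero : H.ZeroDiff
  scalar : ∀ x ∈ H.grading 0, ∃ c : ℚ, x = c • 1
  even : ∀ k, 0 < k → ∀ x ∈ H.grading (2 * k), x = 0
  mul : ∀ i j x y, 0 < i → 0 < j → x ∈ H.grading i → y ∈ H.grading j → x * y = 0

namespace Twisted
variable {H : CDGA} {F : Sullivan} (W : Twisted H F)

/-- The element `h ⊗ a`. -/
noncomputable def el (h : H.A) (a : F.A) : W.T.A := W.inl.toAlgHom h * W.inr a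

/-- The ideal `H⁺ ⊗ ΛV`. -/
noncomputable def Ip : Submodule ℚ W.T.A :=
  Submodule.span ℚ {x | ∃ i h a, Odd i ∧ h ∈ H.grading i ∧ x = W.el h a}

theorem proj_Ip {x : W.T.A} (hx : x ∈ W.Ip) : W.proj.toAlgHom x = 0 := by
  induction hx using Submodule.span_induction with
  | mem x hx =>
    obtain ⟨i, h, a, hi, hh, rfl⟩ := hx
    rw [el, map_mul, W.proj_inl i hi.pos h hh, zero_mul]
  | zero => rw [map_zero]
  | add x y _ _ hx hy => rw [map_add, hx, hy, add_zero]
  | smul c x _ hx => rw [map_smul, hx, smul_zero]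

theorem induct {p : W.T.A → Prop} (h0 : p 0) (he : ∀ h a, p (W.inl.toAlgHom h * W.inr a))
    (ha : ∀ x y, p x → p y → p (x + y)) (t : W.T.A) : p t := W.ind h0 he ha t

theorem sub_inr (hH : WedgeAlg H) (q : W.T.A) : q - W.inr (W.proj.toAlgHom q) ∈ W.Ip := by
  induction q using W.induct with
  | h0 => rw [map_zero, map_zero, sub_zero]; exact zero_mem _
  | he h a =>
    refine H.hom_induction (p := fun h => W.inl.toAlgHom h * W.inr a -
      W.inr (W.proj.toAlgHom (W.inl.toAlgHom h * W.inr a)) ∈ W.Ip) ?_ ?_ ?_ h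
    · rw [map_zero, zero_mul, map_zero, map_zero, sub_zero]; exact zero_mem _
    · intro i h hh
      rcases Nat.even_or_odd' i with ⟨k, rfl | hk⟩
      · rcases Nat.eq_zero_or_pos k with rfl | hk
        · obtain ⟨c, rfl⟩ := hH.scalar h hh
          rw [map_smul, map_one, smul_mul_assoc, one_mul, map_smul, map_smul, W.proj_inr, sub_self]
          exact zero_mem _
        · rw [hH.even k hk h hh, map_zero, zero_mul, map_zero, map_zero, sub_zero]
          exact zero_mem _
      · have hi : Odd i := ⟨k, hk⟩
        rw [map_mul, W.proj_inl i hi.pos h hh, zero_mul, map_zero, sub_zero]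
        exact Submodule.subset_span ⟨i, h, a, hi, hh, rfl⟩
    · intro x y hx hy
      rw [map_add, add_mul, map_add, map_add, add_sub_add_comm]; exact add_mem hx hy
  | ha x y hx hy => rw [map_add, map_add, add_sub_add_comm]; exact add_mem hx hy

theorem mem_Ip (hH : WedgeAlg H) {q : W.T.A} (hq : W.proj.toAlgHom q = 0) : q ∈ W.Ip := by
  have := W.sub_inr hH q
  rwa [hq, map_zero, sub_zero] at this

theorem inl_mul_Ip (hH : WedgeAlg H) {i : ℕ} (hi : Odd i) {h : H.A} (hh : h ∈ H.grading i)
    {x : W.T.A} (hx : x ∈ W.Ip) : W.inl.toAlgHom h * x = 0 := by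
  induction hx using Submodule.span_induction with
  | mem x hx =>
    obtain ⟨j, h', a, hj, hh', rfl⟩ := hx
    rw [el, ← mul_assoc, ← map_mul, hH.mul i j h h' hi.pos hj.pos hh hh', map_zero, zero_mul]
  | zero => rw [mul_zero]
  | add x y _ _ hx hy => rw [mul_add, hx, hy, add_zero]
  | smul c x _ hx => rw [mul_smul_comm, hx, smul_zero]

/-- On `H⁺ ⊗ ΛV` the differential is `-1 ⊗ d`, because `H⁺ · H⁺ = 0`. -/
theorem d_el (hH : WedgeAlg H) {i : ℕ} (hi : Odd i) {h : H.A} (hh : h ∈ H.grading i) (a : F.A) :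
    W.T.d (W.el h a) = -W.el h (F.d a) := by
  have h1 := W.inl_mul_Ip hH hi hh (W.sub_inr hH (W.T.d (W.inr a)))
  rw [W.proj.comm_d, W.proj_inr, mul_sub, sub_eq_zero] at h1
  rw [el, W.T.isDiff.mul, ← W.inl.comm_d, hH.zero, map_zero, zero_mul, zero_add,
    W.T.eps_odd hi (W.inl.map_grading hh), neg_mul, h1]
  rfl

theorem eps_inr (a : F.A) : W.T.eps (W.inr a) = W.inr (F.eps a) := by
  refine F.hom_induction (p := fun a => W.T.eps (W.inr a) = W.inr (F.eps a)) (by simp) ?_ ?_ a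
  · intro i x hx
    rw [F.eps_of_mem hx, W.T.eps_of_mem (W.inr_mem hx), map_smul]
  · intro x y hx hy; simp only [map_add, hx, hy]

theorem exists_ext (κ : F.A →ₗ[ℚ] F.A) :
    ∃ k : W.T.A →ₗ[ℚ] W.T.A, ∀ h a, k (W.el h a) = W.el h (κ a) :=
  W.lin ((LinearMap.mul ℚ W.T.A).compl₁₂ W.inl.toAlgHom.toLinearMap
    (W.inr.toLinearMap ∘ₗ κ))

/-- Even cocycles in `H⁺ ⊗ ΛV` are exact there: `H⁺` is odd and the odd cohomology of the fibre
vanishes. -/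
theorem exact_Ip (hH : WedgeAlg H) (hm : F.Minimal) (hE : F.Elliptic) (hχ : F.PosEuler)
    {o : W.T.A} (ho : o ∈ W.Ip) (he : W.T.eps o = o) (hd : W.T.d o = 0) :
    ∃ u ∈ W.Ip, W.T.d u = o := by
  obtain ⟨κ, l, hκ⟩ := F.exists_contraction hm hE hχ
  -- The contraction `1 ⊗ κ` is applied to the even part of `H⁺ ⊗ ΛV`, whose fibre factors are odd.
  let od : F.A →ₗ[ℚ] F.A := (2⁻¹ : ℚ) • (LinearMap.id - F.eps.toLinearMap)
  have hod : ∀ a, od a = (2⁻¹ : ℚ) • (a - F.eps a) := fun _ => rfl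
  obtain ⟨k, hk⟩ := W.exists_ext (κ ∘ₗ od)
  obtain ⟨L, hL⟩ := W.exists_ext l
  have key : ∀ x ∈ W.Ip, k x ∈ W.Ip ∧ W.T.d (k x) + L (W.T.d ((2⁻¹ : ℚ) • (x + W.T.eps x))) =
      -((2⁻¹ : ℚ) • (x + W.T.eps x)) := by
    intro x hx
    induction hx using Submodule.span_induction with
    | mem x hx =>
      obtain ⟨i, h, a, hi, hh, rfl⟩ := hx
      refine ⟨by rw [hk]; exact Submodule.subset_span ⟨i, h, _, hi, hh, rfl⟩, ?_⟩
      have h1 : (2⁻¹ : ℚ) • (W.el h a + W.T.eps (W.el h a)) = W.el h (od a) := by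
        rw [hod, el, map_mul, W.T.eps_odd hi (W.inl.map_grading hh), W.eps_inr, el, map_smul,
          map_sub, mul_smul_comm, mul_sub, neg_mul, sub_eq_add_neg]
      have h2 : F.eps (od a) = -od a := by
        rw [hod, map_smul, map_sub, F.isSuper.invol, ← smul_neg, neg_sub]
      rw [h1, hk, W.d_el hH hi hh, W.d_el hH hi hh, map_neg, hL, ← neg_add, el, el, ← mul_add,
        ← map_add, LinearMap.comp_apply, ← hκ _ h2]
      rfl
    | zero => simp [zero_mem]
    | add x y _ _ hx hy =>
      refine ⟨by rw [map_add]; exact add_mem hx.1 hy.1, ?_⟩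
      have e : (2⁻¹ : ℚ) • (x + y + W.T.eps (x + y)) =
          (2⁻¹ : ℚ) • (x + W.T.eps x) + (2⁻¹ : ℚ) • (y + W.T.eps y) := by
        rw [map_add, ← smul_add]; congr 1; abel
      rw [e, map_add, map_add, map_add, map_add, add_add_add_comm, hx.2, hy.2, ← neg_add]
    | smul c x _ hx =>
      refine ⟨by rw [map_smul]; exact Submodule.smul_mem _ _ hx.1, ?_⟩
      have e : (2⁻¹ : ℚ) • (c • x + W.T.eps (c • x)) = c • ((2⁻¹ : ℚ) • (x + W.T.eps x)) := by
        rw [map_smul, ← smul_add, smul_comm]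
      rw [e, map_smul, map_smul, map_smul, map_smul, ← smul_add, hx.2, smul_neg]
  obtain ⟨h1, h2⟩ := key o ho
  have h3 : (2⁻¹ : ℚ) • (o + W.T.eps o) = o := by
    rw [he, ← two_smul ℚ, smul_smul]; norm_num
  rw [h3, hd, map_zero, add_zero] at h2
  exact ⟨-k o, neg_mem h1, by rw [map_neg, h2, neg_neg]⟩

/-- A multiplicative degree-preserving section which is a chain map on generators of degree less
than `n` is a chain map on the subalgebra they generate. -/
theorem chain_low {φ : F.A →ₐ[ℚ] W.T.A} (hφ : ∀ i, ∀ a ∈ F.grading i, φ a ∈ W.T.grading i) {n : ℕ}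
    (hn : ∀ i < n, ∀ x ∈ F.V i, W.T.d (φ x) = φ (F.d x)) {x : F.A} (hx : x ∈ F.low n) :
    W.T.d (φ x) = φ (F.d x) := by
  have he : ∀ a, W.T.eps (φ a) = φ (F.eps a) := by
    intro a
    refine F.hom_induction (p := fun a => W.T.eps (φ a) = φ (F.eps a)) (by simp) ?_ ?_ a
    · intro i x hx
      rw [F.eps_of_mem hx, W.T.eps_of_mem (hφ i x hx), map_smul]
    · intro x y hx hy; simp only [map_add, hx, hy]
  induction hx using Algebra.adjoin_induction with
  | mem x hx =>
    obtain ⟨⟨i, hi⟩, hx⟩ := Set.mem_iUnion.1 hx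
    exact hn i hi x hx
  | algebraMap c =>
    rw [Algebra.algebraMap_eq_smul_one, map_smul, map_smul, map_smul, map_one, F.d_one, W.T.d_one,
      smul_zero, smul_zero, map_zero]
  | add a b _ _ ha hb => simp only [map_add, ha, hb]
  | mul a b _ _ ha hb =>
    rw [map_mul, W.T.isDiff.mul, F.isDiff.mul, ha, hb, he, map_add, map_mul, map_mul]

/-- The lift of a generator: a section which is a chain map below degree `n` can be
corrected on a generator of degree `n`. In odd degrees the obstruction is an even cocycle in
`H⁺ ⊗ ΛV`; in even degrees the generator is a cocycle up to decomposables, and cocycles of the fibre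
lift by hypothesis. -/
theorem exists_step (hH : WedgeAlg H) (hm : F.Minimal) (hE : F.Elliptic) (hχ : F.PosEuler)
    (ht : ∀ y, F.d y = 0 → ∃ x, W.T.d x = 0 ∧ F.toCDGA.IsExact (W.proj.toAlgHom x - y))
    {φ : F.A →ₐ[ℚ] W.T.A} (hφ : ∀ i, ∀ a ∈ F.grading i, φ a ∈ W.T.grading i)
    (hp : ∀ a, W.proj.toAlgHom (φ a) = a) {n : ℕ}
    (hn : ∀ i < n, ∀ x ∈ F.V i, W.T.d (φ x) = φ (F.d x)) {x : F.A} (hx : x ∈ F.V n) :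
    ∃ t ∈ W.T.grading n, W.proj.toAlgHom t = x ∧ W.T.d t = φ (F.d x) := by
  have hxn := F.V_le n hx
  have hlow := F.d_V_low hm hx
  rcases Nat.even_or_odd n with hev | hodd
  · obtain ⟨u, hun, hul, hud⟩ := F.exists_low_even hm hE hχ hev hx
    obtain ⟨z, hz, w, hw⟩ := ht (x - u) (by rw [map_sub, hud, sub_self])
    obtain ⟨z2, hz2, hpz2⟩ : ∃ z2, W.T.d z2 = 0 ∧ W.proj.toAlgHom z2 = x - u := by
      refine ⟨z - W.T.d (W.inr w), by rw [map_sub, hz, W.T.d_sq, sub_zero], ?_⟩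
      rw [map_sub, W.proj.comm_d, W.proj_inr, hw]; abel
    refine ⟨W.T.pj n z2 + φ u, add_mem (W.T.pj_mem n z2) (hφ n u hun), ?_, ?_⟩
    · rw [map_add, Hom.pj, hpz2, F.pj_of_mem (sub_mem hxn hun), hp]; abel
    · rw [map_add, ← W.T.pj_d, hz2, map_zero, zero_add, W.chain_low hφ hn hul, hud]
  · have hom : W.T.d (φ x) - φ (F.d x) ∈ W.T.grading (n + 1) :=
      sub_mem (W.T.d_mem (hφ n x hxn)) (hφ _ _ (F.d_mem hxn))
    obtain ⟨u, hu, hud⟩ := W.exact_Ip hH hm hE hχ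
      (o := W.T.d (φ x) - φ (F.d x))
      (W.mem_Ip hH (by rw [map_sub, W.proj.comm_d, hp, hp, sub_self]))
      (W.T.eps_even hodd.add_one hom)
      (by rw [map_sub, W.T.d_sq, W.chain_low hφ hn hlow, F.d_sq, map_zero, sub_zero])
    refine ⟨φ x - W.T.pj n u, sub_mem (hφ n x hxn) (W.T.pj_mem n u), ?_, ?_⟩
    · rw [map_sub, hp, Hom.pj, W.proj_Ip hu, map_zero, sub_zero]
    · rw [map_sub, ← W.T.pj_d, hud, W.T.pj_of_mem hom]; abel

/-- A multiplicative section which is a chain map on the generators of degree less than `n`; the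
induction starts from the inclusion `a ↦ 1 ⊗ a`. -/
theorem exists_chain_lt (hH : WedgeAlg H) (hm : F.Minimal) (hE : F.Elliptic) (hχ : F.PosEuler)
    (ht : ∀ y, F.d y = 0 → ∃ x, W.T.d x = 0 ∧ F.toCDGA.IsExact (W.proj.toAlgHom x - y)) (n : ℕ) :
    ∃ φ : F.A →ₐ[ℚ] W.T.A, (∀ i, ∀ a ∈ F.grading i, φ a ∈ W.T.grading i) ∧
      (∀ a, W.proj.toAlgHom (φ a) = a) ∧ ∀ i < n, ∀ x ∈ F.V i, W.T.d (φ x) = φ (F.d x) := by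
  induction n with
  | zero => exact ⟨W.inr, fun _ _ => W.inr_mem, W.proj_inr, fun i hi => absurd hi (by omega)⟩
  | succ n ih =>
    obtain ⟨φ, hφ, hp, hn⟩ := ih
    let b := Module.Basis.ofVectorSpace ℚ (F.V n)
    choose c hc hcp hcd using fun j => W.exists_step hH hm hE hχ ht hφ hp hn (b j).2
    let f0 : F.V n →ₗ[ℚ] W.T.grading n := b.constr ℚ fun j => ⟨c j, hc j⟩
    have hf0 : ∀ j, (f0 (b j) : W.T.A) = c j := fun j =>
      congrArg Subtype.val (b.constr_basis ℚ _ j)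
    have hf0p : ∀ v, W.proj.toAlgHom (f0 v : W.T.A) = v := by
      intro v
      have : W.proj.toAlgHom.toLinearMap ∘ₗ (W.T.grading n).subtype ∘ₗ f0 = (F.V n).subtype := by
        refine b.ext fun j => ?_
        change W.proj.toAlgHom (f0 (b j) : W.T.A) = b j
        rw [hf0, hcp]
      exact LinearMap.congr_fun this v
    have hf0d : ∀ v, W.T.d (f0 v : W.T.A) = φ (F.d v) := by
      intro v
      have : W.T.d ∘ₗ (W.T.grading n).subtype ∘ₗ f0 =
          φ.toLinearMap ∘ₗ F.d ∘ₗ (F.V n).subtype := by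
        refine b.ext fun j => ?_
        change W.T.d (f0 (b j) : W.T.A) = φ (F.d (b j))
        rw [hf0, hcd]
      exact LinearMap.congr_fun this v
    let f : (i : ℕ) → F.V i →ₗ[ℚ] W.T.A := Function.update
      (fun i => φ.toLinearMap ∘ₗ (F.V i).subtype) n ((W.T.grading n).subtype ∘ₗ f0)
    have hfn : ∀ v, f n v = f0 v := fun v => by simp only [f, Function.update_self]; rfl
    have hfi : ∀ i, i ≠ n → ∀ v, f i v = φ v := fun i hi v => by
      simp only [f, Function.update_of_ne hi]; rfl
    have hfm : ∀ i (v : F.V i), f i v ∈ W.T.grading i := by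
      intro i v
      by_cases h : i = n
      · subst h; rw [hfn]; exact (f0 v).2
      · rw [hfi i h]; exact hφ i v (F.V_le i v.2)
    obtain ⟨ψ, hψ, -⟩ := F.free W.T.A W.T.grading W.T.one_mem (fun _ _ _ _ => W.T.mul_mem)
      (fun _ _ _ _ => W.T.gcomm) f hfm
    have hψ' : ∀ i, ∀ x, ∀ hx : x ∈ F.V i, ψ x = f i ⟨x, hx⟩ := fun i x hx => hψ i ⟨x, hx⟩
    have hlow : ∀ x ∈ F.low n, ψ x = φ x := by
      have : F.low n ≤ AlgHom.equalizer ψ φ := by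
        refine Algebra.adjoin_le ?_
        intro x hx
        obtain ⟨⟨i, hi⟩, hx⟩ := Set.mem_iUnion.1 hx
        change ψ x = φ x
        rw [hψ' i x hx, hfi i (by omega)]
      exact fun x hx => this hx
    refine ⟨ψ, fun i a ha => F.map_mem W.T.grading W.T.one_mem (fun _ _ _ _ => W.T.mul_mem) ψ
      (fun i x hx => by rw [hψ' i x hx]; exact hfm i _) ha, ?_, ?_⟩
    · intro a
      have : W.proj.toAlgHom.comp ψ = AlgHom.id ℚ F.A := by
        apply AlgHom.ext_of_adjoin_eq_top F.generates
        intro v hv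
        obtain ⟨i, hi⟩ := Set.mem_iUnion.1 hv
        change W.proj.toAlgHom (ψ v) = v
        rw [hψ' i v hi]
        by_cases h : i = n
        · subst h; rw [hfn, hf0p]
        · rw [hfi i h, hp]
      exact DFunLike.congr_fun this a
    · intro i hi x hx
      rw [hlow (F.d x) (F.low_mono (by omega) (F.d_V_low hm hx)), hψ' i x hx]
      by_cases h : i = n
      · subst h; rw [hfn, hf0d]
      · rw [hfi i h, hn i (by omega) x hx]

/-- When the cocycles of the fibre lift, the projection to the fibre has a multiplicative section
which is a chain map. -/
theorem exists_chain (hH : WedgeAlg H) (hm : F.Minimal) (hE : F.Elliptic) (hχ : F.PosEuler)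
    (ht : ∀ y, F.d y = 0 → ∃ x, W.T.d x = 0 ∧ F.toCDGA.IsExact (W.proj.toAlgHom x - y)) :
    ∃ φ : F.A →ₐ[ℚ] W.T.A, (∀ i, ∀ a ∈ F.grading i, φ a ∈ W.T.grading i) ∧
      (∀ a, W.proj.toAlgHom (φ a) = a) ∧ ∀ a, W.T.d (φ a) = φ (F.d a) := by
  obtain ⟨N, hN⟩ := hE.1
  obtain ⟨φ, h1, h2, h3⟩ := W.exists_chain_lt hH hm hE hχ ht N
  refine ⟨φ, h1, h2, fun a => W.chain_low h1 h3 ?_⟩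
  have : F.low N = ⊤ := by
    rw [← F.generates]
    refine le_antisymm (Algebra.adjoin_mono (Set.iUnion_subset fun i =>
      Set.subset_iUnion_of_subset i.1 le_rfl)) (Algebra.adjoin_le ?_)
    refine Set.iUnion_subset fun i x hx => ?_
    rcases Nat.lt_or_ge i N with h | h
    · exact F.V_low h hx
    · have : x = 0 := by
        have hx' : x ∈ F.V i := hx
        rwa [hN i h, Submodule.mem_bot] at hx'
      rw [this]; exact zero_mem (F.low N)
  rw [this]; exact Algebra.mem_top

end Twisted

end RHT

/-! ### The trivial model -/

namespace RHT

/-- A Sullivan algebra has an algebra homomorphism to `ℚ`. -/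
theorem Sullivan.exists_aug (F : Sullivan) : ∃ _ : F.A →ₐ[ℚ] ℚ, True := by
  let 𝒞 : ℕ → Submodule ℚ ℚ := fun i => if i = 0 then ⊤ else ⊥
  have h0 : ∀ i x, x ∈ 𝒞 i → i = 0 ∨ x = 0 := by
    intro i x hx
    by_cases h : i = 0
    · exact Or.inl h
    · simp only [𝒞, h, if_false, Submodule.mem_bot] at hx
      exact Or.inr hx
  obtain ⟨α, -, -⟩ := F.free ℚ 𝒞 (by simp [𝒞])
    (by
      intro i j x y hx hy
      rcases h0 i x hx with rfl | rfl
      · rcases h0 j y hy with rfl | rfl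
        · simp [𝒞]
        · rw [mul_zero]; exact zero_mem _
      · rw [zero_mul]; exact zero_mem _)
    (by
      intro i j x y hx hy
      rcases h0 i x hx with rfl | rfl
      · rw [zero_mul, pow_zero, one_smul, mul_comm]
      · rw [zero_mul, mul_zero, smul_zero])
    (fun _ => 0) (fun i v => zero_mem _)
  exact ⟨α, trivial⟩

namespace Twisted
variable {H : CDGA} {F : Sullivan} (W : Twisted H F)

theorem inl_injective : Function.Injective W.inl.toAlgHom := by
  obtain ⟨α, -⟩ := F.exists_aug
  obtain ⟨φ, hφ⟩ := W.lin ((LinearMap.lsmul ℚ H.A).flip.compl₂ α.toLinearMap)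
  have key : ∀ h, φ (W.inl.toAlgHom h) = h := by
    intro h
    have := hφ h 1
    rw [map_one, mul_one] at this
    rw [this]
    simp
  exact fun x y hxy => by rw [← key x, hxy, key y]

section chain
variable {φ : F.A →ₐ[ℚ] W.T.A}

/-- The automorphism `h ⊗ a ↦ h · φ a` of `H ⊗ ΛV`. -/
theorem exists_auto (hH : WedgeAlg H) (hφ : ∀ i, ∀ a ∈ F.grading i, φ a ∈ W.T.grading i)
    (hp : ∀ a, W.proj.toAlgHom (φ a) = a) :
    ∃ θ : W.T.A ≃ₐ[ℚ] W.T.A, (∀ h, θ (W.inl.toAlgHom h) = W.inl.toAlgHom h) ∧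
      ∀ a, θ (W.inr a) = φ a := by
  obtain ⟨θ, hθ⟩ := W.lift W.inl.toAlgHom φ (fun i j h a hh ha =>
    W.T.gcomm (W.inl.map_grading hh) (hφ j a ha))
  have hl : ∀ h, θ (W.inl.toAlgHom h) = W.inl.toAlgHom h := fun h => by
    simpa using hθ h 1
  have hr : ∀ a, θ (W.inr a) = φ a := fun a => by simpa using hθ 1 a
  have hd : ∀ a, φ a - W.inr a ∈ W.Ip := fun a => by
    have := W.sub_inr hH (φ a)
    rwa [hp] at this
  have hid : ∀ x ∈ W.Ip, θ x = x := by
    intro x hx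
    induction hx using Submodule.span_induction with
    | mem x hx =>
      obtain ⟨i, h, a, hi, hh, rfl⟩ := hx
      have := W.inl_mul_Ip hH hi hh (hd a)
      rw [mul_sub, sub_eq_zero] at this
      rw [el, hθ, this]
    | zero => rw [map_zero]
    | add x y _ _ hx hy => rw [map_add, hx, hy]
    | smul c x _ hx => rw [map_smul, hx]
  have hpr : ∀ q, W.proj.toAlgHom (θ q) = W.proj.toAlgHom q := by
    intro q
    refine W.induct (p := fun q => W.proj.toAlgHom (θ q) = W.proj.toAlgHom q)
      (by simp only [map_zero]) ?_ ?_ q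
    · intro h a; rw [hθ, map_mul, map_mul, hp, W.proj_inr]
    · intro x y hx hy; simp only [map_add, hx, hy]
  have hsub : ∀ q, θ q - q ∈ W.Ip := fun q =>
    W.mem_Ip hH (by rw [map_sub, hpr, sub_self])
  refine ⟨AlgEquiv.ofBijective θ ⟨?_, ?_⟩, hl, hr⟩
  · rw [injective_iff_map_eq_zero]
    intro q hq
    have h1 := hsub q
    rw [hq, zero_sub, Submodule.neg_mem_iff] at h1
    rw [← hid q h1, hq]
  · intro q
    refine ⟨q - (θ q - q), ?_⟩
    rw [map_sub, hid _ (hsub q), sub_sub_cancel]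

/-- `H ⊗ ΛV` is free over `H` on the image `φ(V)` of the generators of the fibre. -/
theorem relFree (hH : WedgeAlg H) (hφ : ∀ i, ∀ a ∈ F.grading i, φ a ∈ W.T.grading i)
    (hp : ∀ a, W.proj.toAlgHom (φ a) = a) :
    RelativelyFree H W.T W.inl fun i => (F.V i).map φ.toLinearMap := by
  intro C _ _ 𝒞 h1 hm hc g hg f hf
  obtain ⟨θ, hθl, hθr⟩ := W.exists_auto hH hφ hp
  let f' : (i : ℕ) → F.V i →ₗ[ℚ] C := fun i => f i ∘ₗ φ.toLinearMap.submoduleMap (F.V i)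
  obtain ⟨ψ, hψ, -⟩ := F.free C 𝒞 h1 hm hc f' (fun i v => hf i _)
  have hψm : ∀ i, ∀ a ∈ F.grading i, ψ a ∈ 𝒞 i := fun i a ha =>
    F.map_mem 𝒞 h1 (fun i j x y => hm i j x y) ψ
      (fun i x hx => by
        have := hψ i ⟨x, hx⟩
        change ψ x = _ at this
        rw [this]; exact hf i _) ha
  obtain ⟨χ, hχ⟩ := W.lift g ψ fun i j h a hh ha => hc i j _ _ (hg i h hh) (hψm j a ha)
  have hχl : ∀ h, χ (W.inl.toAlgHom h) = g h := fun h => by simpa using hχ h 1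
  have hχr : ∀ a, χ (W.inr a) = ψ a := fun a => by simpa using hχ 1 a
  refine ⟨χ.comp θ.symm.toAlgHom, ⟨?_, ?_⟩, ?_⟩
  · intro x
    change χ (θ.symm (W.inl.toAlgHom x)) = g x
    rw [← hθl x, θ.symm_apply_apply, hχl]
  · rintro i ⟨_, v, hv, rfl⟩
    change χ (θ.symm (φ v)) = _
    rw [← hθr, θ.symm_apply_apply, hχr]
    exact hψ i ⟨v, hv⟩
  · rintro χ' ⟨hl', hr'⟩
    have hr2 : ∀ a, χ' (φ a) = ψ a := by
      have : χ'.comp φ = ψ := by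
        apply AlgHom.ext_of_adjoin_eq_top F.generates
        intro v hv
        obtain ⟨i, hi⟩ := Set.mem_iUnion.1 hv
        exact (hr' i ⟨φ v, v, hi, rfl⟩).trans (hψ i ⟨v, hi⟩).symm
      exact fun a => DFunLike.congr_fun this a
    have key : ∀ q, χ' (θ q) = χ q := by
      intro q
      refine W.induct (p := fun q => χ' (θ q) = χ q) (by simp only [map_zero]) ?_ ?_ q
      · intro h a
        rw [map_mul, map_mul, hθl, hθr, hl', hr2, hχ]
      · intro x y hx hy; simp only [map_add, hx, hy]
    apply AlgHom.ext
    intro q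
    change χ' q = χ (θ.symm q)
    rw [← key, θ.apply_symm_apply]

theorem ksBasis (hm : F.Minimal) (hE : F.Elliptic)
    (hp : ∀ a, W.proj.toAlgHom (φ a) = a) (hd : ∀ a, W.T.d (φ a) = φ (F.d a)) :
    KSBasisCondition H W.T W.inl fun i => (F.V i).map φ.toLinearMap := by
  obtain ⟨r, v, hli, hsp, hmem, hdv⟩ := F.exists_basis hm hE.1
  refine ⟨{k | k < r}, fun k => φ (v ⟨k.1, k.2⟩), ?_, ?_, ?_, ?_⟩
  · have hinj : Function.Injective φ := fun x y hxy => by rw [← hp x, hxy, hp]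
    have h1 := hli.map' φ.toLinearMap (LinearMap.ker_eq_bot.2 hinj)
    exact h1.comp (fun k : {k | k < r} => (⟨k.1, k.2⟩ : Fin r))
      (fun a b hab => Subtype.ext (congrArg Fin.val hab))
  · have h1 : Set.range (fun k : {k | k < r} => φ (v ⟨k.1, k.2⟩)) =
        φ.toLinearMap '' Set.range v := by
      ext x
      constructor
      · rintro ⟨k, rfl⟩; exact ⟨_, ⟨_, rfl⟩, rfl⟩
      · rintro ⟨_, ⟨k, rfl⟩, rfl⟩; exact ⟨⟨k.1, k.2⟩, rfl⟩
    rw [h1, Submodule.span_image, hsp, Submodule.map_iSup]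
  · intro k
    obtain ⟨i, hi⟩ := hmem ⟨k.1, k.2⟩
    exact ⟨i, _, hi, rfl⟩
  · intro k
    rw [hd]
    have h1 := hdv ⟨k.1, k.2⟩
    have h2 : φ (F.d (v ⟨k.1, k.2⟩)) ∈ (Algebra.adjoin ℚ (v '' {l | l < ⟨k.1, k.2⟩})).map φ :=
      ⟨_, h1, rfl⟩
    rw [AlgHom.map_adjoin] at h2
    refine Algebra.adjoin_mono ?_ h2
    rintro _ ⟨_, ⟨l, hl, rfl⟩, rfl⟩
    exact Or.inr ⟨⟨l.1, l.2⟩, hl, rfl⟩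

theorem adjoin_image : Algebra.adjoin ℚ (⋃ i, ((F.V i).map φ.toLinearMap : Set W.T.A)) =
    φ.range := by
  have h : (⋃ i, ((F.V i).map φ.toLinearMap : Set W.T.A)) = φ '' ⋃ i, (F.V i : Set F.A) := by
    rw [Set.image_iUnion]; rfl
  rw [h, ← AlgHom.map_adjoin, F.generates, Algebra.map_top]

theorem mem_ker_iff (hH : WedgeAlg H) (x : W.T.A) : W.proj.toAlgHom x = 0 ↔
    x ∈ (Submodule.map W.inl.toAlgHom.toLinearMap (⨆ i, H.grading (i + 1))) *
      (⊤ : Submodule ℚ W.T.A) := by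
  constructor
  · intro hx
    have h1 := W.mem_Ip hH hx
    have h2 : W.Ip ≤ (Submodule.map W.inl.toAlgHom.toLinearMap (⨆ i, H.grading (i + 1))) *
        (⊤ : Submodule ℚ W.T.A) := by
      refine Submodule.span_le.2 ?_
      rintro _ ⟨i, h, a, ⟨k, rfl⟩, hh, rfl⟩
      exact Submodule.mul_mem_mul ⟨h, Submodule.mem_iSup_of_mem (2 * k) hh, rfl⟩
        Submodule.mem_top
    exact h2 h1
  · intro hx
    induction hx using Submodule.mul_induction_on' with
    | mem_mul_mem x hx y _ =>
      obtain ⟨h, hh, rfl⟩ := hx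
      have : (⨆ i, H.grading (i + 1)) ≤
          LinearMap.ker (W.proj.toAlgHom.toLinearMap ∘ₗ W.inl.toAlgHom.toLinearMap) :=
        iSup_le fun i x hx => W.proj_inl (i + 1) i.succ_pos x hx
      have h3 : W.proj.toAlgHom (W.inl.toAlgHom h) = 0 := this hh
      rw [map_mul]
      change W.proj.toAlgHom (W.inl.toAlgHom h) * _ = 0
      rw [h3, zero_mul]
    | add x _ y _ hx hy => rw [map_add, hx, hy, add_zero]

/-- The model of the fibration in which the fibre sits inside the total algebra by a chain
section `φ`. -/
def toModel (hH : WedgeAlg H) (hm : F.Minimal) (hE : F.Elliptic)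
    (hφ : ∀ i, ∀ a ∈ F.grading i, φ a ∈ W.T.grading i)
    (hp : ∀ a, W.proj.toAlgHom (φ a) = a) (hd : ∀ a, W.T.d (φ a) = φ (F.d a)) :
    FibrationModel H F where
  T := W.T
  incl := W.inl
  proj := W.proj
  V i := (F.V i).map φ.toLinearMap
  V_le := by
    rintro i _ ⟨v, hv, rfl⟩
    exact hφ i v (F.V_le i hv)
  incl_inj := W.inl_injective
  relFree := W.relFree hH hφ hp
  ksBasis := W.ksBasis hm hE hp hd
  proj_incl := W.proj_inl
  proj_V i := by
    rw [← Submodule.map_comp]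
    have : W.proj.toAlgHom.toLinearMap ∘ₗ φ.toLinearMap = LinearMap.id :=
      LinearMap.ext hp
    rw [this, Submodule.map_id]
  fiber_inj x hx h0 := by
    rw [W.adjoin_image] at hx
    obtain ⟨a, rfl⟩ := hx
    have h1 : a = 0 := (hp a).symm.trans h0
    rw [h1]; exact map_zero φ
  ker_proj := W.mem_ker_iff hH

end chain
end Twisted

theorem QuasiIso.refl (C : CDGA) : QuasiIso (Hom.refl C) :=
  ⟨fun y hy => ⟨y, hy, 0, by rw [map_zero]; exact (sub_self y).symm⟩, fun _ _ h => h⟩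

theorem surjective_of_zeroDiff {C H : CDGA} {f : Hom C H} (h0 : H.ZeroDiff) (hq : QuasiIso f) :
    Function.Surjective f.toAlgHom := by
  intro y
  obtain ⟨x, -, z, hz⟩ := hq.1 y (h0 y)
  rw [h0] at hz
  exact ⟨x, sub_eq_zero.1 hz.symm⟩

/-- A quasi-isomorphism to an algebra with zero differential is surjective on cocycles of each
degree. -/
theorem exists_cocycle {C H : CDGA} {f : Hom C H} (h0 : H.ZeroDiff) (hq : QuasiIso f) {n : ℕ}
    {y : H.A} (hy : y ∈ H.grading n) : ∃ x ∈ C.grading n, C.d x = 0 ∧ f.toAlgHom x = y := by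
  obtain ⟨x, hx, z, hz⟩ := hq.1 y (h0 y)
  rw [h0] at hz
  refine ⟨C.pj n x, C.pj_mem n x, by rw [← C.pj_d, hx, map_zero], ?_⟩
  rw [Hom.pj, sub_eq_zero.1 hz.symm, H.pj_of_mem hy]

/-- The algebra with zero differential modelling a wedge of odd spheres has no positive even part
and trivial products. -/
theorem wedgeAlg_of_formal {S : Sullivan} {H : CDGA} {f : Hom S.toCDGA H} (h0 : H.ZeroDiff)
    (hq : QuasiIso f) (hS : S.WedgeOddSpheres) : WedgeAlg H where
  zero := h0
  scalar y hy := by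
    obtain ⟨x, hx, -, rfl⟩ := exists_cocycle h0 hq hy
    obtain ⟨c, rfl⟩ := S.scalar (by norm_num) hx
    exact ⟨c, by rw [map_smul, map_one]⟩
  even k hk y hy := by
    obtain ⟨x, hx, hd, rfl⟩ := exists_cocycle h0 hq hy
    obtain ⟨z, rfl⟩ := hS.2.1 k hk x hx hd
    rw [f.comm_d, h0]
  mul i j y y' hi hj hy hy' := by
    obtain ⟨x, hx, hd, rfl⟩ := exists_cocycle h0 hq hy
    obtain ⟨x', hx', hd', rfl⟩ := exists_cocycle h0 hq hy'
    obtain ⟨z, hz⟩ := hS.2.2 i j x x' hi hj hx hx' hd hd'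
    rw [← map_mul, ← hz, f.comm_d, h0]

/-- A TNCZ fibration whose fibre is elliptic with positive Euler characteristic, over a wedge of odd
spheres, has a model over an algebra with zero differential in which the subalgebra
generated by the lifted generators of the fibre is closed under the differential. -/
theorem main_aux
    (SB : Sullivan) (hSB : SB.WedgeOddSpheres)
    (SF : Sullivan) (hSFmin : SF.Minimal) (hSFell : SF.Elliptic) (hSFchi : SF.PosEuler)
    (P : FibrationModel SB.toCDGA SF)
    (htncz : P.TNCZ) :
    ∃ (HB : CDGA), HB.ZeroDiff ∧
      ∃ P' : FibrationModel HB SF, ModelPair P' P ∧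
        ∀ i : ℕ, ∀ v ∈ P'.V i, P'.T.d v ∈ P'.fiberSub := by
  obtain ⟨H, f, h0, hq⟩ := hSB.1
  have hH := wedgeAlg_of_formal h0 hq hSB
  obtain ⟨W, ρ, hρq, -, hρi, hρp⟩ := P.exists_twisted
    (fun x hx => SB.scalar (by norm_num) hx) (fun x hx => SB.grading_one hx)
    (surjective_of_zeroDiff h0 hq) hq
  obtain ⟨φ, hφ, hp, hd⟩ := W.exists_chain hH hSFmin hSFell hSFchi (by
    intro y hy
    obtain ⟨x, hx, he⟩ := htncz y hy
    exact ⟨ρ.toAlgHom x, by rw [← ρ.comm_d, hx, map_zero], by rwa [hρp]⟩)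
  refine ⟨H, h0, W.toModel hH hSFmin hSFell hφ hp hd, Or.inr ⟨
    { fB := f
      fT := ρ
      fF := Hom.refl SF.toCDGA
      hB := hq
      hT := hρq
      hF := QuasiIso.refl _
      commB := hρi
      commF := fun t => (hρp t).symm }⟩, ?_⟩
  rintro i _ ⟨v, hv, rfl⟩
  change W.T.d (φ v) ∈ Algebra.adjoin ℚ (⋃ i, ((SF.V i).map φ.toLinearMap : Set W.T.A))
  rw [hd, W.adjoin_image]
  exact ⟨_, rfl⟩

end RHT

open RHT in
/-- Theorem 2.2.  Let `F → E → B` be a rational fibration in which `F`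
is elliptic with positive Euler characteristic and `B` is rationally a wedge of
odd-dimensional spheres.  If the fibration is TNCZ then `E ≃_ℚ B × F` : the fibration is
rationally trivial, i.e. it admits a model `H(B),0 → H(B) ⊗ ΛV, 1 ⊗ d → ΛV, d`
(base algebra with zero differential and differential of the total algebra carrying the
lifted fibre generators into the fibre copy `1 ⊗ ΛV`). -/
theorem halperin_variations_stmt1
    (SB : Sullivan) (hSBmin : SB.Minimal) (hSB : SB.WedgeOddSpheres)
    (SF : Sullivan) (hSFmin : SF.Minimal) (hSFell : SF.Elliptic) (hSFchi : SF.PosEuler)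
    (P : FibrationModel SB.toCDGA SF)
    (htncz : P.TNCZ) :
    ∃ (HB : CDGA), HB.ZeroDiff ∧
      ∃ P' : FibrationModel HB SF, ModelPair P' P ∧
        ∀ i : ℕ, ∀ v ∈ P'.V i, P'.T.d v ∈ P'.fiberSub := by
  exact main_aux SB hSB SF hSFmin hSFell hSFchi P htncz
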